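/- Let J ≥ 1 and let q₁, …, q_J be distinct primes with q_i ≡ −1 (mod 3) for all i; let t_i ∈ {1, 2} for all i, let s ∈ {0, 1, 2}, and set m = 3^s · ∏_{i=1}^J q_i^{t_i}. Let K = ℚ(ζ₃, m^{1/3}), and define r = J if every q_i ≡ −1 (mod 9) and m ≢ ±1 (mod 9); r = J − 1 if either every q_i ≡ −1 (mod 9) and m ≡ ±1 (mod 9), or some q_i ≡ 2 or 5 (mod 9) and m ≢ ±1 (mod 9); and r = J − 2 if some q_i ≡ 2 or 5 (mod 9) and m ≡ ±1 (mod 9). Then for any finite set S of nonzero prime ideals of O_K, dim_{𝔽₃} Cl_S(K)[3] ≥ 2r − 3|S|. -/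

import Mathlib

open IsDedekindDomain NumberField


theorem grp_lemma {A : Type*} [CommGroup A] [Finite A] (s : A →* A)
    (hN : ∀ a, a * s a * s (s a) = 1) (C : Subgroup A)
    (h1 : ∀ a, s a = a → a ∈ C) (h2 : ∀ a, s a / a ∈ C) :
    Nat.card A ^ 2 ≤ Nat.card {a : A // a ^ 3 = 1} * Nat.card C ^ 2 := by
  classical
  let D : A →* A := s / MonoidHom.id A
  have hD : ∀ a, D a = s a / a := fun a => rfl
  have hker : ∀ a, a ∈ D.ker ↔ s a = a := by
    intro a
    rw [MonoidHom.mem_ker, hD, div_eq_one]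
  have hkC : D.ker ≤ C := fun a ha => h1 a ((hker a).1 ha)
  have hrC : D.range ≤ C := by
    rintro _ ⟨a, rfl⟩
    exact h2 a
  have e1 : Nat.card A = Nat.card D.ker * Nat.card D.range := by
    rw [← Subgroup.index_ker, mul_comm, Subgroup.index_mul_card]
  have hs : ∀ a, s a = 1 → a = 1 := by
    intro a ha
    have := hN a
    rw [ha, map_one] at this
    simpa using this
  have hD2 : ∀ a, D (D a) = 1 ↔ a ^ 3 = 1 := by
    intro a
    have h3 : D (D a) = ((s a) ^ 3)⁻¹ := by
      rw [hD, hD, map_div]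
      have : s (s a) = (a * s a)⁻¹ := by
        rw [eq_inv_iff_mul_eq_one, mul_comm]; exact hN a
      rw [this]
      simp only [div_eq_mul_inv, mul_inv, inv_inv, pow_succ, pow_zero, one_mul]
      have : a⁻¹ * (s a)⁻¹ * (s a)⁻¹ * ((s a)⁻¹ * a) = (a⁻¹ * a) * ((s a)⁻¹ * (s a)⁻¹ * (s a)⁻¹) := by
        ac_rfl
      rw [this]; simp
    rw [h3, inv_eq_one, ← map_pow]
    exact ⟨hs _, fun h => by rw [h, map_one]⟩
  -- A[3] = ker of D∘D
  let D2 := D.comp D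
  have e2 : Nat.card {a : A // a ^ 3 = 1} = Nat.card D2.ker := by
    apply Nat.card_congr
    exact Equiv.subtypeEquivRight (fun a => by
      rw [MonoidHom.mem_ker]; exact (hD2 a).symm)
  -- restrict D to D2.ker
  have e3 : Nat.card A = Nat.card D2.ker * Nat.card D2.range := by
    rw [← Subgroup.index_ker, mul_comm, Subgroup.index_mul_card]
  -- range D2 = D (range D)
  let Dr : D.range →* A := D.comp D.range.subtype
  have e4 : Dr.range = D2.range := by
    ext x
    constructor
    · rintro ⟨⟨_, a, rfl⟩, rfl⟩; exact ⟨a, rfl⟩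
    · rintro ⟨a, rfl⟩; exact ⟨⟨_, a, rfl⟩, rfl⟩
  have e5 : Nat.card D.range = Nat.card Dr.ker * Nat.card D2.range := by
    rw [← e4, ← Subgroup.index_ker Dr, mul_comm, Subgroup.index_mul_card]
  -- kerD × rangeD → C with fibers the size of Dr.ker
  let f : D.ker × D.range →* C :=
    ((Subgroup.inclusion hkC).coprod (Subgroup.inclusion hrC))
  have e6 : Nat.card D.ker * Nat.card D.range = Nat.card f.ker * Nat.card f.range := by
    rw [← Nat.card_prod, ← Subgroup.index_ker f, mul_comm, Subgroup.index_mul_card]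
  have e7 : Nat.card f.ker ≤ Nat.card Dr.ker := by
    have hf : ∀ x : f.ker, (x.1.1 : A) * x.1.2 = 1 := by
      intro x
      have := x.2
      rw [MonoidHom.mem_ker] at this
      have := congrArg Subtype.val this
      simpa [f] using this
    refine Nat.card_le_card_of_injective (fun x : f.ker => (⟨x.1.2, ?_⟩ : Dr.ker)) ?_
    · rw [MonoidHom.mem_ker]
      have h := hf x
      have h' := congrArg D h
      rw [map_mul, map_one, (MonoidHom.mem_ker).1 x.1.1.2, one_mul] at h'
      exact h'
    · rintro x y hxy
      have hxy' : x.1.2 = y.1.2 := congrArg Subtype.val hxy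
      have h1 := hf x
      have h2 := hf y
      rw [hxy'] at h1
      have : (x.1.1 : A) = y.1.1 := mul_right_cancel (h1.trans h2.symm)
      exact Subtype.ext (Prod.ext (Subtype.ext this) hxy')
  have e8 : Nat.card f.range ≤ Nat.card C := Nat.card_le_card_of_injective _ (Subtype.val_injective)
  have e9 : Nat.card D.range ≤ Nat.card C :=
    Nat.card_le_card_of_injective _ (Subgroup.inclusion_injective hrC)
  rw [e2]
  have p1 : 0 < Nat.card D.range := Nat.card_pos
  have p2 : 0 < Nat.card D2.range := Nat.card_pos
  set a := Nat.card A
  set k := Nat.card D.ker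
  set g := Nat.card D.range
  set g2 := Nat.card D2.range
  set n := Nat.card Dr.ker
  set c := Nat.card C
  set w := Nat.card D2.ker
  have b1 : a ≤ n * c := by
    rw [e1, e6]; exact Nat.mul_le_mul e7 e8
  have b2 : w = k * n := by
    have : w * g2 = (k * n) * g2 := by rw [← e3, e1, e5]; ring
    exact Nat.eq_of_mul_eq_mul_right p2 this
  have b3 : a ≤ k * c := by rw [e1]; exact Nat.mul_le_mul_left _ e9
  rw [b2]
  calc a ^ 2 = a * a := sq a
    _ ≤ (k * c) * (n * c) := Nat.mul_le_mul b3 b1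
    _ = k * n * c ^ 2 := by ring

theorem card_cubes (G : Type*) [CommGroup G] [Finite G] :
    Nat.card {a : G // a ^ 3 = 1} = (powMonoidHom 3 : G →* G).range.index := by
  have h1 : Nat.card G = Nat.card (powMonoidHom 3 : G →* G).ker *
      Nat.card (powMonoidHom 3 : G →* G).range := by
    rw [← Subgroup.index_ker, mul_comm, Subgroup.index_mul_card]
  have h2 := Subgroup.index_mul_card (powMonoidHom 3 : G →* G).range
  have h3 : Nat.card {a : G // a ^ 3 = 1} = Nat.card (powMonoidHom 3 : G →* G).ker := rfl
  rw [h3]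
  have p : 0 < Nat.card (powMonoidHom 3 : G →* G).range := Nat.card_pos
  exact Nat.eq_of_mul_eq_mul_right p (by rw [← h1, h2])

/-- passing to a quotient by a subgroup generated by few elements -/
theorem quot_lemma {A B : Type*} [CommGroup A] [Finite A] [CommGroup B] (f : A →* B)
    {ι : Type*} [Fintype ι] (g : ι → A) (hk : ∀ a, f a = 1 → a ∈ Subgroup.closure (Set.range g))
    (hfin : Finite {b : B // b ^ 3 = 1}) :
    Nat.card {a : A // a ^ 3 = 1} ≤ Nat.card {b : B // b ^ 3 = 1} * 3 ^ Fintype.card ι := by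
  classical
  -- I = range f
  have hI : Nat.card {b : f.range // b ^ 3 = 1} ≤ Nat.card {b : B // b ^ 3 = 1} := by
    refine Nat.card_le_card_of_injective (fun b => ⟨b.1.1, ?_⟩) ?_
    · have := congrArg Subtype.val b.2; simpa using this
    · intro b c h
      have : b.1.1 = c.1.1 := by simpa using h
      exact Subtype.ext (Subtype.ext this)
  refine le_trans ?_ (Nat.mul_le_mul_right _ hI)
  have : Finite f.range := Finite.of_surjective f.rangeRestrict f.rangeRestrict_surjective
  rw [card_cubes A, card_cubes f.range]
  -- map A → (f.range / cubes), kernel H = A^3 * ker f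
  let P := (powMonoidHom 3 : A →* A).range
  let H : Subgroup A := (powMonoidHom 3 : f.range →* f.range).range.comap f.rangeRestrict
  have hH : H.index = (powMonoidHom 3 : f.range →* f.range).range.index :=
    Subgroup.index_comap_of_surjective _ f.rangeRestrict_surjective
  rw [← hH]
  have hPH : P ≤ H := by
    rintro _ ⟨a, rfl⟩
    exact ⟨f.rangeRestrict a, by simp⟩
  rw [← Subgroup.relIndex_mul_index hPH, mul_comm]
  refine Nat.mul_le_mul_left _ ?_
  -- P.relIndex H ≤ 3^card
  have : ∀ h ∈ H, ∃ n : ι → Fin 3, (h)⁻¹ * (∏ i, g i ^ (n i : ℕ)) ∈ P := by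
    rintro h ⟨⟨_, a, rfl⟩, hb⟩
    have h1 : f (h * (a ^ 3)⁻¹) = 1 := by
      have := congrArg Subtype.val hb
      simp at this
      rw [map_mul, map_inv, map_pow, ← this]; simp
    have h2 := hk _ h1
    rw [Subgroup.mem_closure_range_iff_of_fintype] at h2
    obtain ⟨e, he⟩ := h2
    refine ⟨fun i => ⟨(e i % 3).toNat, by omega⟩, ?_⟩
    have h3 : ∀ i, g i ^ ((e i % 3).toNat) = g i ^ (e i) * ((g i) ^ (-(e i / 3))) ^ 3 := by
      intro i
      rw [← zpow_natCast, Int.toNat_of_nonneg (by omega), ← zpow_natCast, ← zpow_mul, ← zpow_add]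
      congr 1
      push_cast
      omega
    have h4 : (∏ i, g i ^ ((e i % 3).toNat)) = h * (a ^ 3)⁻¹ * (∏ i, (g i) ^ (-(e i / 3))) ^ 3 := by
      rw [Finset.prod_congr rfl (fun i _ => h3 i), Finset.prod_mul_distrib, Finset.prod_pow, he]
    simp only
    rw [h4]
    refine ⟨a⁻¹ * (∏ i, (g i) ^ (-(e i / 3))), ?_⟩
    simp [mul_pow, mul_assoc]
  choose! n hn using this
  rw [Subgroup.relIndex, Subgroup.index]
  have hc : Nat.card (ι → Fin 3) = 3 ^ Fintype.card ι := by simp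
  rw [← hc]
  refine Nat.card_le_card_of_injective (fun x : H ⧸ P.subgroupOf H => n (Quotient.out x).1) ?_
  intro x y hxy
  simp only at hxy
  have hx := hn _ (Quotient.out x).2
  have hy := hn _ (Quotient.out y).2
  rw [hxy] at hx
  have hPm := P.mul_mem hx (P.inv_mem hy)
  have hgoal : (Quotient.out x)⁻¹ * Quotient.out y ∈ P.subgroupOf H := by
    rw [Subgroup.mem_subgroupOf]
    have e : (((Quotient.out x)⁻¹ * Quotient.out y : H) : A) =
      ((Quotient.out x : H) : A)⁻¹ * ((Quotient.out y : H) : A) := rfl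
    rw [e]
    generalize ((Quotient.out x : H) : A) = u at *
    generalize ((Quotient.out y : H) : A) = v at *
    rw [mul_inv, inv_inv] at hPm
    have e2 : u⁻¹ * (∏ i, g i ^ (n v i : ℕ)) * (v * (∏ i, g i ^ (n v i : ℕ))⁻¹) = u⁻¹ * v := by
      generalize (∏ i, g i ^ (n v i : ℕ)) = w
      rw [mul_assoc, mul_comm v, mul_inv_cancel_left]
    rwa [e2] at hPm
  have := (QuotientGroup.eq (s := P.subgroupOf H)).2 hgoal
  rwa [QuotientGroup.out_eq', QuotientGroup.out_eq'] at this


section ZetaPart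
open scoped ENNReal NNReal Topology
open Filter UniqueFactorizationMonoid

noncomputable def zW {R : Type*} [CommRing R] [IsDedekindDomain R] [Module.Free ℤ R]
    (s : ℝ) (I : Ideal R) : ℝ≥0∞ := (((Ideal.absNorm I : ℕ) : ℝ≥0) ^ (-s) : ℝ≥0)

theorem zW_mul {R : Type*} [CommRing R] [IsDedekindDomain R] [Module.Free ℤ R]
    (s : ℝ) (I J : Ideal R) : zW s (I * J) = zW s I * zW s J := by
  simp only [zW]
  rw [map_mul, Nat.cast_mul, NNReal.mul_rpow, ENNReal.coe_mul]

theorem zeta_bounds (K : Type*) [Field K] [NumberField K] :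
    ∃ c C : ℝ, 0 < c ∧ 0 < C ∧ ∀ᶠ s in 𝓝[>] (1 : ℝ),
      ENNReal.ofReal (c / (s - 1)) ≤ ∑' I : Ideal (𝓞 K), zW s I ∧
      ∑' I : Ideal (𝓞 K), zW s I ≤ ENNReal.ofReal (C / (s - 1)) := by
  have hres := dedekindZeta_residue_pos K
  set ρ := dedekindZeta_residue K with hρ
  refine ⟨ρ / 2, 2 * ρ, by positivity, by positivity, ?_⟩
  have ht := tendsto_sub_one_mul_dedekindZeta_nhdsGT K
  have ht2 := (Complex.continuous_re.tendsto _).comp ht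
  have h1 := ht2.eventually (Ioo_mem_nhds (a := ρ / 2) (b := 2 * ρ) (by
    simp only [Complex.ofReal_re]; linarith) (by simp only [Complex.ofReal_re]; linarith))
  filter_upwards [h1, self_mem_nhdsWithin] with s hs hs1
  have hs1 : 1 < s := hs1
  set cn : ℕ → ℕ := fun n => Nat.card {I : Ideal (𝓞 K) // Ideal.absNorm I = n} with hcn
  set f : ℕ → ℝ := fun n => (cn n : ℝ) * (n : ℝ) ^ (-s) with hf
  have hf0 : ∀ n, 0 ≤ f n := fun n => by positivity
  have hterm : ∀ n, LSeries.term (fun n ↦ ((cn n : ℕ) : ℂ)) s n = ((f n : ℝ) : ℂ) := by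
    intro n
    rcases eq_or_ne n 0 with rfl | hn
    · simp [hf, Real.zero_rpow (by linarith : -s ≠ 0)]
    · rw [LSeries.term_of_ne_zero hn, hf]
      push_cast
      rw [Complex.ofReal_cpow (by positivity), div_eq_mul_inv]
      push_cast
      rw [Complex.cpow_neg]
  have hdz : dedekindZeta K s = ((∑' n, f n : ℝ) : ℂ) := by
    rw [dedekindZeta, LSeries, Complex.ofReal_tsum]
    exact tsum_congr hterm
  have hmain : ∑' I : Ideal (𝓞 K), zW s I = ∑' n, ENNReal.ofReal (f n) := by
    rw [← (Equiv.sigmaFiberEquiv (fun I : Ideal (𝓞 K) => Ideal.absNorm I)).tsum_eq,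
      ENNReal.tsum_sigma']
    refine tsum_congr fun n => ?_
    have hw : ∀ I : {I : Ideal (𝓞 K) // Ideal.absNorm I = n},
        zW s ((Equiv.sigmaFiberEquiv (fun I : Ideal (𝓞 K) => Ideal.absNorm I)) ⟨n, I⟩)
          = ENNReal.ofReal ((n : ℝ) ^ (-s)) := by
      intro I
      rw [Equiv.sigmaFiberEquiv_apply, zW, I.2]
      rw [ENNReal.ofReal, ENNReal.coe_inj, ← NNReal.coe_inj, Real.coe_toNNReal _ (by positivity)]
      simp
    rw [tsum_congr hw, ENNReal.tsum_const]
    rw [hf]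
    have hfin : Finite {I : Ideal (𝓞 K) // Ideal.absNorm I = n} := Ideal.finite_setOf_absNorm_eq n
    rw [ENNReal.ofReal_mul (by positivity), ENat.card_eq_coe_natCard]
    simp [hcn]
  have hpos : 0 < s - 1 := by linarith
  simp only [Function.comp_apply, hdz] at hs
  have hre : (((s : ℂ) - 1) * ((∑' n, f n : ℝ) : ℂ)).re = (s - 1) * ∑' n, f n := by
    rw [← Complex.ofReal_one, ← Complex.ofReal_sub, ← Complex.ofReal_mul, Complex.ofReal_re]
  rw [hre] at hs
  have hsum : Summable f := by
    by_contra h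
    rw [tsum_eq_zero_of_not_summable h, mul_zero] at hs
    linarith [hs.1]
  rw [hmain, ← ENNReal.ofReal_tsum_of_nonneg hf0 hsum]
  refine ⟨ENNReal.ofReal_le_ofReal ?_, ENNReal.ofReal_le_ofReal ?_⟩
  · rw [div_le_iff₀ hpos, mul_comm]; exact hs.1.le
  · rw [le_div_iff₀ hpos, mul_comm]; exact hs.2.le

theorem bad_sum {R : Type*} [CommRing R] [IsDedekindDomain R] [Module.Free ℤ R] [Module.Finite ℤ R]
    (T : Finset (Ideal R)) (hT : ∀ P ∈ T, P.IsPrime ∧ P ≠ ⊥) :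
    ∑' I : {I : Ideal R // I ≠ ⊥ ∧ ∀ P ∈ normalizedFactors I, P ∈ T}, zW 1 I.1 ≠ ∞ := by
  classical
  induction T using Finset.induction_on with
  | empty =>
    have hs : Subsingleton {I : Ideal R // I ≠ ⊥ ∧ ∀ P ∈ normalizedFactors I, P ∈ (∅ : Finset (Ideal R))} := by
      have key : ∀ I : {I : Ideal R // I ≠ ⊥ ∧ ∀ P ∈ normalizedFactors I, P ∈ (∅ : Finset (Ideal R))}, I.1 = 1 := by
        rintro ⟨I, h1, h2⟩
        have : normalizedFactors I = 0 := Multiset.eq_zero_of_forall_notMem (fun P hP => by simpa using h2 P hP)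
        have h := Ideal.prod_normalizedFactors_eq_self h1
        rw [this] at h
        simpa using h.symm
      exact ⟨fun a b => Subtype.ext ((key a).trans (key b).symm)⟩
    have := Fintype.ofFinite {I : Ideal R // I ≠ ⊥ ∧ ∀ P ∈ normalizedFactors I, P ∈ (∅ : Finset (Ideal R))}
    rw [tsum_fintype]
    exact ENNReal.sum_ne_top.2 (fun _ _ => ENNReal.coe_ne_top)
  | insert P T hP ih =>
    have ih := ih (fun Q hQ => hT Q (Finset.mem_insert_of_mem hQ))
    obtain ⟨hPp, hP0⟩ := hT P (Finset.mem_insert_self _ _)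
    have hgeo : ∑' k : ℕ, (zW 1 P) ^ k ≠ ∞ := by
      rw [ENNReal.tsum_geometric]
      rw [ENNReal.inv_ne_top]
      have : zW 1 P < 1 := by
        rw [zW]
        rw [← ENNReal.coe_one, ENNReal.coe_lt_coe]
        have h1 : Ideal.absNorm P ≠ 0 := by rwa [Ne, Ideal.absNorm_eq_zero_iff]
        have h2 : Ideal.absNorm P ≠ 1 := by rw [Ne, Ideal.absNorm_eq_one_iff]; exact hPp.ne_top
        apply NNReal.rpow_lt_one_of_one_lt_of_neg
        · have : 1 < Ideal.absNorm P := by omega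
          exact_mod_cast this
        · norm_num
      exact (tsub_pos_of_lt this).ne'
    have hP' : Irreducible P := (Ideal.prime_of_isPrime hP0 hPp).irreducible
    let g : {I : Ideal R // I ≠ ⊥ ∧ ∀ P ∈ normalizedFactors I, P ∈ T} × ℕ →
        {I : Ideal R // I ≠ ⊥ ∧ ∀ Q ∈ normalizedFactors I, Q ∈ insert P T} :=
      fun x => ⟨x.1.1 * P ^ x.2, mul_ne_zero x.1.2.1 (pow_ne_zero _ hP0), by
        intro Q hQ
        rw [normalizedFactors_mul x.1.2.1 (pow_ne_zero _ hP0), normalizedFactors_pow,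
          normalizedFactors_irreducible hP', Multiset.mem_add] at hQ
        rcases hQ with hQ | hQ
        · exact Finset.mem_insert_of_mem (x.1.2.2 Q hQ)
        · have := Multiset.mem_of_mem_nsmul hQ
          rw [Multiset.mem_singleton, normalize_eq] at this
          rw [this]; exact Finset.mem_insert_self _ _⟩
    have hg : Function.Surjective g := by
      rintro ⟨I, hI0, hI⟩
      let A := (normalizedFactors I).filter (fun Q => Q ≠ P)
      have hAp : ∀ Q ∈ A, Irreducible Q := fun Q hQ =>
        irreducible_of_normalized_factor Q (Multiset.mem_of_mem_filter hQ)
      have hnA : normalizedFactors A.prod = A := by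
        rw [normalizedFactors_prod_eq A hAp]
        simp
      refine ⟨(⟨A.prod, ?_, ?_⟩, (normalizedFactors I).count P), ?_⟩
      · exact Multiset.prod_ne_zero (fun h => (hAp 0 h).ne_zero rfl)
      · rw [hnA]
        intro Q hQ
        rw [Multiset.mem_filter] at hQ
        exact (Finset.mem_insert.1 (hI Q hQ.1)).resolve_left hQ.2
      · apply Subtype.ext
        simp only [g]
        conv_rhs => rw [← Ideal.prod_normalizedFactors_eq_self hI0]
        conv_rhs => rw [← Multiset.filter_add_not (fun Q => Q ≠ P) (normalizedFactors I)]
        rw [Multiset.prod_add]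
        congr 1
        have : Multiset.filter (fun a => ¬ a ≠ P) (normalizedFactors I) =
            Multiset.replicate (Multiset.count P (normalizedFactors I)) P := by
          simp only [ne_eq, not_not]
          exact Multiset.filter_eq' _ _
        rw [this, Multiset.prod_replicate]
    refine ne_top_of_le_ne_top (ENNReal.mul_ne_top ih hgeo) ?_
    refine (ENNReal.tsum_le_tsum_comp_of_surjective hg _).trans ?_
    have hpow : ∀ k : ℕ, zW 1 (P ^ k) = (zW 1 P) ^ k := by
      intro k
      induction k with
      | zero => simp [zW]
      | succ n ih => rw [pow_succ, zW_mul, ih, pow_succ]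
    rw [ENNReal.tsum_prod', ← ENNReal.tsum_mul_right]
    refine ENNReal.tsum_le_tsum fun I => ?_
    rw [← ENNReal.tsum_mul_left]
    refine ENNReal.tsum_le_tsum fun k => ?_
    simp only [g]
    rw [zW_mul, hpow]

theorem dens_contra (K F : Type*) [Field K] [NumberField K] [Field F] [NumberField F]
    (j : 𝓞 K →+* 𝓞 F) (T : Finset (Ideal (𝓞 K))) (hT : ∀ P ∈ T, P.IsPrime ∧ P ≠ ⊥)
    (p1 p2 : Ideal (𝓞 K) → Ideal (𝓞 F))
    (h1 : ∀ P : Ideal (𝓞 K), P.IsPrime → P ≠ ⊥ → P ∉ T →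
      (p1 P).IsPrime ∧ p1 P ≠ ⊥ ∧ (p1 P).comap j = P ∧ Ideal.absNorm (p1 P) ≤ Ideal.absNorm P)
    (h2 : ∀ P : Ideal (𝓞 K), P.IsPrime → P ≠ ⊥ → P ∉ T →
      (p2 P).IsPrime ∧ p2 P ≠ ⊥ ∧ (p2 P).comap j = P ∧ Ideal.absNorm (p2 P) ≤ Ideal.absNorm P)
    (h12 : ∀ P : Ideal (𝓞 K), P.IsPrime → P ≠ ⊥ → P ∉ T → p1 P ≠ p2 P) : False := by
  classical
  let Gd := {I : Ideal (𝓞 K) // I ≠ ⊥ ∧ ∀ P ∈ normalizedFactors I, P ∉ T}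
  let Bd := {I : Ideal (𝓞 K) // I ≠ ⊥ ∧ ∀ P ∈ normalizedFactors I, P ∈ T}
  obtain ⟨c, _, hc, -, hK⟩ := zeta_bounds K
  obtain ⟨_, C, -, hC, hF⟩ := zeta_bounds F
  -- step 1
  have hnf : ∀ A : Multiset (Ideal (𝓞 K)), (∀ Q ∈ A, Irreducible Q) →
      normalizedFactors A.prod = A ∧ A.prod ≠ ⊥ := by
    intro A hA
    refine ⟨?_, Multiset.prod_ne_zero (fun h => (hA 0 h).ne_zero rfl)⟩
    rw [normalizedFactors_prod_eq A hA]
    simp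
  have hnF : ∀ A : Multiset (Ideal (𝓞 F)), (∀ Q ∈ A, Irreducible Q) →
      normalizedFactors A.prod = A ∧ A.prod ≠ ⊥ := by
    intro A hA
    refine ⟨?_, Multiset.prod_ne_zero (fun h => (hA 0 h).ne_zero rfl)⟩
    rw [normalizedFactors_prod_eq A hA]
    simp
  have s1 : ∀ s : ℝ, 1 < s → ∑' I : Ideal (𝓞 K), zW s I ≤
      (∑' I : Gd, zW s I.1) * (∑' I : Bd, zW s I.1) := by
    intro s hs
    have e0 : zW s (⊥ : Ideal (𝓞 K)) = 0 := by
      simp [zW, NNReal.zero_rpow (by linarith : -s ≠ 0)]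
    have e1 : ∑' I : Ideal (𝓞 K), zW s I = ∑' I : {I : Ideal (𝓞 K) // I ≠ ⊥}, zW s I.1 := by
      symm
      apply tsum_subtype_eq_of_support_subset (s := {I : Ideal (𝓞 K) | I ≠ ⊥})
      intro I hI h
      rw [h] at hI
      exact hI e0
    rw [e1]
    let g : Gd × Bd → {I : Ideal (𝓞 K) // I ≠ ⊥} := fun x =>
      ⟨x.1.1 * x.2.1, mul_ne_zero x.1.2.1 x.2.2.1⟩
    have hg : Function.Surjective g := by
      rintro ⟨I, hI0⟩
      have hirr : ∀ Q ∈ normalizedFactors I, Irreducible Q := fun Q hQ =>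
        irreducible_of_normalized_factor Q hQ
      have a1 := hnf ((normalizedFactors I).filter (fun Q => Q ∉ T))
        (fun Q hQ => hirr Q (Multiset.mem_of_mem_filter hQ))
      have a2 := hnf ((normalizedFactors I).filter (fun Q => ¬ (Q ∉ T)))
        (fun Q hQ => hirr Q (Multiset.mem_of_mem_filter hQ))
      refine ⟨(⟨_, a1.2, ?_⟩, ⟨_, a2.2, ?_⟩), ?_⟩
      · rw [a1.1]; intro P hP; exact (Multiset.mem_filter.1 hP).2
      · rw [a2.1]; intro P hP; exact not_not.1 (Multiset.mem_filter.1 hP).2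
      · apply Subtype.ext
        simp only [g]
        rw [← Multiset.prod_add, Multiset.filter_add_not, Ideal.prod_normalizedFactors_eq_self hI0]
    refine (ENNReal.tsum_le_tsum_comp_of_surjective hg _).trans ?_
    rw [ENNReal.tsum_prod', ← ENNReal.tsum_mul_right]
    refine ENNReal.tsum_le_tsum fun I => ?_
    rw [← ENNReal.tsum_mul_left]
    refine ENNReal.tsum_le_tsum fun k => ?_
    simp only [g]
    rw [zW_mul]
  have hprime : ∀ I : Gd, ∀ P ∈ normalizedFactors I.1, P.IsPrime ∧ P ≠ ⊥ ∧ P ∉ T := by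
    intro I P hP
    have := prime_of_normalized_factor P hP
    exact ⟨Ideal.isPrime_of_prime this, this.ne_zero, I.2.2 P hP⟩
  have hzle : ∀ s : ℝ, 1 < s → ∀ (A : Multiset (Ideal (𝓞 K))) (p : Ideal (𝓞 K) → Ideal (𝓞 F)),
      (∀ P ∈ A, p P ≠ ⊥ ∧ Ideal.absNorm (p P) ≤ Ideal.absNorm P) →
      zW s A.prod ≤ zW s (A.map p).prod := by
    intro s hs A p
    induction A using Multiset.induction_on with
    | empty => intro _; simp [zW]
    | cons P A ih =>
      intro h
      rw [Multiset.map_cons, Multiset.prod_cons, Multiset.prod_cons, zW_mul, zW_mul]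
      refine mul_le_mul' ?_ (ih (fun Q hQ => h Q (Multiset.mem_cons_of_mem hQ)))
      obtain ⟨u1, u2⟩ := h P (Multiset.mem_cons_self _ _)
      have u3 : Ideal.absNorm (p P) ≠ 0 := by rwa [Ne, Ideal.absNorm_eq_zero_iff]
      rw [zW, zW, ENNReal.coe_le_coe]
      apply NNReal.rpow_le_rpow_of_nonpos _ _ (by linarith)
      · exact_mod_cast Nat.pos_of_ne_zero u3
      · exact_mod_cast u2
  have s2 : ∀ s : ℝ, 1 < s → (∑' I : Gd, zW s I.1) * (∑' I : Gd, zW s I.1) ≤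
      ∑' I : Ideal (𝓞 F), zW s I := by
    intro s hs
    let φ : Gd × Gd → Ideal (𝓞 F) := fun x =>
      ((normalizedFactors x.1.1).map p1).prod * ((normalizedFactors x.2.1).map p2).prod
    let rec1 : Ideal (𝓞 F) → Ideal (𝓞 K) := fun I =>
      (((normalizedFactors I).filter (fun Q => Q = p1 (Q.comap j))).map (fun Q => Q.comap j)).prod
    let rec2 : Ideal (𝓞 F) → Ideal (𝓞 K) := fun I =>
      (((normalizedFactors I).filter (fun Q => ¬ Q = p1 (Q.comap j))).map (fun Q => Q.comap j)).prod
    have hφ : ∀ x, normalizedFactors (φ x) =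
        (normalizedFactors x.1.1).map p1 + (normalizedFactors x.2.1).map p2 := by
      intro x
      simp only [φ]
      have b1 := hnF ((normalizedFactors x.1.1).map p1) (by
        intro Q hQ
        obtain ⟨P, hP, rfl⟩ := Multiset.mem_map.1 hQ
        obtain ⟨v1, v2, v3⟩ := hprime x.1 P hP
        obtain ⟨w1, w2, -⟩ := h1 P v1 v2 v3
        exact (Ideal.prime_of_isPrime w2 w1).irreducible)
      have b2 := hnF ((normalizedFactors x.2.1).map p2) (by
        intro Q hQ
        obtain ⟨P, hP, rfl⟩ := Multiset.mem_map.1 hQ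
        obtain ⟨v1, v2, v3⟩ := hprime x.2 P hP
        obtain ⟨w1, w2, -⟩ := h2 P v1 v2 v3
        exact (Ideal.prime_of_isPrime w2 w1).irreducible)
      rw [normalizedFactors_mul b1.2 b2.2, b1.1, b2.1]
    have m1 : ∀ x : Gd, ∀ Q ∈ (normalizedFactors x.1).map p1, Q = p1 (Q.comap j) := by
      intro x Q hQ
      obtain ⟨P, hP, rfl⟩ := Multiset.mem_map.1 hQ
      obtain ⟨v1, v2, v3⟩ := hprime x P hP
      rw [(h1 P v1 v2 v3).2.2.1]
    have m2 : ∀ x : Gd, ∀ Q ∈ (normalizedFactors x.1).map p2, ¬ Q = p1 (Q.comap j) := by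
      intro x Q hQ
      obtain ⟨P, hP, rfl⟩ := Multiset.mem_map.1 hQ
      obtain ⟨v1, v2, v3⟩ := hprime x P hP
      rw [(h2 P v1 v2 v3).2.2.1]
      exact (h12 P v1 v2 v3).symm
    have hr1 : ∀ x, rec1 (φ x) = x.1.1 := by
      intro x
      simp only [rec1]
      rw [hφ, Multiset.filter_add, Multiset.filter_eq_self.2 (m1 x.1),
        Multiset.filter_eq_nil.2 (m2 x.2), add_zero, Multiset.map_map]
      conv_rhs => rw [← Ideal.prod_normalizedFactors_eq_self x.1.2.1]
      congr 1
      conv_rhs => rw [← Multiset.map_id (normalizedFactors x.1.1)]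
      refine Multiset.map_congr rfl fun P hP => ?_
      obtain ⟨v1, v2, v3⟩ := hprime x.1 P hP
      exact (h1 P v1 v2 v3).2.2.1
    have hr2 : ∀ x, rec2 (φ x) = x.2.1 := by
      intro x
      simp only [rec2]
      rw [hφ, Multiset.filter_add, Multiset.filter_eq_self.2 (m2 x.2),
        Multiset.filter_eq_nil.2 (fun Q hQ => not_not.2 (m1 x.1 Q hQ)), zero_add, Multiset.map_map]
      conv_rhs => rw [← Ideal.prod_normalizedFactors_eq_self x.2.2.1]
      congr 1
      conv_rhs => rw [← Multiset.map_id (normalizedFactors x.2.1)]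
      refine Multiset.map_congr rfl fun P hP => ?_
      obtain ⟨v1, v2, v3⟩ := hprime x.2 P hP
      exact (h2 P v1 v2 v3).2.2.1
    have hinj : Function.Injective φ := by
      intro x y hxy
      refine Prod.ext (Subtype.ext ?_) (Subtype.ext ?_)
      · rw [← hr1 x, ← hr1 y, hxy]
      · rw [← hr2 x, ← hr2 y, hxy]
    refine le_trans ?_ (ENNReal.tsum_comp_le_tsum_of_injective hinj _)
    rw [ENNReal.tsum_prod', ← ENNReal.tsum_mul_right]
    refine ENNReal.tsum_le_tsum fun I => ?_
    rw [← ENNReal.tsum_mul_left]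
    refine ENNReal.tsum_le_tsum fun k => ?_
    simp only [φ]
    rw [zW_mul]
    refine mul_le_mul' ?_ ?_
    · conv_lhs => rw [← Ideal.prod_normalizedFactors_eq_self I.2.1]
      refine hzle s hs _ _ fun P hP => ?_
      obtain ⟨v1, v2, v3⟩ := hprime I P hP
      exact ⟨(h1 P v1 v2 v3).2.1, (h1 P v1 v2 v3).2.2.2⟩
    · conv_lhs => rw [← Ideal.prod_normalizedFactors_eq_self k.2.1]
      refine hzle s hs _ _ fun P hP => ?_
      obtain ⟨v1, v2, v3⟩ := hprime k P hP
      exact ⟨(h2 P v1 v2 v3).2.1, (h2 P v1 v2 v3).2.2.2⟩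
  have hbad : ∑' I : Bd, zW 1 I.1 ≠ ∞ := bad_sum T hT
  set B := ∑' I : Bd, zW 1 I.1 with hB
  have s3 : ∀ s : ℝ, 1 < s → ∑' I : Bd, zW s I.1 ≤ B := by
    intro s hs
    refine ENNReal.tsum_le_tsum fun I => ?_
    have u3 : Ideal.absNorm I.1 ≠ 0 := by rw [Ne, Ideal.absNorm_eq_zero_iff]; exact I.2.1
    rw [zW, zW, ENNReal.coe_le_coe]
    apply NNReal.rpow_le_rpow_of_exponent_le
    · exact_mod_cast Nat.one_le_iff_ne_zero.2 u3
    · linarith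
  have s4 : ∀ᶠ s in 𝓝[>] (1 : ℝ), c ^ 2 ≤ C * (B.toReal ^ 2) * (s - 1) := by
    filter_upwards [hK, hF, self_mem_nhdsWithin] with s hs1 hs2 hs
    have hs : 1 < s := hs
    have hp : 0 < s - 1 := by linarith
    have k1 := (hs1.1.trans (s1 s hs)).trans (mul_le_mul_right (s3 s hs) _)
    have k2 := (s2 s hs).trans hs2.2
    set g := ∑' I : Gd, zW s I.1
    have k3 : ENNReal.ofReal (c / (s - 1)) * ENNReal.ofReal (c / (s - 1)) ≤
        ENNReal.ofReal (C / (s - 1)) * (B * B) := by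
      calc _ ≤ (g * B) * (g * B) := mul_le_mul' k1 k1
        _ = (g * g) * (B * B) := by ring
        _ ≤ _ := mul_le_mul_left k2 _
    rw [← ENNReal.ofReal_toReal hbad, ← ENNReal.ofReal_mul (by positivity),
      ← ENNReal.ofReal_mul (by positivity), ← ENNReal.ofReal_mul (by positivity),
      ENNReal.ofReal_le_ofReal_iff (by positivity)] at k3
    have := mul_le_mul_of_nonneg_right k3 (sq_nonneg (s - 1))
    have e1 : c / (s - 1) * (c / (s - 1)) * (s - 1) ^ 2 = c ^ 2 := by field_simp
    have e2 : C / (s - 1) * (B.toReal * B.toReal) * (s - 1) ^ 2 = C * B.toReal ^ 2 * (s - 1) := by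
      field_simp
    rwa [e1, e2] at this
  have s5 : Tendsto (fun s : ℝ => C * (B.toReal ^ 2) * (s - 1)) (𝓝[>] 1) (𝓝 0) := by
    have : Continuous (fun s : ℝ => C * (B.toReal ^ 2) * (s - 1)) := by fun_prop
    have := this.tendsto 1
    simp only [sub_self, mul_zero] at this
    exact this.mono_left nhdsWithin_le_nhds
  have := ge_of_tendsto s5 s4
  nlinarith [sq_pos_of_pos hc]

end ZetaPart


theorem absNorm_map_equiv {R : Type*} [CommRing R] [IsDedekindDomain R] [Module.Free ℤ R]
    (e : R ≃+* R) (I : Ideal R) : Ideal.absNorm (I.map e) = Ideal.absNorm I := by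
  rw [Ideal.absNorm_apply, Ideal.absNorm_apply, Submodule.cardQuot_apply, Submodule.cardQuot_apply]
  exact (Nat.card_congr (Ideal.quotientEquiv I (I.map e) e rfl).toEquiv).symm

theorem map_equiv_isPrime {R : Type*} [CommRing R] (e : R ≃+* R) (I : Ideal R) (h : I.IsPrime) :
    (I.map e).IsPrime := Ideal.map_isPrime_of_equiv e

theorem map_equiv_ne_bot {R : Type*} [CommRing R] (e : R ≃+* R) (I : Ideal R) (h : I ≠ ⊥) :
    I.map e ≠ ⊥ := by
  rwa [Ne, Ideal.map_eq_bot_iff_of_injective e.injective]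

theorem mem_map_equiv {R : Type*} [CommRing R] (e : R ≃+* R) (I : Ideal R) (x : R) :
    e x ∈ I.map e ↔ x ∈ I := by
  constructor
  · intro h
    obtain ⟨y, hy, h⟩ := (Ideal.mem_map_of_equiv e _).1 h
    rwa [← e.injective h]
  · exact Ideal.mem_map_of_mem e

theorem prime_of_three_dvd {R : Type*} [CommRing R] [IsDedekindDomain R]
    (A B C I : Ideal R) (hA : A.IsPrime) (hB : B.IsPrime) (hC : C.IsPrime)
    (hA0 : A ≠ ⊥) (hB0 : B ≠ ⊥) (hC0 : C ≠ ⊥) (hAB : A ≠ B) (hAC : A ≠ C) (hBC : B ≠ C)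
    (h1 : I ≤ A) (h2 : I ≤ B) (h3 : I ≤ C) : A * B * C ∣ I := by
  have pA := Ideal.prime_of_isPrime hA0 hA
  have pB := Ideal.prime_of_isPrime hB0 hB
  have pC := Ideal.prime_of_isPrime hC0 hC
  have mA := hA.isMaximal hA0
  have mB := hB.isMaximal hB0
  have mC := hC.isMaximal hC0
  have cAB : IsCoprime A B := Ideal.isCoprime_of_isMaximal hAB
  have cAC : IsCoprime A C := Ideal.isCoprime_of_isMaximal hAC
  have cBC : IsCoprime B C := Ideal.isCoprime_of_isMaximal hBC
  exact (cAC.mul_left cBC).mul_dvd (cAB.mul_dvd (Ideal.dvd_iff_le.2 h1) (Ideal.dvd_iff_le.2 h2))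
    (Ideal.dvd_iff_le.2 h3)

theorem cube_contra (K F : Type*) [Field K] [NumberField K] [Field F] [NumberField F] [Algebra K F]
    (hfr : Module.finrank K F = 3)
    (ζ : 𝓞 K) (hζ : ζ ^ 2 + ζ + 1 = 0) (M N : ℕ) (hM : M ≠ 0) (hN : N ≠ 0)
    (θ : 𝓞 F) (hθ : θ ^ 3 = M) (ρ : 𝓞 F ≃ₐ[𝓞 K] 𝓞 F) (hρ : ρ θ = algebraMap (𝓞 K) (𝓞 F) ζ * θ)
    (h : ∀ P : Ideal (𝓞 K), P.IsPrime → P ≠ ⊥ → (N : 𝓞 K) ∉ P → ∃ y : 𝓞 K, y ^ 3 - M ∈ P) :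
    False := by
  classical
  set L : ℕ := 3 * M * N with hL
  have hL0 : (L : 𝓞 K) ≠ 0 := by
    rw [Nat.cast_ne_zero, hL]; positivity
  have hfinT : {P : Ideal (𝓞 K) | P.IsPrime ∧ P ≠ ⊥ ∧ (L : 𝓞 K) ∈ P}.Finite := by
    have := (Ideal.finite_factors (I := Ideal.span {(L : 𝓞 K)}) (by simpa using hL0))
    refine (this.image (fun v => v.asIdeal)).subset ?_
    rintro P ⟨h1, h2, h3⟩
    exact ⟨⟨P, h1, h2⟩, Ideal.dvd_span_singleton.2 h3, rfl⟩
  set j := algebraMap (𝓞 K) (𝓞 F) with hj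
  set e : 𝓞 F ≃+* 𝓞 F := ρ.toRingEquiv with he
  have heθ : e θ = j ζ * θ := hρ
  have hej : ∀ x, e (j x) = j x := fun x => ρ.commutes x
  have hinj : Function.Injective j := RingOfIntegers.algebraMap.injective K F
  have key : ∀ P : Ideal (𝓞 K), P.IsPrime → P ≠ ⊥ → (L : 𝓞 K) ∉ P →
      ∀ Q : Ideal (𝓞 F), Q.IsPrime → Q.comap j = P →
      Q ≠ ⊥ ∧ (Q.map e).comap j = P ∧ Q ≠ Q.map e ∧ Q ≠ (Q.map e).map e := by
    intro P hP hP0 hLP Q hQ hQP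
    have hmem : ∀ x, j x ∈ Q ↔ x ∈ P := fun x => by rw [← hQP]; rfl
    have hQ0 : Q ≠ ⊥ := by
      rintro rfl
      obtain ⟨x, hx, hx0⟩ := Submodule.exists_mem_ne_zero_of_ne_bot hP0
      have := (hmem x).2 hx
      rw [Ideal.mem_bot, map_eq_zero_iff _ hinj] at this
      exact hx0 this
    have hcm : ∀ x, j x ∈ Q.map e ↔ x ∈ P := by
      intro x
      rw [← hej x, mem_map_equiv, hmem]
    have hNP : (N : 𝓞 K) ∉ P := fun h => hLP (by
      rw [hL]; push_cast; exact P.mul_mem_left _ h)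
    have h3M : (3 * M : 𝓞 F) ∉ Q := by
      intro h'
      have : j (3 * M : 𝓞 K) ∈ Q := by
        rw [map_mul, map_ofNat, map_natCast]; exact h'
      rw [hmem] at this
      exact hLP (by rw [hL]; push_cast; exact P.mul_mem_right _ this)
    obtain ⟨y, hy⟩ := h P hP hP0 hNP
    have hz : (j ζ) ^ 2 + j ζ + 1 = 0 := by rw [← map_pow, ← map_add, ← map_one j, ← map_add, hζ, map_zero]
    have hz3 : (j ζ) ^ 3 = 1 := by linear_combination (j ζ - 1) * hz
    have hprod : (θ - j y) * (θ - j ζ * j y) * (θ - (j ζ) ^ 2 * j y) ∈ Q := by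
      have e1 : (θ - j y) * (θ - j ζ * j y) * (θ - (j ζ) ^ 2 * j y) = - j (y ^ 3 - M) := by
        rw [map_sub, map_pow, map_natCast, ← hθ]
        linear_combination (-θ ^ 2 * j y + (j ζ) * θ * (j y) ^ 2) * hz + (-(j y)^3) * hz3
      rw [e1]
      exact Q.neg_mem ((hmem _).2 hy)
    obtain ⟨w, hw⟩ : ∃ w : 𝓞 K, θ - j w ∈ Q := by
      rcases hQ.mem_or_mem hprod with h' | h'
      · rcases hQ.mem_or_mem h' with h' | h'
        · exact ⟨y, h'⟩
        · exact ⟨ζ * y, by simpa using h'⟩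
      · exact ⟨ζ ^ 2 * y, by simpa using h'⟩
    have hcontra : (j ζ - 1) * θ ∉ Q := by
      intro h'
      apply h3M
      have : (3 * M : 𝓞 F) = (-((j ζ) + 2) * θ ^ 2) * ((j ζ - 1) * θ) := by
        rw [← hθ]; linear_combination (θ ^ 3) * hz
      rw [this]
      exact Q.mul_mem_left _ h'
    have hcontra2 : ((j ζ) ^ 2 - 1) * θ ∉ Q := by
      intro h'
      apply hcontra
      have : (j ζ - 1) * θ = - (j ζ) * (((j ζ) ^ 2 - 1) * θ) := by
        linear_combination (-1) * θ * (-(hz3))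
      rw [this]
      exact Q.mul_mem_left _ h'
    refine ⟨hQ0, ?_, ?_, ?_⟩
    · ext x; exact hcm x
    · intro heq
      have h1 : e (θ - j w) ∈ Q := by rw [heq, mem_map_equiv]; exact hw
      rw [map_sub, hej, heθ] at h1
      apply hcontra
      have := Q.sub_mem h1 hw
      ring_nf at this ⊢
      exact this
    · intro heq
      have h1 : e (e (θ - j w)) ∈ Q := by rw [heq, mem_map_equiv, mem_map_equiv]; exact hw
      rw [map_sub, hej, heθ, map_sub, hej, map_mul, hej, heθ] at h1
      apply hcontra2
      have := Q.sub_mem h1 hw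
      ring_nf at this ⊢
      exact this
  have hnorm : ∀ P : Ideal (𝓞 K), P.IsPrime → P ≠ ⊥ → (L : 𝓞 K) ∉ P →
      ∀ Q : Ideal (𝓞 F), Q.IsPrime → Q.comap j = P → Ideal.absNorm Q ≤ Ideal.absNorm P := by
    intro P hP hP0 hLP Q hQ hQP
    obtain ⟨a1, a2, a3, a4⟩ := key P hP hP0 hLP Q hQ hQP
    have hQ' := map_equiv_isPrime e Q hQ
    obtain ⟨b1, b2, b3, b4⟩ := key P hP hP0 hLP _ hQ' a2
    have hQ'' := map_equiv_isPrime e _ hQ'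
    obtain ⟨c1, c2, c3, c4⟩ := key P hP hP0 hLP _ hQ'' b2
    have hdvd := prime_of_three_dvd Q (Q.map e) ((Q.map e).map e) (P.map j) hQ hQ' hQ'' a1 b1 c1
      a3 a4 b3 (Ideal.map_le_iff_le_comap.2 hQP.ge) (Ideal.map_le_iff_le_comap.2 a2.ge)
      (Ideal.map_le_iff_le_comap.2 b2.ge)
    have h2 := Ideal.absNorm_dvd_absNorm_of_le (Ideal.dvd_iff_le.1 hdvd)
    have h3 : Ideal.absNorm (P.map j) = Ideal.absNorm P ^ 3 := by
      rw [hj, Ideal.absNorm_algebraMap, ← IsFractionRing.finrank_eq (𝓞 K) K (𝓞 F) F, hfr]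
    rw [h3, map_mul, map_mul, absNorm_map_equiv, absNorm_map_equiv, absNorm_map_equiv] at h2
    have h4 := Nat.le_of_dvd (by
      have : Ideal.absNorm P ≠ 0 := by rwa [Ne, Ideal.absNorm_eq_zero_iff]
      positivity) h2
    have h5 : Ideal.absNorm Q ^ 3 ≤ Ideal.absNorm P ^ 3 := by
      have h6 : Ideal.absNorm Q ^ 3 = Ideal.absNorm Q * Ideal.absNorm Q * Ideal.absNorm Q := by ring
      rw [h6]; exact h4
    exact (Nat.pow_le_pow_iff_left (by norm_num)).1 h5
  have hex : ∀ P : Ideal (𝓞 K), P.IsPrime → ∃ Q : Ideal (𝓞 F), Q.IsPrime ∧ Q.comap j = P := by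
    intro P hP
    obtain ⟨Q, -, h1, h2⟩ := Ideal.exists_ideal_over_prime_of_isIntegral P (⊥ : Ideal (𝓞 F)) (by
      intro x hx
      have hx' : j x = 0 := hx
      rw [map_eq_zero_iff _ hinj] at hx'
      rw [hx']; exact P.zero_mem)
    exact ⟨Q, h1, h2⟩
  choose! p1 hp1 hp1' using hex
  have hT : ∀ P, P ∈ hfinT.toFinset ↔ (P.IsPrime ∧ P ≠ ⊥ ∧ (L : 𝓞 K) ∈ P) := by
    intro P; rw [Set.Finite.mem_toFinset]; rfl
  refine dens_contra K F j hfinT.toFinset (fun P hP => ⟨((hT P).1 hP).1, ((hT P).1 hP).2.1⟩)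
    p1 (fun P => (p1 P).map e) ?_ ?_ ?_
  · intro P hP hP0 hPT
    have hLP : (L : 𝓞 K) ∉ P := fun hh => hPT ((hT P).2 ⟨hP, hP0, hh⟩)
    exact ⟨hp1 P hP, (key P hP hP0 hLP _ (hp1 P hP) (hp1' P hP)).1, hp1' P hP,
      hnorm P hP hP0 hLP _ (hp1 P hP) (hp1' P hP)⟩
  · intro P hP hP0 hPT
    have hLP : (L : 𝓞 K) ∉ P := fun hh => hPT ((hT P).2 ⟨hP, hP0, hh⟩)
    have hk := key P hP hP0 hLP _ (hp1 P hP) (hp1' P hP)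
    have hq := map_equiv_isPrime e _ (hp1 P hP)
    exact ⟨hq, map_equiv_ne_bot e _ hk.1, hk.2.1, hnorm P hP hP0 hLP _ hq hk.2.1⟩
  · intro P hP hP0 hPT
    have hLP : (L : 𝓞 K) ∉ P := fun hh => hPT ((hT P).2 ⟨hP, hP0, hh⟩)
    exact (key P hP hP0 hLP _ (hp1 P hP) (hp1' P hP)).2.2.1

open Polynomial in
theorem cube_of_local (K : Type*) [Field K] [NumberField K]
    (ζ : 𝓞 K) (hζ : ζ ^ 2 + ζ + 1 = 0) (M N : ℕ) (hM : M ≠ 0) (hN : N ≠ 0)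
    (h : ∀ P : Ideal (𝓞 K), P.IsPrime → P ≠ ⊥ → (N : 𝓞 K) ∉ P → ∃ y : 𝓞 K, y ^ 3 - M ∈ P) :
    ∃ β : K, β ^ 3 = M := by
  by_contra hne
  push Not at hne
  have hirr : Irreducible (X ^ 3 - C (M : K)) := X_pow_sub_C_irreducible_of_prime Nat.prime_three hne
  have hfact : Fact (Irreducible (X ^ 3 - C (M : K))) := ⟨hirr⟩
  have hne0 : (X ^ 3 - C (M : K)) ≠ 0 := hirr.ne_zero
  let F := AdjoinRoot (X ^ 3 - C (M : K))
  let pb := AdjoinRoot.powerBasis hne0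
  have hfd : Module.Finite K F := pb.finite
  have hfr : Module.finrank K F = 3 := by
    rw [pb.finrank, AdjoinRoot.powerBasis_dim]; compute_degree!
  let instNF : NumberField F := NumberField.of_module_finite K F
  let θ : F := AdjoinRoot.root _
  have hθ : θ ^ 3 = (M : F) := by
    have := AdjoinRoot.eval₂_root (X ^ 3 - C (M : K))
    simp only [eval₂_sub, eval₂_pow, eval₂_X, eval₂_C, eval₂_natCast, map_natCast, sub_eq_zero] at this
    exact this
  have hmin : minpoly K θ = X ^ 3 - C (M : K) := by
    rw [AdjoinRoot.minpoly_root hne0, (monic_X_pow_sub_C (M : K) (by norm_num)).leadingCoeff]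
    simp
  have hζK : (ζ : K) ^ 2 + ζ + 1 = 0 := by
    have := congrArg (algebraMap (𝓞 K) K) hζ
    simpa using this
  have hζ3 : (ζ : K) ^ 3 = 1 := by linear_combination ((ζ : K) - 1) * hζK
  have hroot : (minpoly K pb.gen).aeval (algebraMap K F ζ * θ) = 0 := by
    have : pb.gen = θ := AdjoinRoot.powerBasis_gen hne0
    rw [this, hmin]
    simp only [map_sub, map_pow, aeval_X, aeval_C, map_natCast]
    rw [mul_pow, hθ, ← map_pow, hζ3, map_one, one_mul, sub_self]
  let ρ0 : F →ₐ[K] F := pb.lift _ hroot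
  have hρ0 : ρ0 θ = algebraMap K F ζ * θ := by
    have : pb.gen = θ := AdjoinRoot.powerBasis_gen hne0
    rw [← this]; exact pb.lift_gen _ hroot
  let ρ : F ≃ₐ[K] F := AlgEquiv.ofBijective ρ0 (Algebra.IsAlgebraic.algHom_bijective ρ0)
  have hint : IsIntegral ℤ θ := by
    refine IsIntegral.of_pow (n := 3) (by norm_num) ?_
    rw [hθ]; simpa using (isIntegral_algebraMap (R := ℤ) (A := F) (x := (M : ℤ)))
  refine cube_contra K F hfr ζ hζ M N hM hN ⟨θ, hint⟩ ?_ (RingOfIntegers.mapAlgEquiv ρ) ?_ h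
  · apply RingOfIntegers.ext
    exact hθ
  · apply RingOfIntegers.ext
    exact hρ0


section Cub
variable {O κ : Type*} [CommRing O] [Field κ]

def InMu (ζ z : O) : Prop := z = 0 ∨ z = 1 ∨ z = ζ ∨ z = ζ ^ 2

structure IsCub (ζ : O) (π : O →+* κ) (χ : MulChar κ O) : Prop where
  val : ∀ x, InMu ζ (χ x)
  red : ∀ x, π (χ x) = x ^ ((Nat.card κ - 1) / 3)

theorem zeta_cube {ζ : O} (hζ : ζ ^ 2 + ζ + 1 = 0) : ζ ^ 3 = 1 := by
  linear_combination (ζ - 1) * hζ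

theorem InMu.mul {ζ : O} (hζ : ζ ^ 2 + ζ + 1 = 0) {a b : O} (ha : InMu ζ a) (hb : InMu ζ b) :
    InMu ζ (a * b) := by
  have h3 := zeta_cube hζ
  rcases ha with rfl | rfl | rfl | rfl
  · left; ring
  · rw [one_mul]; exact hb
  · rcases hb with rfl | rfl | rfl | rfl
    · left; ring
    · right; right; left; ring
    · right; right; right; ring
    · right; left; linear_combination h3
  · rcases hb with rfl | rfl | rfl | rfl
    · left; ring
    · right; right; right; ring
    · right; left; linear_combination h3
    · right; right; left; linear_combination ζ * h3

theorem red_ne {ζ : O} (hζ : ζ ^ 2 + ζ + 1 = 0) (π : O →+* κ) (h3 : (3 : κ) ≠ 0) :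
    π ζ ≠ 1 ∧ π ζ ≠ 0 ∧ (π ζ) ^ 2 ≠ 1 ∧ (π ζ) ^ 2 ≠ π ζ ∧ (π ζ) ^ 3 = 1 := by
  have hz : (π ζ) ^ 2 + π ζ + 1 = 0 := by
    rw [← map_pow, ← map_add, ← map_one π, ← map_add, hζ, map_zero]
  have hz3 := zeta_cube hz
  have h1 : π ζ ≠ 1 := by
    intro h; rw [h] at hz; apply h3; linear_combination hz
  have h0 : π ζ ≠ 0 := by
    intro h; rw [h] at hz; norm_num at hz
  refine ⟨h1, h0, ?_, ?_, hz3⟩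
  · intro h
    apply h1
    linear_combination hz3 - (π ζ) * h
  · intro h
    apply h1
    have : π ζ * (π ζ - 1) = 0 := by linear_combination h
    rcases mul_eq_zero.1 this with h' | h'
    · exact absurd h' h0
    · linear_combination h'

theorem InMu.ext {ζ : O} (hζ : ζ ^ 2 + ζ + 1 = 0) (π : O →+* κ) (h3 : (3 : κ) ≠ 0)
    {a b : O} (ha : InMu ζ a) (hb : InMu ζ b) (h : π a = π b) : a = b := by
  obtain ⟨h1, h0, h2, h4, -⟩ := red_ne hζ π h3
  have h5 : (π ζ) ^ 2 ≠ 0 := pow_ne_zero _ h0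
  rcases ha with rfl | rfl | rfl | rfl <;> rcases hb with rfl | rfl | rfl | rfl <;>
    first
    | rfl
    | (exfalso; simp only [map_zero, map_one, map_pow] at h
       first
        | exact one_ne_zero h
        | exact one_ne_zero h.symm
        | exact h1 h
        | exact h1 h.symm
        | exact h0 h
        | exact h0 h.symm
        | exact h2 h
        | exact h2 h.symm
        | exact h4 h
        | exact h4 h.symm
        | exact h5 h
        | exact h5 h.symm)

theorem three_dvd_card [Finite κ] {ζ : O} (hζ : ζ ^ 2 + ζ + 1 = 0) (π : O →+* κ) (h3 : (3 : κ) ≠ 0) :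
    3 ∣ Nat.card κ - 1 := by
  have := Fintype.ofFinite κ
  obtain ⟨h1, h0, h2, h4, h5⟩ := red_ne hζ π h3
  let u : κˣ := Units.mk0 (π ζ) h0
  have hu : orderOf u = 3 := by
    apply orderOf_eq_prime
    · ext; exact h5
    · intro h; exact h1 (congrArg Units.val h)
  rw [← hu, ← Nat.card_units]
  exact orderOf_dvd_natCard u

theorem card_facts [Finite κ] : 1 < Nat.card κ := Finite.one_lt_card

theorem pow_card_sub_one [Finite κ] {x : κ} (hx : x ≠ 0) : x ^ (Nat.card κ - 1) = 1 := by
  have := Fintype.ofFinite κ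
  rw [Nat.card_eq_fintype_card]
  exact FiniteField.pow_card_sub_one_eq_one x hx

theorem cub_exists [Finite κ] {ζ : O} (hζ : ζ ^ 2 + ζ + 1 = 0) (π : O →+* κ) (h3 : (3 : κ) ≠ 0) :
    ∃ χ : MulChar κ O, IsCub ζ π χ := by
  obtain ⟨h1, h0, h2, h4, h5⟩ := red_ne hζ π h3
  have hd := three_dvd_card hζ π h3
  have hN := card_facts (κ := κ)
  set e := (Nat.card κ - 1) / 3 with he
  have he3 : e * 3 = Nat.card κ - 1 := Nat.div_mul_cancel hd
  have he0 : e ≠ 0 := by omega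
  have hex : ∀ x : κ, ∃ z : O, InMu ζ z ∧ π z = x ^ e := by
    intro x
    by_cases hx : x = 0
    · exact ⟨0, Or.inl rfl, by rw [hx, zero_pow he0, map_zero]⟩
    · have hx3 : (x ^ e) ^ 3 = 1 := by rw [← pow_mul, he3]; exact pow_card_sub_one hx
      have hz : (π ζ) ^ 2 + π ζ + 1 = 0 := by
        rw [← map_pow, ← map_add, ← map_one π, ← map_add, hζ, map_zero]
      have : (x ^ e - 1) * ((x ^ e - π ζ) * (x ^ e - (π ζ) ^ 2)) = 0 := by
        generalize x ^ e = y at *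
        linear_combination hx3 + (- y ^ 2 + y * π ζ - π ζ + 1) * hz
      rcases mul_eq_zero.1 this with h | h
      · exact ⟨1, Or.inr (Or.inl rfl), by rw [map_one]; linear_combination -h⟩
      · rcases mul_eq_zero.1 h with h | h
        · exact ⟨ζ, Or.inr (Or.inr (Or.inl rfl)), by linear_combination -h⟩
        · exact ⟨ζ ^ 2, Or.inr (Or.inr (Or.inr rfl)), by rw [map_pow]; linear_combination -h⟩
  choose f hf1 hf2 using hex
  refine ⟨{ toFun := f, map_one' := ?_, map_mul' := ?_, map_nonunit' := ?_ }, hf1, hf2⟩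
  · exact InMu.ext hζ π h3 (hf1 1) (Or.inr (Or.inl rfl)) (by rw [hf2, one_pow, map_one])
  · intro x y
    exact InMu.ext hζ π h3 (hf1 _) ((hf1 x).mul hζ (hf1 y)) (by rw [map_mul, hf2, hf2, hf2, mul_pow])
  · intro x hx
    have : x = 0 := by by_contra h; exact hx (isUnit_iff_ne_zero.2 h)
    exact InMu.ext hζ π h3 (hf1 _) (Or.inl rfl) (by rw [hf2, this, zero_pow he0, map_zero])

theorem IsCub.galois {ζ : O} (hζ : ζ ^ 2 + ζ + 1 = 0) {π : O →+* κ} (h3 : (3 : κ) ≠ 0) {κ' : Type*} [Field κ'] {π' : O →+* κ'} {χ : MulChar κ O}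
    (h : IsCub ζ π χ) {χ' : MulChar κ' O} (h' : IsCub ζ π' χ') (h3' : (3 : κ') ≠ 0)
    (g : O →+* O) (e : κ ≃+* κ') (hge : ∀ x, e (π x) = π' (g x))
    (hg : g ζ = ζ ∨ g ζ = ζ ^ 2) (x : κ) : χ' (e x) = g (χ x) := by
  apply InMu.ext hζ π' h3' (h'.val _)
  · have hz3 := zeta_cube hζ
    rcases h.val x with h1 | h1 | h1 | h1
    · rw [h1, map_zero]; exact Or.inl rfl
    · rw [h1, map_one]; exact Or.inr (Or.inl rfl)
    · rw [h1]; exact Or.inr (Or.inr hg)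
    · rw [h1, map_pow]
      rcases hg with hg | hg <;> rw [hg]
      · exact Or.inr (Or.inr (Or.inr rfl))
      · right; right; left; linear_combination ζ * hz3
  · rw [h'.red, ← hge, h.red, map_pow, Nat.card_congr e.toEquiv]

theorem IsCub.eq_one_iff {ζ : O} (hζ : ζ ^ 2 + ζ + 1 = 0) {π : O →+* κ} (h3 : (3 : κ) ≠ 0) [Finite κ] {χ : MulChar κ O} (h : IsCub ζ π χ) (x : κ) :
    χ x = 1 ↔ x ^ ((Nat.card κ - 1) / 3) = 1 := by
  constructor
  · intro hx; rw [← h.red, hx, map_one]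
  · intro hx
    exact InMu.ext hζ π h3 (h.val _) (Or.inr (Or.inl rfl)) (by rw [h.red, hx, map_one])

theorem IsCub.cube {ζ : O} (hζ : ζ ^ 2 + ζ + 1 = 0) {π : O →+* κ} (h3 : (3 : κ) ≠ 0) [Nontrivial O] {χ : MulChar κ O} (h : IsCub ζ π χ) : χ ^ 3 = 1 := by
  ext x
  rw [MulChar.pow_apply_coe, MulChar.one_apply_coe]
  have hz3 := zeta_cube hζ
  have hu : IsUnit (χ x) := x.isUnit.map χ
  rcases h.val x with h1 | h1 | h1 | h1
  · rw [h1] at hu; exact absurd hu not_isUnit_zero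
  · rw [h1, one_pow]
  · rw [h1, hz3]
  · rw [h1]; linear_combination (ζ ^ 3 + 1) * hz3

theorem IsCub.ne_one {ζ : O} (hζ : ζ ^ 2 + ζ + 1 = 0) {π : O →+* κ} (h3 : (3 : κ) ≠ 0) [Finite κ] {χ : MulChar κ O} (h : IsCub ζ π χ) : χ ≠ 1 := by
  intro h1
  have := Fintype.ofFinite κ
  have hd := three_dvd_card hζ π h3
  have hN := card_facts (κ := κ)
  obtain ⟨u, hu⟩ := IsCyclic.exists_generator (α := κˣ)
  have ho : orderOf u = Nat.card κ - 1 := by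
    rw [orderOf_eq_card_of_forall_mem_zpowers hu, Nat.card_units]
  have h2 : (u : κ) ^ ((Nat.card κ - 1) / 3) = 1 := by
    rw [← h.eq_one_iff hζ h3, h1, MulChar.one_apply_coe]
  have h4 : u ^ ((Nat.card κ - 1) / 3) = 1 := by ext; push_cast; exact h2
  have h5 := orderOf_dvd_of_pow_eq_one h4
  rw [ho] at h5
  have := Nat.le_of_dvd (by omega) h5
  omega

theorem IsCub.exists_cube {ζ : O} (hζ : ζ ^ 2 + ζ + 1 = 0) {π : O →+* κ} (h3 : (3 : κ) ≠ 0) [Finite κ] {χ : MulChar κ O} (h : IsCub ζ π χ) {x : κ} (hx : x ≠ 0)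
    (h1 : χ x = 1) : ∃ y : κ, y ^ 3 = x := by
  have := Fintype.ofFinite κ
  have hd := three_dvd_card hζ π h3
  have hN := card_facts (κ := κ)
  rw [h.eq_one_iff hζ h3] at h1
  obtain ⟨u, hu⟩ := IsCyclic.exists_generator (α := κˣ)
  have ho : orderOf u = Nat.card κ - 1 := by
    rw [orderOf_eq_card_of_forall_mem_zpowers hu, Nat.card_units]
  obtain ⟨k, hk⟩ := (mem_powers_iff_mem_zpowers).2 (hu (Units.mk0 x hx))
  have hk' : (u : κ) ^ k = x := by
    have := congrArg Units.val hk; simpa using this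
  have h4 : u ^ (k * ((Nat.card κ - 1) / 3)) = 1 := by
    ext; push_cast; rw [pow_mul, hk']; exact h1
  have h5 := orderOf_dvd_of_pow_eq_one h4
  rw [ho] at h5
  have h6 : 3 ∣ k := by
    obtain ⟨e, he⟩ := hd
    rw [he, Nat.mul_div_cancel_left _ (by norm_num)] at h5
    exact Nat.dvd_of_mul_dvd_mul_right (by omega) h5
  obtain ⟨l, rfl⟩ := h6
  exact ⟨(u : κ) ^ l, by rw [← pow_mul, mul_comm, hk']⟩

theorem IsCub.order {ζ : O} (hζ : ζ ^ 2 + ζ + 1 = 0) {π : O →+* κ} (h3 : (3 : κ) ≠ 0) [Finite κ] [Nontrivial O] {χ : MulChar κ O} (h : IsCub ζ π χ) :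
    orderOf χ = 3 :=
  orderOf_eq_prime (h.cube hζ h3) (h.ne_one hζ h3)

theorem IsCub.neg_one {ζ : O} (hζ : ζ ^ 2 + ζ + 1 = 0) {π : O →+* κ} (h3 : (3 : κ) ≠ 0) [Nontrivial O] {χ : MulChar κ O} (h : IsCub ζ π χ) : χ (-1) = 1 := by
  have h1 := h.cube hζ h3
  have : (χ ^ 3) (-1) = 1 := by
    rw [h1, MulChar.one_apply isUnit_one.neg]
  rw [MulChar.pow_apply' _ (by norm_num), ← map_pow] at this
  rwa [show ((-1 : κ)) ^ 3 = -1 by ring] at this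

/-- the Jacobi sum lies in the prime -/
theorem IsCub.jacobi_mem {ζ : O} (hζ : ζ ^ 2 + ζ + 1 = 0) {π : O →+* κ} (h3 : (3 : κ) ≠ 0) [Fintype κ] {χ : MulChar κ O} (h : IsCub ζ π χ) :
    π (jacobiSum χ χ) = 0 := by
  have hd := three_dvd_card hζ π h3
  have hN := card_facts (κ := κ)
  rw [jacobiSum, map_sum]
  simp only [map_mul, h.red]
  set e := (Nat.card κ - 1) / 3 with he
  have he3 : e * 3 = Nat.card κ - 1 := Nat.div_mul_cancel hd
  have h4 : ∀ x : κ, x ^ e * (1 - x) ^ e =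
      ∑ k ∈ Finset.range (e + 1), ((-1) ^ (k + e) * (e.choose k : κ)) * x ^ (e + (e - k)) := by
    intro x
    rw [sub_pow, Finset.mul_sum]
    refine Finset.sum_congr rfl fun k hk => ?_
    rw [one_pow, pow_add x]
    ring
  simp only [h4]
  rw [Finset.sum_comm]
  refine Finset.sum_eq_zero fun k hk => ?_
  rw [← Finset.mul_sum, FiniteField.sum_pow_lt_card_sub_one, mul_zero]
  rw [← Nat.card_eq_fintype_card]
  omega

end Cub


section Recip
variable {O κ κ₂ : Type*} [CommRing O] [Field κ] [Field κ₂]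

theorem IsCub.comp_order [Fintype κ] [Nontrivial O] {L : Type*} [Field L] {ζ : O} (hζ : ζ ^ 2 + ζ + 1 = 0) {π : O →+* κ} (h3 : (3 : κ) ≠ 0)
    {χ : MulChar κ O} (h : IsCub ζ π χ) (f : O →+* L) (h3L : (3 : L) ≠ 0) :
    orderOf (χ.ringHomComp f) = 3 := by
  apply orderOf_eq_prime
  · have := h.cube hζ h3
    ext x
    have h2 := congrArg (fun c : MulChar κ O => f (c x)) this
    simpa [MulChar.pow_apply_coe, MulChar.ringHomComp_apply] using h2
  · intro h1
    apply h.ne_one hζ h3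
    ext x
    have h2 : (χ.ringHomComp f) x = 1 := by rw [h1, MulChar.one_apply_coe]
    rw [MulChar.one_apply_coe]
    rw [MulChar.ringHomComp_apply] at h2
    exact InMu.ext hζ f h3L (h.val x) (Or.inr (Or.inl rfl)) (by rw [h2, map_one])

theorem recip [Fintype κ] [Fintype κ₂] [Nontrivial O] {ζ : O} (hζ : ζ ^ 2 + ζ + 1 = 0) {π : O →+* κ} (h3 : (3 : κ) ≠ 0)
    {χ : MulChar κ O} (h : IsCub ζ π χ) {π₂ : O →+* κ₂} (h3' : (3 : κ₂) ≠ 0)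
    {χ₂ : MulChar κ₂ O} (h₂ : IsCub ζ π₂ χ₂) (q : ℕ) (hq : q.Prime) (hq3 : q % 3 = 2) [CharP κ₂ q]
    (hcard : Nat.card κ₂ = q ^ 2) (hqκ : (q : κ) ≠ 0) :
    χ₂ (π₂ (jacobiSum χ χ)) = χ (q : κ) := by
  have : Fact q.Prime := ⟨hq⟩
  obtain ⟨pn, hp, hc⟩ := FiniteField.card κ (ringChar κ)
  have hr : ringChar κ₂ = q := ringChar.eq κ₂ q
  have hne : ringChar κ₂ ≠ ringChar κ := by
    rw [hr]; intro h
    apply hqκ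
    rw [h]; exact ringChar.Nat.cast_ringChar
  let ψ := AddChar.FiniteField.primitiveChar κ κ₂ hne
  let L := CyclotomicField ψ.n κ₂
  let f : O →+* L := (algebraMap κ₂ L).comp π₂
  have : CharP L q := charP_of_injective_algebraMap (algebraMap κ₂ L).injective q
  have h3L : (3 : L) ≠ 0 := by
    have := (map_ne_zero (algebraMap κ₂ L)).2 h3'
    rwa [map_ofNat] at this
  have hord := h.comp_order hζ h3 f h3L
  set χ' := χ.ringHomComp f with hχ'
  have hcardκ : (Fintype.card κ : κ₂) ≠ 0 := by
    rw [hc]; push_cast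
    apply pow_ne_zero
    intro h0
    have := (CharP.cast_eq_zero_iff κ₂ q _).1 h0
    exact hne (hr.trans ((Nat.prime_dvd_prime_iff_eq hq hp).1 this))
  have hcardL : (Fintype.card κ : L) ≠ 0 := by
    have := (map_ne_zero (algebraMap κ₂ L)).2 hcardκ
    simpa using this
  have hχ1 : χ' ≠ 1 := by
    intro h1; rw [h1, orderOf_one] at hord; norm_num at hord
  have hg0 : gaussSum χ' ψ.char ≠ 0 := gaussSum_ne_zero_of_nontrivial hcardL hχ1 ψ.prim
  have hg3 := gaussSum_pow_eq_prod_jacobiSum (χ := χ') (ψ := ψ.char) (by omega) ψ.prim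
  rw [hord] at hg3
  simp only [show Finset.Ico 1 (3 - 1) = {1} from rfl, Finset.prod_singleton, pow_one] at hg3
  have hJ : jacobiSum χ' χ' = f (jacobiSum χ χ) := jacobiSum_ringHomComp χ χ f
  have hm1 : χ' (-1) = 1 := by
    rw [hχ', MulChar.ringHomComp_apply, h.neg_one hζ h3, map_one]
  rw [hJ, hm1, one_mul] at hg3
  have hqq : ∃ e, q ^ 2 = 3 * e + 1 ∧ (q - 1) ∣ e := by
    obtain ⟨b, hb⟩ : ∃ b, q = 3 * b + 2 := ⟨q / 3, by omega⟩
    refine ⟨(q - 1) * (b + 1), ?_, dvd_mul_right _ _⟩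
    rw [hb, show 3 * b + 2 - 1 = 3 * b + 1 by omega]; ring
  obtain ⟨e, he, hed⟩ := hqq
  have hχq : χ' ^ (q ^ 2) = χ' := by
    rw [he, pow_succ, pow_mul, ← hord, pow_orderOf_eq_one, one_pow, one_mul]
  have hfr : gaussSum χ' ψ.char ^ (q ^ 2) = gaussSum χ' (ψ.char.mulShift ((q : κ) ^ 2)) := by
    have h5 : gaussSum χ' ψ.char ^ (q ^ 2) = gaussSum (χ' ^ (q ^ 2)) (ψ.char ^ (q ^ 2)) := by
      rw [pow_two, pow_mul, gaussSum_frob q, gaussSum_frob q, ← pow_mul, ← pow_mul]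
    rw [h5, hχq, AddChar.pow_mulShift]
    push_cast; rfl
  have hsh := gaussSum_mulShift χ' ψ.char (Units.mk0 ((q : κ) ^ 2) (pow_ne_zero _ hqκ))
  rw [Units.val_mk0, ← hfr] at hsh
  have hq13 : χ' (q : κ) ^ 3 = 1 := by
    have : χ' ^ 3 = 1 := by rw [← hord, pow_orderOf_eq_one]
    rw [← MulChar.pow_apply' _ (by norm_num), this, MulChar.one_apply (isUnit_iff_ne_zero.2 hqκ)]
  have hge : gaussSum χ' ψ.char ^ (3 * e) = χ' (q : κ) := by
    rw [he, pow_succ (gaussSum χ' ψ.char), map_pow] at hsh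
    apply mul_right_cancel₀ hg0
    linear_combination (χ' (q : κ)) * hsh - (gaussSum χ' ψ.char ^ (3 * e) * gaussSum χ' ψ.char) * hq13
  rw [pow_mul, hg3, mul_pow] at hge
  have hce : (Fintype.card κ : κ₂) ^ e = 1 := by
    have h6 : (Fintype.card κ : κ₂) ^ q = (Fintype.card κ : κ₂) := by
      rw [← frobenius_def, map_natCast]
    have h7 : (Fintype.card κ : κ₂) ^ (q - 1) = 1 := by
      apply mul_right_cancel₀ hcardκ
      rw [← pow_succ, Nat.sub_add_cancel hq.one_le, h6, one_mul]
    obtain ⟨l, rfl⟩ := hed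
    rw [pow_mul, h7, one_pow]
  have hceL : (Fintype.card κ : L) ^ e = 1 := by
    have := congrArg (algebraMap κ₂ L) hce
    simpa using this
  rw [hceL, one_mul] at hge
  have hfin : π₂ (χ (q : κ)) = (π₂ (jacobiSum χ χ)) ^ e := by
    apply (algebraMap κ₂ L).injective
    rw [map_pow]
    exact hge.symm
  apply InMu.ext hζ π₂ h3' (h₂.val _) (h.val _)
  rw [h₂.red, hfin, hcard, he]
  congr 1
  omega

/-- norm relation for the Jacobi sum -/
theorem IsCub.jacobi_norm [Fintype κ] [Nontrivial O] {L : Type*} [Field L] [CharZero L]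
    {ζ : O} (hζ : ζ ^ 2 + ζ + 1 = 0) {π : O →+* κ} (h3 : (3 : κ) ≠ 0)
    {χ : MulChar κ O} (h : IsCub ζ π χ) (f : O →+* L) (hf : Function.Injective f) (τ : O →+* O)
    (hτ : τ ζ = ζ ^ 2) :
    jacobiSum χ χ * τ (jacobiSum χ χ) = Fintype.card κ := by
  apply hf
  have h3L : (3 : L) ≠ 0 := by norm_num
  have hord := h.comp_order hζ h3 f h3L
  set χ' := χ.ringHomComp f with hχ'
  have hz3 := zeta_cube hζ
  have hχ1 : χ' ≠ 1 := by
    intro h1; rw [h1, orderOf_one] at hord; norm_num at hord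
  have hχ2 : χ' * χ' ≠ 1 := by
    intro h1
    have h2 : orderOf χ' ∣ 2 := orderOf_dvd_of_pow_eq_one (by rw [pow_two, h1])
    rw [hord] at h2; norm_num at h2
  have hne : ringChar L ≠ ringChar κ := by
    rw [ringChar.eq_zero]
    intro h0
    obtain ⟨pn, hp, hc⟩ := FiniteField.card κ (ringChar κ)
    rw [← h0] at hp; exact Nat.not_prime_zero hp
  have key := jacobiSum_mul_jacobiSum_inv hne hχ1 hχ1 hχ2
  have hinv : χ'⁻¹ = χ.ringHomComp (f.comp τ) := by
    rw [inv_eq_iff_mul_eq_one]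
    ext x
    rw [MulChar.mul_apply, MulChar.one_apply_coe, hχ', MulChar.ringHomComp_apply, MulChar.ringHomComp_apply]
    rw [RingHom.comp_apply, ← map_mul, ← map_one f]
    congr 1
    have hu : IsUnit (χ x) := x.isUnit.map χ
    rcases h.val x with h1 | h1 | h1 | h1
    · rw [h1] at hu; exact absurd hu not_isUnit_zero
    · rw [h1, map_one, one_mul]
    · rw [h1, hτ]; linear_combination hz3
    · rw [h1, map_pow, hτ]; linear_combination (ζ ^ 3 + 1) * hz3
  rw [hinv, jacobiSum_ringHomComp, jacobiSum_ringHomComp] at key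
  rw [map_mul, map_natCast]
  exact key

theorem IsCub.jacobi_fix [Fintype κ] 
    {ζ : O} (σ : O →+* O) (hσ : σ ζ = ζ) {π : O →+* κ} 
    {χ : MulChar κ O} (h : IsCub ζ π χ) : σ (jacobiSum χ χ) = jacobiSum χ χ := by
  have : ∀ x, σ (χ x) = χ x := by
    intro x
    rcases h.val x with h1 | h1 | h1 | h1 <;> simp [h1, hσ]
  simp [jacobiSum, this]
end Recip


section FieldSetup

open IntermediateField in
theorem galK {K : Type} [Field K] [NumberField K] {ζ α : K} {m : ℕ} (hm : m ≠ 0) (hζ : IsPrimitiveRoot ζ 3) (hα : α ^ 3 = (m : K))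
    (hgen : Algebra.adjoin ℚ ({ζ, α} : Set K) = ⊤) : IsGalois ℚ K := by
  have hmK : (m : K) ≠ 0 := by exact_mod_cast hm
  have hα0 : α ≠ 0 := by rintro rfl; apply hmK; rw [← hα]; norm_num
  have hsplit : Polynomial.IsSplittingField ℚ K (Polynomial.X ^ 3 - Polynomial.C (m : ℚ)) := by
    constructor
    · rw [Polynomial.map_sub, Polynomial.map_pow, Polynomial.map_X, Polynomial.map_C]
      exact X_pow_sub_C_splits_of_isPrimitiveRoot hζ (by rw [hα]; simp)
    · rw [eq_top_iff, ← hgen]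
      set A := Algebra.adjoin ℚ ((Polynomial.X ^ 3 - Polynomial.C (m : ℚ)).rootSet K) with hA
      have hp0 : (Polynomial.X ^ 3 - Polynomial.C (m : ℚ)) ≠ 0 :=
        Polynomial.X_pow_sub_C_ne_zero (by norm_num) _
      have h1 : α ∈ A := by
        apply Algebra.subset_adjoin
        rw [Polynomial.mem_rootSet_of_ne hp0]
        simp [hα]
      have h2 : ζ * α ∈ A := by
        apply Algebra.subset_adjoin
        rw [Polynomial.mem_rootSet_of_ne hp0]
        simp [mul_pow, hα, hζ.pow_eq_one]
      have h3 : ζ ∈ A := by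
        have : ζ = algebraMap ℚ K (1 / m) * ((ζ * α) * α ^ 2) := by
          rw [map_div₀, map_one, map_natCast, ← hα]; field_simp
        rw [this]
        exact A.mul_mem (A.algebraMap_mem _) (A.mul_mem h2 (A.pow_mem h1 2))
      rw [Algebra.adjoin_le_iff]
      rintro x (rfl | hx)
      · exact h3
      · rw [Set.mem_singleton_iff] at hx; rw [hx]; exact h1
  exact IsGalois.of_separable_splitting_field (p := Polynomial.X ^ 3 - Polynomial.C (m : ℚ))
    (Polynomial.separable_X_pow_sub_C _ (by norm_num) (by exact_mod_cast hm))

theorem zeta_rel {K : Type*} [Field K] {ζ : K} (hζ : IsPrimitiveRoot ζ 3) : ζ ^ 2 + ζ + 1 = 0 := by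
  have h3 := hζ.pow_eq_one
  have h1 : ζ - 1 ≠ 0 := sub_ne_zero.2 (hζ.ne_one (by norm_num))
  apply mul_left_cancel₀ h1
  linear_combination h3

theorem root_cases {K : Type*} [Field K] {ζ a b : K} (hζ : ζ ^ 2 + ζ + 1 = 0) (h : a ^ 3 = b ^ 3) :
    a = b ∨ a = ζ * b ∨ a = ζ ^ 2 * b := by
  have : (a - b) * ((a - ζ * b) * (a - ζ ^ 2 * b)) = 0 := by
    linear_combination h + (-(a ^ 2 * b) + a * b ^ 2 * ζ - b ^ 3 * ζ + b ^ 3) * hζ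
  rcases mul_eq_zero.1 this with h | h
  · left; linear_combination h
  · rcases mul_eq_zero.1 h with h | h
    · right; left; linear_combination h
    · right; right; linear_combination h

open IntermediateField in
theorem field_setup {K : Type} [Field K] [NumberField K] {ζ α : K} {m : ℕ} (hm : m ≠ 0) (hζ : IsPrimitiveRoot ζ 3) (hα : α ^ 3 = (m : K))
    (hgen : Algebra.adjoin ℚ ({ζ, α} : Set K) = ⊤) (hnc : ∀ y : ℚ, y ^ 3 ≠ (m : ℚ) ^ 2) :
    ∃ (k : IntermediateField ℚ K) (_ : IsCyclotomicExtension {3} ℚ k) (_ : ζ ∈ k)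
      (σ : K ≃ₐ[k] K) (τ : K ≃ₐ[ℚ] K), Module.finrank k K = 3 ∧ σ α = ζ * α ∧
      (∀ x, σ (σ (σ x)) = x) ∧ (∀ x, σ x = x → x ∈ k) ∧
      (∀ x, algebraMap k K (Algebra.norm k x) = x * σ x * σ (σ x)) ∧
      τ ζ = ζ ^ 2 ∧ (∀ x ∈ k, τ (τ x) = x) ∧ (∀ x, τ (σ x) = σ (σ (τ x))) := by
  classical
  have hG := galK hm hζ hα hgen
  have hmK : (m : K) ≠ 0 := by exact_mod_cast hm
  have hα0 : α ≠ 0 := by rintro rfl; apply hmK; rw [← hα]; norm_num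
  have hz := zeta_rel hζ
  have hz3 := hζ.pow_eq_one
  have hcyc : IsCyclotomicExtension {3} ℚ ℚ⟮ζ⟯ :=
    IsPrimitiveRoot.intermediateField_adjoin_isCyclotomicExtension ℚ hζ
  have hζk : ζ ∈ ℚ⟮ζ⟯ := mem_adjoin_simple_self ℚ ζ
  have hfr : Module.finrank ℚ ℚ⟮ζ⟯ = 2 := by
    rw [IsCyclotomicExtension.finrank (n := 3) ℚ⟮ζ⟯ (Polynomial.cyclotomic.irreducible_rat (by norm_num))]
    decide
  have hext : ∀ f g : K →ₐ[ℚ] K, f ζ = g ζ → f α = g α → f = g := by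
    intro f g h1 h2
    apply AlgHom.ext_of_adjoin_eq_top hgen
    rintro x (rfl | hx)
    · exact h1
    · rw [Set.mem_singleton_iff] at hx; rw [hx]; exact h2
  -- restrict a k-automorphism
  have hfixζ : ∀ g : K ≃ₐ[ℚ⟮ζ⟯] K, g ζ = ζ := fun g => g.commutes ⟨ζ, hζk⟩
  have hextk : ∀ f g : K ≃ₐ[ℚ⟮ζ⟯] K, f α = g α → f = g := by
    intro f g h
    have := hext ((f : K →ₐ[ℚ⟮ζ⟯] K).restrictScalars ℚ) ((g : K →ₐ[ℚ⟮ζ⟯] K).restrictScalars ℚ)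
      (by simp [hfixζ]) (by simpa using h)
    ext x
    simpa using DFunLike.congr_fun this x
  have hαk : α ∉ ℚ⟮ζ⟯ := by
    intro h
    apply hnc (Algebra.norm ℚ (⟨α, h⟩ : ℚ⟮ζ⟯))
    rw [← map_pow]
    have : (⟨α, h⟩ : ℚ⟮ζ⟯) ^ 3 = algebraMap ℚ _ (m : ℚ) := by
      ext; simp [hα]
    rw [this, Algebra.norm_algebraMap, hfr]
  have hσ0 : ∃ g : K ≃ₐ[ℚ⟮ζ⟯] K, g α ≠ α := by
    by_contra! hcon
    have := (IsGalois.mem_bot_iff_fixed (F := ℚ⟮ζ⟯) (E := K) α).2 hcon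
    rw [IntermediateField.mem_bot] at this
    obtain ⟨y, hy⟩ := this
    apply hαk; rw [← hy]; exact y.2
  have hgα : ∀ g : K ≃ₐ[ℚ⟮ζ⟯] K, g α = α ∨ g α = ζ * α ∨ g α = ζ ^ 2 * α := by
    intro g
    apply root_cases hz
    rw [← map_pow, hα, map_natCast]
  have hσ1 : ∃ g : K ≃ₐ[ℚ⟮ζ⟯] K, g α = ζ * α := by
    obtain ⟨g, hg⟩ := hσ0
    rcases hgα g with h | h | h
    · exact absurd h hg
    · exact ⟨g, h⟩
    · refine ⟨g * g, ?_⟩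
      rw [AlgEquiv.mul_apply, h, map_mul, map_pow, hfixζ, h]
      linear_combination (ζ * α) * hz3
  obtain ⟨σ, hσ⟩ := hσ1
  have hσ2 : σ (σ α) = ζ ^ 2 * α := by rw [hσ, map_mul, hfixζ, hσ]; ring
  have hσ3' : σ ^ 3 = 1 := by
    apply hextk
    rw [pow_succ, pow_two, AlgEquiv.mul_apply, AlgEquiv.mul_apply, hσ, map_mul, map_mul, hfixζ, hfixζ, hσ2]
    simp only [AlgEquiv.one_apply]; linear_combination α * hz3
  have hpow : ∀ g : K ≃ₐ[ℚ⟮ζ⟯] K, g = 1 ∨ g = σ ∨ g = σ * σ := by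
    intro g
    rcases hgα g with h | h | h
    · left; apply hextk; simpa using h
    · right; left; apply hextk; rw [h, hσ]
    · right; right; apply hextk; rw [h, AlgEquiv.mul_apply, hσ2]
  have hσne : σ ≠ 1 := by
    intro h
    rw [h, AlgEquiv.one_apply] at hσ
    have : (ζ - 1) * α = 0 := by linear_combination -hσ
    rcases mul_eq_zero.1 this with h | h
    · exact hζ.ne_one (by norm_num) (sub_eq_zero.1 h)
    · exact hα0 h
  have hσord : orderOf σ = 3 := orderOf_eq_prime hσ3' hσne
  have hσσ1 : σ * σ ≠ 1 := by
    rw [← pow_two]; intro h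
    have := orderOf_dvd_of_pow_eq_one h
    rw [hσord] at this; norm_num at this
  have hσσσ : σ * σ ≠ σ := by
    intro h; exact hσne (mul_eq_left.1 h)
  have huniv : (Finset.univ : Finset (K ≃ₐ[ℚ⟮ζ⟯] K)) = {1, σ, σ * σ} := by
    ext g; simp; exact hpow g
  have hrank : Module.finrank ℚ⟮ζ⟯ K = 3 := by
    rw [← IsGalois.card_aut_eq_finrank, Nat.card_eq_fintype_card, ← Finset.card_univ, huniv]
    rw [Finset.card_eq_three]
    exact ⟨1, σ, σ * σ, hσne.symm, hσσ1.symm, hσσσ.symm, rfl⟩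
  have hτ0 : ∃ g : K ≃ₐ[ℚ] K, g ζ ≠ ζ := by
    by_contra! hcon
    have := (IsGalois.mem_bot_iff_fixed (F := ℚ) (E := K) ζ).2 hcon
    rw [IntermediateField.mem_bot] at this
    obtain ⟨y, hy⟩ := this
    rw [← hy] at hz
    have : y ^ 2 + y + 1 = 0 := by
      apply (algebraMap ℚ K).injective
      simpa using hz
    nlinarith [sq_nonneg (2 * y + 1)]
  obtain ⟨τ, hτ⟩ := hτ0
  have hτζ : τ ζ = ζ ^ 2 := by
    have := root_cases (a := τ ζ) (b := 1) hz (by rw [← map_pow, hz3, map_one, one_pow])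
    rcases this with h | h | h
    · exfalso; rw [← map_one τ] at h; exact hζ.ne_one (by norm_num) (τ.injective h)
    · rw [mul_one] at h; exact absurd h hτ
    · rw [mul_one] at h; exact h
  have hττζ : τ (τ ζ) = ζ := by
    rw [hτζ, map_pow, hτζ]; linear_combination ζ * hz3
  refine ⟨ℚ⟮ζ⟯, hcyc, hζk, σ, τ, hrank, hσ, ?_, ?_, ?_, hτζ, ?_, ?_⟩
  · intro x
    have := DFunLike.congr_fun hσ3' x
    simpa [pow_succ] using this
  · intro x hx
    have h1 : ∀ g : K ≃ₐ[ℚ⟮ζ⟯] K, g x = x := by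
      intro g
      rcases hpow g with rfl | rfl | rfl
      · rfl
      · exact hx
      · rw [AlgEquiv.mul_apply, hx, hx]
    have := (IsGalois.mem_bot_iff_fixed (F := ℚ⟮ζ⟯) (E := K) x).2 h1
    rw [IntermediateField.mem_bot] at this
    obtain ⟨y, hy⟩ := this
    rw [← hy]; exact y.2
  · intro x
    rw [Algebra.norm_eq_prod_automorphisms, huniv, Finset.prod_insert, Finset.prod_insert,
      Finset.prod_singleton]
    · simp [mul_assoc]
    · simpa using hσσσ.symm
    · simp only [Finset.mem_insert, Finset.mem_singleton, not_or]
      exact ⟨hσne.symm, hσσ1.symm⟩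
  · intro x hx
    induction hx using IntermediateField.adjoin_induction with
    | mem x hx => rw [Set.mem_singleton_iff] at hx; rw [hx]; exact hττζ
    | algebraMap x => simp
    | add x y _ _ h1 h2 => rw [map_add, map_add, h1, h2]
    | inv x _ h => rw [map_inv₀, map_inv₀, h]
    | mul x y _ _ h1 h2 => rw [map_mul, map_mul, h1, h2]
  · intro x
    have h1 := root_cases (a := τ α) (b := α) hz (by rw [← map_pow, hα, map_natCast])
    have h2 : σ (σ (τ α)) = ζ ^ 2 * τ α := by
      rcases h1 with h | h | h <;> rw [h] <;> simp only [map_mul, map_pow, hfixζ, hσ] <;> ring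
    let σ' : K →ₐ[ℚ] K := (σ : K →ₐ[ℚ⟮ζ⟯] K).restrictScalars ℚ
    have := hext ((τ : K →ₐ[ℚ] K).comp σ') ((σ'.comp σ').comp (τ : K →ₐ[ℚ] K))
      (by simp [σ', hfixζ, hτζ]) (by simp [σ', hσ, hτζ]; rw [h2])
    exact DFunLike.congr_fun this x
end FieldSetup


structure Base {K : Type} [Field K] [NumberField K] (ζ μ : 𝓞 K) (σ τ : 𝓞 K ≃+* 𝓞 K) (m : ℕ) : Prop where
  hz : ζ ^ 2 + ζ + 1 = 0
  sz : σ ζ = ζ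
  tz : τ ζ = ζ ^ 2
  hmu : μ ^ 3 = m
  smu : σ μ = ζ * μ
  s3 : ∀ x, σ (σ (σ x)) = x
  ts : ∀ x, τ (σ x) = σ (σ (τ x))
  tt : ∀ x, σ x = x → τ (τ x) = x
  F1 : ∀ I : Ideal (𝓞 K), ∃ a, σ a = a ∧ I * I.map σ * (I.map σ).map σ = Ideal.span {a}
  F2 : ∀ u : 𝓞 K, IsUnit u → σ u = u → ∃ j : ℕ, u = ζ ^ j ∨ u = - ζ ^ j
  F3 : ∀ P : Ideal (𝓞 K), P.IsPrime → P ≠ ⊥ → P.map σ = P →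
    (∃ a, σ a = a ∧ P = Ideal.span {a} ∧ ∃ Q, Ideal.absNorm P = Q ^ 3) ∨ 3 ∈ P ∨ μ ∈ P
  F3' : ∀ P : Ideal (𝓞 K), P.IsPrime → P ≠ ⊥ → P.map σ = P → 3 ∈ P → P.map τ = P
  F4 : ∀ x : 𝓞 K, σ x = x → ∀ n : ℕ, x ^ 3 = n → ∃ y : ℚ, y ^ 3 = (n : ℚ) ^ 2
  nrm : ∀ n : ℕ, Ideal.absNorm (Ideal.span {(n : 𝓞 K)}) = n ^ 6

theorem ideal_eq_of_le_absNorm {K : Type} [Field K] [NumberField K] {I J : Ideal (𝓞 K)} (h : I ≤ J) (hI : I ≠ ⊥)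
    (hn : Ideal.absNorm I = Ideal.absNorm J) : I = J := by
  obtain ⟨L, hL⟩ := Ideal.dvd_iff_le.2 h
  have h1 : Ideal.absNorm I = Ideal.absNorm J * Ideal.absNorm L := by rw [hL, map_mul]
  have h2 : Ideal.absNorm I ≠ 0 := by rwa [Ne, Ideal.absNorm_eq_zero_iff]
  rw [← hn] at h1
  have h3 : Ideal.absNorm L = 1 := by
    apply Nat.eq_of_mul_eq_mul_left (Nat.pos_of_ne_zero h2); rw [← h1, mul_one]
  rw [Ideal.absNorm_eq_one_iff] at h3
  rw [hL, h3, Ideal.mul_top]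

section
variable {K k : Type} [Field K] [NumberField K] [Field k] [NumberField k] [Algebra k K]

theorem baseF1 (σ : 𝓞 K ≃+* 𝓞 K)
    (hrank : Module.finrank k K = 3)
    (hnorm : ∀ x : 𝓞 K, algebraMap (𝓞 k) (𝓞 K) (Algebra.intNorm (𝓞 k) (𝓞 K) x) = x * σ x * σ (σ x))
    (I : Ideal (𝓞 K)) : (Ideal.relNorm (𝓞 k) I).map (algebraMap (𝓞 k) (𝓞 K)) = I * I.map σ * (I.map σ).map σ := by
  by_cases hI : I = ⊥
  · rw [hI]; simp
  have hr : Module.finrank (𝓞 k) (𝓞 K) = 3 := by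
    rw [← hrank]; exact (IsFractionRing.finrank_eq (𝓞 k) k (𝓞 K) K).symm
  apply ideal_eq_of_le_absNorm
  · rw [Ideal.map_relNorm, Ideal.span_le]
    rintro _ ⟨x, hx, rfl⟩
    rw [Function.comp_apply, hnorm]
    exact Ideal.mul_mem_mul (Ideal.mul_mem_mul hx (Ideal.mem_map_of_mem _ hx))
      (Ideal.mem_map_of_mem _ (Ideal.mem_map_of_mem _ hx))
  · rw [Ne, Ideal.map_eq_bot_iff_of_injective (FaithfulSMul.algebraMap_injective _ _), Ideal.relNorm_eq_bot_iff]
    exact hI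
  · rw [Ideal.absNorm_algebraMap, Ideal.absNorm_relNorm, hr, map_mul, map_mul]
    simp only [absNorm_map_equiv]
    ring

theorem baseF3aux [IsPrincipalIdealRing (𝓞 k)] (σ : 𝓞 K ≃+* 𝓞 K)
    (hrank : Module.finrank k K = 3)
    (hnorm : ∀ x : 𝓞 K, algebraMap (𝓞 k) (𝓞 K) (Algebra.intNorm (𝓞 k) (𝓞 K) x) = x * σ x * σ (σ x))
    (P : Ideal (𝓞 K)) (hP : P.IsPrime) (hP0 : P ≠ ⊥) (hs : P.map σ = P) :
    ∃ (a : 𝓞 k) (f : ℕ), P.comap (algebraMap (𝓞 k) (𝓞 K)) = Ideal.span {a} ∧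
      P ^ 3 = Ideal.span {algebraMap (𝓞 k) (𝓞 K) a} ^ f ∧
      (P = Ideal.span {algebraMap (𝓞 k) (𝓞 K) a} ∨ Ideal.absNorm P = Ideal.absNorm (P.comap (algebraMap (𝓞 k) (𝓞 K)))) := by
  have h1 := baseF1 (k := k) σ hrank hnorm P
  rw [hs, hs] at h1
  set p := P.comap (algebraMap (𝓞 k) (𝓞 K)) with hp
  have hLO : P.LiesOver p := ⟨rfl⟩
  have hpp : p.IsPrime := Ideal.comap_isPrime _ _
  obtain ⟨f, hf⟩ := Ideal.exists_relNorm_eq_pow_of_isPrime P p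
  obtain ⟨a, ha⟩ := (IsPrincipalIdealRing.principal p).principal
  have ha' : p = Ideal.span {a} := ha
  have hmapp : p.map (algebraMap (𝓞 k) (𝓞 K)) = Ideal.span {algebraMap (𝓞 k) (𝓞 K) a} := by
    rw [ha', Ideal.map_span, Set.image_singleton]
  have h2 : P ^ 3 = Ideal.span {algebraMap (𝓞 k) (𝓞 K) a} ^ f := by
    rw [← hmapp, ← Ideal.map_pow, ← hf, h1]; ring
  refine ⟨a, f, ha', h2, ?_⟩
  have hPprime : Prime P := Ideal.prime_of_isPrime hP0 hP
  have hf0 : f ≠ 0 := by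
    rintro rfl
    rw [pow_zero, Ideal.one_eq_top] at h2
    have : P ^ 3 ≤ P := Ideal.pow_le_self (by norm_num)
    rw [h2] at this
    exact hP.ne_top (top_le_iff.1 this)
  have h3 : Ideal.span {algebraMap (𝓞 k) (𝓞 K) a} ∣ P ^ 3 := by
    rw [h2]; exact dvd_pow_self _ hf0
  obtain ⟨e, he, hea⟩ := (dvd_prime_pow hPprime 3).1 h3
  rw [associated_iff_eq] at hea
  rw [hea, ← pow_mul] at h2
  have h4 : 3 = e * f := by
    have hu : ¬ IsUnit P := hPprime.not_isUnit
    exact pow_injective_of_not_isUnit hu hP0 h2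
  have h5 : f ∣ 3 := ⟨e, by rw [h4]; ring⟩
  rcases (Nat.dvd_prime Nat.prime_three).1 h5 with rfl | rfl
  · right
    rw [← Ideal.absNorm_relNorm (𝓞 k) (𝓞 K) P, hf, pow_one]
  · left
    have : e = 1 := by omega
    rw [hea, this, pow_one]

theorem surj_of_absNorm (P : Ideal (𝓞 K)) (hP : P.IsPrime) (hP0 : P ≠ ⊥)
    (h : Ideal.absNorm P = Ideal.absNorm (P.comap (algebraMap (𝓞 k) (𝓞 K)))) (x : 𝓞 K) :
    ∃ y : 𝓞 k, x - algebraMap (𝓞 k) (𝓞 K) y ∈ P := by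
  set p := P.comap (algebraMap (𝓞 k) (𝓞 K)) with hp
  let φ : 𝓞 k ⧸ p →+* 𝓞 K ⧸ P := Ideal.quotientMap P (algebraMap (𝓞 k) (𝓞 K)) le_rfl
  have hinj : Function.Injective φ := Ideal.quotientMap_injective
  have hfin : Finite (𝓞 K ⧸ P) := Ideal.finiteQuotientOfFreeOfNeBot P hP0
  have hfin' : Finite (𝓞 k ⧸ p) := Finite.of_injective φ hinj
  have hcard : Nat.card (𝓞 k ⧸ p) = Nat.card (𝓞 K ⧸ P) := by
    rw [Ideal.absNorm_apply, Ideal.absNorm_apply] at h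
    exact h.symm
  have hsurj : Function.Surjective φ := by
    exact ((Nat.bijective_iff_injective_and_card φ).2 ⟨hinj, hcard⟩).2
  obtain ⟨y, hy⟩ := hsurj (Ideal.Quotient.mk P x)
  obtain ⟨y, rfl⟩ := Ideal.Quotient.mk_surjective y
  refine ⟨y, ?_⟩
  rw [← Ideal.Quotient.eq, ← hy]
  simp [φ]

theorem base_exists {ζ α : K} {m : ℕ} (hm : m ≠ 0) (hζ : IsPrimitiveRoot ζ 3) (hα : α ^ 3 = (m : K))
    (hgen : Algebra.adjoin ℚ ({ζ, α} : Set K) = ⊤) (hnc : ∀ y : ℚ, y ^ 3 ≠ (m : ℚ) ^ 2) :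
    ∃ (z μ : 𝓞 K) (σ τ : 𝓞 K ≃+* 𝓞 K), Base z μ σ τ m := by
  obtain ⟨k, hcyc, hζk, σ, τ, hrank, hσα, hσ3, hfix, hnorm, hτζ, hττ, hτσ⟩ :=
    field_setup hm hζ hα hgen hnc
  have hz := zeta_rel hζ
  have hpid : IsPrincipalIdealRing (𝓞 k) := IsCyclotomicExtension.Rat.three_pid k
  have hfr : Module.finrank ℚ k = 2 := by
    rw [IsCyclotomicExtension.finrank (n := 3) k (Polynomial.cyclotomic.irreducible_rat (by norm_num))]
    decide
  have hσζ : σ ζ = ζ := σ.commutes ⟨ζ, hζk⟩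
  let s : 𝓞 K ≃+* 𝓞 K := RingOfIntegers.mapRingEquiv σ.toRingEquiv
  let t : 𝓞 K ≃+* 𝓞 K := RingOfIntegers.mapRingEquiv τ.toRingEquiv
  have hs : ∀ x : 𝓞 K, ((s x : 𝓞 K) : K) = σ (x : K) := fun x => rfl
  have ht : ∀ x : 𝓞 K, ((t x : 𝓞 K) : K) = τ (x : K) := fun x => rfl
  let z : 𝓞 K := ⟨ζ, IsIntegral.of_pow (n := 3) (by norm_num) (by rw [hζ.pow_eq_one]; exact isIntegral_one)⟩
  let μ : 𝓞 K := ⟨α, IsIntegral.of_pow (n := 3) (by norm_num) (by rw [hα]; simpa using isIntegral_algebraMap (R := ℤ) (A := K) (x := (m : ℤ)))⟩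
  have hzv : (z : K) = ζ := rfl
  have hμv : (μ : K) = α := rfl
  have hlift : ∀ x : 𝓞 K, s x = x → ∃ y : 𝓞 k, algebraMap (𝓞 k) (𝓞 K) y = x := by
    intro x hx
    have h1 : (x : K) ∈ k := hfix _ (by rw [← hs, hx])
    refine ⟨⟨⟨x, h1⟩, ?_⟩, ?_⟩
    · have : IsIntegral ℤ (algebraMap k K ⟨x, h1⟩) := x.2
      exact (isIntegral_algebraMap_iff (algebraMap k K).injective).1 this
    · rfl
  have hsk : ∀ y : 𝓞 k, s (algebraMap (𝓞 k) (𝓞 K) y) = algebraMap (𝓞 k) (𝓞 K) y := by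
    intro y
    apply RingOfIntegers.ext
    rw [hs]
    exact σ.commutes (y : k)
  have hN : ∀ x : 𝓞 K, algebraMap (𝓞 k) (𝓞 K) (Algebra.intNorm (𝓞 k) (𝓞 K) x) = x * s x * s (s x) := by
    intro x
    apply RingOfIntegers.ext
    have h1 : ((algebraMap (𝓞 k) (𝓞 K) (Algebra.intNorm (𝓞 k) (𝓞 K) x) : 𝓞 K) : K) =
      algebraMap k K (algebraMap (𝓞 k) k (Algebra.intNorm (𝓞 k) (𝓞 K) x)) := rfl
    rw [h1, Algebra.algebraMap_intNorm (A := 𝓞 k) (K := k) (L := K) (B := 𝓞 K), hnorm]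
    rfl
  have hz' : z ^ 2 + z + 1 = 0 := by apply RingOfIntegers.ext; simp only [map_add, map_pow, map_one, map_zero]; exact hz
  have hmu : μ ^ 3 = m := by apply RingOfIntegers.ext; simp only [map_pow, map_natCast]; exact hα
  have hsmu : s μ = z * μ := by apply RingOfIntegers.ext; exact hσα
  refine ⟨z, μ, s, t, hz', ?_, ?_, hmu, hsmu, ?_, ?_, ?_, ?_, ?_, ?_, ?_, ?_, ?_⟩
  · apply RingOfIntegers.ext; exact hσζ
  · apply RingOfIntegers.ext; rw [ht]; simp only [map_pow]; exact hτζ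
  · intro x; apply RingOfIntegers.ext; exact hσ3 x
  · intro x; apply RingOfIntegers.ext; exact hτσ x
  · intro x hx; apply RingOfIntegers.ext; exact hττ _ (hfix _ (by rw [← hs, hx]))
  · intro I
    obtain ⟨a, ha⟩ := (IsPrincipalIdealRing.principal (Ideal.relNorm (𝓞 k) I)).principal
    refine ⟨algebraMap _ _ a, hsk a, ?_⟩
    rw [← baseF1 (k := k) s hrank hN I, ha, Ideal.submodule_span_eq, Ideal.map_span, Set.image_singleton]
  · intro u hu hsu
    obtain ⟨y, hy⟩ := hlift u hsu
    obtain ⟨v, huv⟩ := hu.exists_right_inv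
    have hsv : s v = v := by
      have h1 := congrArg s huv
      rw [map_mul, hsu, map_one] at h1
      exact mul_left_cancel₀ hu.ne_zero (h1.trans huv.symm)
    obtain ⟨y', hy'⟩ := hlift v hsv
    have hyy : y * y' = 1 := by
      apply FaithfulSMul.algebraMap_injective (𝓞 k) (𝓞 K)
      rw [map_mul, hy, hy', huv, map_one]
    have hζ' : IsPrimitiveRoot (⟨ζ, hζk⟩ : k) 3 :=
      IsPrimitiveRoot.of_map_of_injective (f := algebraMap k K) hζ (algebraMap k K).injective
    have hmem := IsCyclotomicExtension.Rat.Three.Units.mem hζ' (Units.mkOfMulEqOne y y' hyy)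
    have hzz : algebraMap (𝓞 k) (𝓞 K) hζ'.toInteger = z := rfl
    simp only [List.mem_cons, List.not_mem_nil, or_false] at hmem
    have key : ∀ w : (𝓞 k)ˣ, Units.mkOfMulEqOne y y' hyy = w → u = algebraMap (𝓞 k) (𝓞 K) w := by
      intro w hw; rw [← hw, ← hy]; rfl
    rcases hmem with h | h | h | h | h | h <;> have h' := key _ h
    · exact ⟨0, Or.inl (by simpa using h')⟩
    · exact ⟨0, Or.inr (by simpa using h')⟩
    · exact ⟨1, Or.inl (by simpa [hzz] using h')⟩
    · exact ⟨1, Or.inr (by simpa [hzz] using h')⟩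
    · exact ⟨2, Or.inl (by simpa [hzz] using h')⟩
    · exact ⟨2, Or.inr (by simpa [hzz] using h')⟩
  · intro P hP hP0 hsP
    obtain ⟨a, f, h1, h2, h3⟩ := baseF3aux (k := k) s hrank hN P hP hP0 hsP
    rcases h3 with h3 | h3
    · left
      refine ⟨_, hsk a, h3, Ideal.absNorm (Ideal.span {a}), ?_⟩
      have hr : Module.finrank (𝓞 k) (𝓞 K) = 3 := by
        rw [← hrank]; exact (IsFractionRing.finrank_eq (𝓞 k) k (𝓞 K) K).symm
      have hab := Ideal.absNorm_algebraMap (R := 𝓞 k) (S := 𝓞 K) (Ideal.span {a})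
      rw [hr, Ideal.map_span, Set.image_singleton, ← h3] at hab
      exact hab
    · right
      obtain ⟨y, hy⟩ := surj_of_absNorm P hP hP0 h3 μ
      have h4 : s (μ - algebraMap (𝓞 k) (𝓞 K) y) ∈ P := by
        rw [← hsP]; exact Ideal.mem_map_of_mem _ hy
      rw [map_sub, hsk, hsmu] at h4
      have h5 : (z - 1) * μ ∈ P := by
        have := P.sub_mem h4 hy
        convert this using 1; ring
      rcases hP.mem_or_mem h5 with h | h
      · left
        have h6 : (3 : 𝓞 K) = (-z - 2) * (z - 1) := by linear_combination hz'
        rw [h6]; exact P.mul_mem_left _ h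
      · right; exact h
  · intro P hP hP0 hsP h3P
    obtain ⟨a, f, h1, h2, h3⟩ := baseF3aux (k := k) s hrank hN P hP hP0 hsP
    have hζ' : IsPrimitiveRoot (⟨ζ, hζk⟩ : k) 3 :=
      IsPrimitiveRoot.of_map_of_injective (f := algebraMap k K) hζ (algebraMap k K).injective
    have hzz : algebraMap (𝓞 k) (𝓞 K) hζ'.toInteger = z := rfl
    have hl : Prime (hζ'.toInteger - 1) := hζ'.zeta_sub_one_prime'
    have hzP : z - 1 ∈ P := by
      have h6 : (3 : 𝓞 K) = (-z ^ 2) * (z - 1) ^ 2 := by linear_combination (z ^ 2 - 3 * z + 3) * hz'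
      rw [h6] at h3P
      rcases hP.mem_or_mem h3P with h | h
      · exfalso
        apply hP.ne_top
        rw [Ideal.eq_top_iff_one]
        have : (1 : 𝓞 K) = (- z) * (- z ^ 2) := by linear_combination -(z - 1) * hz'
        rw [this]; exact P.mul_mem_left _ h
      · exact hP.mem_of_pow_mem _ h
    have hmax : (Ideal.span {hζ'.toInteger - 1}).IsMaximal := by
      apply Ring.DimensionLEOne.maximalOfPrime
      · rw [Ne, Ideal.span_singleton_eq_bot]; exact hl.ne_zero
      · rwa [Ideal.span_singleton_prime hl.ne_zero]
    have heq : Ideal.span {hζ'.toInteger - 1} = Ideal.span {a} := by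
      rw [← h1]
      apply hmax.eq_of_le (Ideal.comap_isPrime _ P).ne_top
      rw [Ideal.span_singleton_le_iff_mem, Ideal.mem_comap, map_sub, hzz, map_one]
      exact hzP
    have h7 : Ideal.span {algebraMap (𝓞 k) (𝓞 K) a} = Ideal.span {z - 1} := by
      have := congrArg (Ideal.map (algebraMap (𝓞 k) (𝓞 K))) heq
      rw [Ideal.map_span, Ideal.map_span, Set.image_singleton, Set.image_singleton, map_sub, map_one, hzz] at this
      exact this.symm
    have h8 : (Ideal.span {z - 1}).map t = Ideal.span {z - 1} := by
      rw [Ideal.map_span, Set.image_singleton]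
      have htz : t (z - 1) = (z - 1) * (- z ^ 2) := by
        rw [map_sub, map_one]
        have : t z = z ^ 2 := by apply RingOfIntegers.ext; rw [ht]; simp only [map_pow]; exact hτζ
        rw [this]; linear_combination (z - 1) * hz'
      have htz' : t (z - 1) = (z - 1) * (- z ^ 2) := htz
      change Ideal.span {t (z - 1)} = _
      rw [htz', Ideal.span_singleton_mul_right_unit]
      exact IsUnit.of_mul_eq_one (-z) (by linear_combination (z - 1) * hz')
    have h9 : (P.map t) ^ 3 = P ^ 3 := by
      rw [← Ideal.map_pow, h2, h7, Ideal.map_pow, h8]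
    exact (pow_left_inj (by norm_num)).1 h9
  · intro x hx n hn
    obtain ⟨y, hy⟩ := hlift x hx
    refine ⟨Algebra.norm ℚ (y : k), ?_⟩
    have h1 : (y : k) ^ 3 = algebraMap ℚ k (n : ℚ) := by
      have : y ^ 3 = n := by
        apply FaithfulSMul.algebraMap_injective (𝓞 k) (𝓞 K)
        rw [map_pow, hy, hn, map_natCast]
      have := congrArg (algebraMap (𝓞 k) k) this
      simpa using this
    rw [← map_pow, h1, Algebra.norm_algebraMap, hfr]
  · intro n
    rw [Ideal.absNorm_span_singleton]
    have : (n : 𝓞 K) = algebraMap ℤ (𝓞 K) n := by simp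
    rw [this, Algebra.norm_algebraMap, RingOfIntegers.rank]
    have h6 : Module.finrank ℚ K = 6 := by
      rw [← Module.finrank_mul_finrank ℚ k K, hfr, hrank]
    rw [h6, Int.natAbs_pow]; simp
end


section QPrimes
variable {K : Type} [Field K] [NumberField K] {ζ μ : 𝓞 K} {σ τ : 𝓞 K ≃+* 𝓞 K} {m : ℕ}

theorem nat_mem_of_coprime {P : Ideal (𝓞 K)} (hP : P.IsPrime) {a b : ℕ} (h : Nat.Coprime a b)
    (ha : (a : 𝓞 K) ∈ P) : (b : 𝓞 K) ∉ P := by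
  intro hb
  apply hP.ne_top
  rw [Ideal.eq_top_iff_one]
  have h1 := Nat.isCoprime_iff_coprime.2 h
  obtain ⟨u, v, huv⟩ := h1
  have h2 := congrArg (fun z : ℤ => (z : 𝓞 K)) huv
  push_cast at h2
  rw [← h2]
  exact P.add_mem (P.mul_mem_left _ ha) (P.mul_mem_left _ hb)

open UniqueFactorizationMonoid in
theorem three_le_count (P M Q A : Ideal (𝓞 K)) (hP : P.IsPrime) (hP0 : P ≠ ⊥) (hM0 : M ≠ ⊥) (hQ0 : Q ≠ ⊥)
    (hA0 : A ≠ ⊥) (t : ℕ) (ht : t = 1 ∨ t = 2) (h : M ^ 3 = Q ^ t * A) (hPQ : Q ≤ P) (hPA : ¬ A ≤ P) :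
    P ^ 3 ∣ Q := by
  classical
  have hPp : Prime P := Ideal.prime_of_isPrime hP0 hP
  have h1 : (normalizedFactors (M ^ 3)).count P = (normalizedFactors (Q ^ t * A)).count P := by rw [h]
  rw [normalizedFactors_mul (pow_ne_zero _ hQ0) hA0, normalizedFactors_pow, normalizedFactors_pow,
    Multiset.count_add, Multiset.count_nsmul, Multiset.count_nsmul] at h1
  have h2 : (normalizedFactors A).count P = 0 := by
    rw [Multiset.count_eq_zero]
    intro hm
    exact hPA (Ideal.dvd_iff_le.1 (dvd_of_mem_normalizedFactors hm))
  have h3 : 1 ≤ (normalizedFactors Q).count P := by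
    rw [Multiset.one_le_count_iff_mem, Ideal.mem_normalizedFactors_iff hQ0]
    exact ⟨hP, hPQ⟩
  have h4 : 3 ≤ (normalizedFactors Q).count P := by
    rw [h2] at h1
    rcases ht with rfl | rfl <;> omega
  rw [dvd_iff_normalizedFactors_le_normalizedFactors (pow_ne_zero _ hP0) hQ0, normalizedFactors_pow,
    normalizedFactors_irreducible hPp.irreducible, normalize_eq, Multiset.nsmul_singleton]
  exact Multiset.le_count_iff_replicate_le.1 h4

theorem exists_prime_over (B : Base ζ μ σ τ m) (q : ℕ) (hq : q.Prime) (hq3 : q % 3 = 2) (t m' : ℕ) (ht : t = 1 ∨ t = 2)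
    (hm : m = q ^ t * m') (hm' : ¬ q ∣ m') :
    ∃ P : Ideal (𝓞 K), P.IsPrime ∧ P ≠ ⊥ ∧ P ^ 3 = Ideal.span {(q : 𝓞 K)} ∧ Ideal.absNorm P = q ^ 2 ∧
      P.map σ = P ∧ P.map τ = P ∧ ∀ P' : Ideal (𝓞 K), P'.IsPrime → (q : 𝓞 K) ∈ P' → P' = P := by
  have hq0 : (q : 𝓞 K) ≠ 0 := by exact_mod_cast hq.ne_zero
  have hm0' : m' ≠ 0 := by rintro rfl; exact hm' (dvd_zero _)
  have hm0 : m ≠ 0 := by rw [hm]; exact mul_ne_zero (pow_ne_zero _ hq.ne_zero) hm0'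
  have hnt : Ideal.span {(q : 𝓞 K)} ≠ ⊤ := by
    intro h
    have := B.nrm q
    rw [h, Ideal.absNorm_top] at this
    exact hq.one_lt.ne' ((Nat.pow_eq_one.1 this.symm).resolve_right (by norm_num))
  obtain ⟨P, hPm, hPq⟩ := Ideal.exists_le_maximal _ hnt
  have hP : P.IsPrime := hPm.isPrime
  have hqP : (q : 𝓞 K) ∈ P := hPq (Ideal.mem_span_singleton_self _)
  have hP0 : P ≠ ⊥ := by
    rintro rfl; exact hq0 (Ideal.mem_bot.1 hqP)
  have hcop : Nat.Coprime q m' := (Nat.Prime.coprime_iff_not_dvd hq).2 hm'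
  have hd : P ^ 3 ∣ Ideal.span {(q : 𝓞 K)} := by
    apply three_le_count P (Ideal.span {μ}) (Ideal.span {(q : 𝓞 K)}) (Ideal.span {(m' : 𝓞 K)}) hP hP0
    · rw [Ne, Ideal.span_singleton_eq_bot]
      rintro rfl
      have := B.hmu
      rw [zero_pow (by norm_num)] at this
      exact hm0 (by exact_mod_cast this.symm)
    · rwa [Ne, Ideal.span_singleton_eq_bot]
    · rw [Ne, Ideal.span_singleton_eq_bot]; exact_mod_cast hm0'
    · exact ht
    · rw [Ideal.span_singleton_pow, Ideal.span_singleton_pow, Ideal.span_singleton_mul_span_singleton, B.hmu, hm]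
      push_cast; rfl
    · exact hPq
    · rw [Ideal.span_singleton_le_iff_mem]
      exact nat_mem_of_coprime hP hcop hqP
  have hnd : Ideal.absNorm P ^ 3 ∣ q ^ 6 := by
    rw [← B.nrm q, ← map_pow]
    exact map_dvd Ideal.absNorm hd
  have hnd2 : Ideal.absNorm P ∣ q ^ 2 := by
    rw [show q ^ 6 = (q ^ 2) ^ 3 by ring] at hnd
    exact (Nat.pow_dvd_pow_iff (by norm_num)).1 hnd
  let _ : Field (𝓞 K ⧸ P) := Ideal.Quotient.field P
  have hfin : Finite (𝓞 K ⧸ P) := Ideal.finiteQuotientOfFreeOfNeBot P hP0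
  have h3P : (3 : 𝓞 K ⧸ P) ≠ 0 := by
    have : ((3 : ℕ) : 𝓞 K) ∉ P := nat_mem_of_coprime hP (by
      rw [Nat.coprime_comm, Nat.coprime_primes Nat.prime_three hq]; rintro rfl; omega) hqP
    intro h; apply this
    rw [← Ideal.Quotient.eq_zero_iff_mem, map_natCast]; exact_mod_cast h
  have h3d := three_dvd_card B.hz (Ideal.Quotient.mk P) h3P
  have hcd : Nat.card (𝓞 K ⧸ P) = Ideal.absNorm P := (Ideal.absNorm_apply P).symm
  rw [hcd] at h3d
  have hN : Ideal.absNorm P = q ^ 2 := by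
    obtain ⟨i, hi, hpi⟩ := (Nat.dvd_prime_pow hq).1 hnd2
    interval_cases i
    · exfalso; rw [pow_zero, Ideal.absNorm_eq_one_iff] at hpi; exact hP.ne_top hpi
    · exfalso; rw [hpi, pow_one] at h3d; omega
    · exact hpi
  have hcube : P ^ 3 = Ideal.span {(q : 𝓞 K)} := by
    symm
    apply ideal_eq_of_le_absNorm (Ideal.dvd_iff_le.1 hd)
    · rwa [Ne, Ideal.span_singleton_eq_bot]
    · rw [B.nrm, map_pow, hN]; ring
  have huniq : ∀ P' : Ideal (𝓞 K), P'.IsPrime → (q : 𝓞 K) ∈ P' → P' = P := by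
    intro P' hP' hqP'
    have h1 : P ^ 3 ≤ P' := by rw [hcube, Ideal.span_singleton_le_iff_mem]; exact hqP'
    have h2 : P ≤ P' := hP'.le_of_pow_le h1
    exact (hPm.eq_of_le hP'.ne_top h2).symm
  refine ⟨P, hP, hP0, hcube, hN, ?_, ?_, huniq⟩
  · apply huniq _ (map_equiv_isPrime σ P hP)
    have := Ideal.mem_map_of_mem σ hqP
    rwa [map_natCast] at this
  · apply huniq _ (map_equiv_isPrime τ P hP)
    have := Ideal.mem_map_of_mem τ hqP
    rwa [map_natCast] at this

structure QChar (ζ : 𝓞 K) (σ τ : 𝓞 K ≃+* 𝓞 K) (q : ℕ) (P : Ideal (𝓞 K)) (X : 𝓞 K →* 𝓞 K) : Prop where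
  prime : P.IsPrime
  ne_bot : P ≠ ⊥
  cube : P ^ 3 = Ideal.span {(q : 𝓞 K)}
  hs : P.map σ = P
  ht : P.map τ = P
  uniq : ∀ P' : Ideal (𝓞 K), P'.IsPrime → (q : 𝓞 K) ∈ P' → P' = P
  c3 : ∀ x, x ∉ P → X x ^ 3 = 1
  Xs : ∀ x, X (σ x) = X x
  Xt : ∀ x, X (τ x) = X x ^ 2
  Xn : X (-1) = 1
  Xz : X ζ = ζ ^ ((q ^ 2 - 1) / 3)
  recip : ∀ (κ : Type) [Field κ] [Fintype κ] (π : 𝓞 K →+* κ) (χ : MulChar κ (𝓞 K)), (3 : κ) ≠ 0 →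
    IsCub ζ π χ → (q : κ) ≠ 0 → X (jacobiSum χ χ) = χ (q : κ)

theorem three_ne_zero_quot {P : Ideal (𝓞 K)} (h : ((3 : ℕ) : 𝓞 K) ∉ P) : (3 : 𝓞 K ⧸ P) ≠ 0 := by
  intro h'; apply h
  rw [← Ideal.Quotient.eq_zero_iff_mem, map_natCast]; exact_mod_cast h'

theorem qchar_exists (B : Base ζ μ σ τ m) (q : ℕ) (hq : q.Prime) (hq3 : q % 3 = 2) (t m' : ℕ) (ht : t = 1 ∨ t = 2)
    (hm : m = q ^ t * m') (hm' : ¬ q ∣ m') : ∃ P X, QChar ζ σ τ q P X := by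
  obtain ⟨P, hP, hP0, hcube, hN, hPs, hPt, huniq⟩ := exists_prime_over B q hq hq3 t m' ht hm hm'
  have hPm : P.IsMaximal := hP.isMaximal hP0
  let _ : Field (𝓞 K ⧸ P) := Ideal.Quotient.field P
  have hfin : Finite (𝓞 K ⧸ P) := Ideal.finiteQuotientOfFreeOfNeBot P hP0
  let _ : Fintype (𝓞 K ⧸ P) := Fintype.ofFinite _
  have hqP : (q : 𝓞 K) ∈ P := by
    have : P ^ 3 ≤ P := Ideal.pow_le_self (by norm_num)
    apply this; rw [hcube]; exact Ideal.mem_span_singleton_self _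
  have h3P : (3 : 𝓞 K ⧸ P) ≠ 0 := by
    apply three_ne_zero_quot
    exact nat_mem_of_coprime hP (by
      rw [Nat.coprime_comm, Nat.coprime_primes Nat.prime_three hq]; rintro rfl; omega) hqP
  obtain ⟨χ, hχ⟩ := cub_exists B.hz (Ideal.Quotient.mk P) h3P
  have hcard : Nat.card (𝓞 K ⧸ P) = q ^ 2 := by rw [← hN]; exact (Ideal.absNorm_apply P).symm
  have hz3 := zeta_cube B.hz
  have hgal : ∀ (g : 𝓞 K ≃+* 𝓞 K), P.map g = P → (g ζ = ζ ∨ g ζ = ζ ^ 2) → ∀ x,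
      χ (Ideal.Quotient.mk P (g x)) = g (χ (Ideal.Quotient.mk P x)) := by
    intro g hg hgz x
    have := IsCub.galois B.hz h3P hχ hχ h3P (g : 𝓞 K →+* 𝓞 K)
      (Ideal.quotientEquiv P P g hg.symm) (fun x => rfl) hgz (Ideal.Quotient.mk P x)
    exact this
  refine ⟨P, (χ : (𝓞 K ⧸ P) →* 𝓞 K).comp (Ideal.Quotient.mk P : 𝓞 K →* 𝓞 K ⧸ P), hP, hP0, hcube, hPs, hPt, huniq, ?_, ?_, ?_, ?_, ?_, ?_⟩
  · intro x hx
    have hx' : Ideal.Quotient.mk P x ≠ 0 := by rwa [Ne, Ideal.Quotient.eq_zero_iff_mem]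
    have h1 := hχ.cube B.hz h3P
    have : (χ ^ 3) (Ideal.Quotient.mk P x) = 1 := by
      rw [h1, MulChar.one_apply (Ne.isUnit hx')]
    rwa [MulChar.pow_apply' _ (by norm_num)] at this
  · intro x
    change χ (Ideal.Quotient.mk P (σ x)) = χ (Ideal.Quotient.mk P x)
    rw [hgal σ hPs (Or.inl B.sz)]
    rcases hχ.val (Ideal.Quotient.mk P x) with h | h | h | h <;> rw [h] <;> simp [B.sz]
  · intro x
    change χ (Ideal.Quotient.mk P (τ x)) = χ (Ideal.Quotient.mk P x) ^ 2
    rw [hgal τ hPt (Or.inr B.tz)]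
    rcases hχ.val (Ideal.Quotient.mk P x) with h | h | h | h <;> rw [h] <;> simp [B.tz]
  · change χ (Ideal.Quotient.mk P (-1)) = 1
    rw [map_neg, map_one]; exact hχ.neg_one B.hz h3P
  · change χ (Ideal.Quotient.mk P ζ) = _
    apply InMu.ext B.hz (Ideal.Quotient.mk P) h3P (hχ.val _)
    · generalize (q ^ 2 - 1) / 3 = n
      induction n with
      | zero => right; left; simp
      | succ n ih => rw [pow_succ]; exact InMu.mul B.hz ih (Or.inr (Or.inr (Or.inl rfl)))
    · rw [hχ.red, hcard, map_pow]
  · intro κ _ _ π χ' h3 h' hqκ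
    have hch : CharP (𝓞 K ⧸ P) q := by
      have : Fact q.Prime := ⟨hq⟩
      have h0 : (q : 𝓞 K ⧸ P) = 0 := by
        rw [← map_natCast (Ideal.Quotient.mk P)]; exact Ideal.Quotient.eq_zero_iff_mem.2 hqP
      exact (CharP.charP_iff_prime_eq_zero hq).2 h0
    exact recip B.hz h3 h' h3P hχ q hq hq3 hcard hqκ
end QPrimes


section ClassLemmas
variable {R : Type} [CommRing R] [IsDedekindDomain R]

open Classical in
noncomputable def cl (I : Ideal R) : ClassGroup R :=
  if h : I ≠ ⊥ then ClassGroup.mk0 ⟨I, mem_nonZeroDivisors_iff_ne_zero.2 h⟩ else 1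

theorem cl_def {I : Ideal R} (h : I ≠ ⊥) : cl I = ClassGroup.mk0 ⟨I, mem_nonZeroDivisors_iff_ne_zero.2 h⟩ := by
  rw [cl, dif_pos h]

theorem cl_mul {I J : Ideal R} (hI : I ≠ ⊥) (hJ : J ≠ ⊥) : cl (I * J) = cl I * cl J := by
  rw [cl_def hI, cl_def hJ, cl_def (mul_ne_zero hI hJ), ← map_mul]; rfl

theorem cl_span (x : R) : cl (Ideal.span {x}) = 1 := by
  by_cases h : Ideal.span {x} = ⊥
  · rw [cl, dif_neg (not_not.2 h)]
  · rw [cl_def h, ClassGroup.mk0_eq_one_iff]; exact ⟨x, rfl⟩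

theorem cl_one {I : Ideal R} (hI : I ≠ ⊥) (h : cl I = 1) : ∃ x, x ≠ 0 ∧ I = Ideal.span {x} := by
  rw [cl_def hI, ClassGroup.mk0_eq_one_iff] at h
  obtain ⟨x, hx⟩ := h.principal
  refine ⟨x, ?_, hx⟩
  rintro rfl
  apply hI; rw [hx, Ideal.submodule_span_eq, Ideal.span_singleton_eq_bot]

theorem cl_surj (a : ClassGroup R) : ∃ I : Ideal R, I ≠ ⊥ ∧ cl I = a := by
  obtain ⟨I, rfl⟩ := ClassGroup.mk0_surjective a
  have : (I : Ideal R) ≠ ⊥ := mem_nonZeroDivisors_iff_ne_zero.1 I.2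
  exact ⟨I, this, by rw [cl_def this]⟩

theorem cl_eq_iff {I J : Ideal R} (hI : I ≠ ⊥) (hJ : J ≠ ⊥) : cl I = cl J ↔
    ∃ x y : R, x ≠ 0 ∧ y ≠ 0 ∧ Ideal.span {x} * I = Ideal.span {y} * J := by
  rw [cl_def hI, cl_def hJ, ClassGroup.mk0_eq_mk0_iff]
  constructor
  · rintro ⟨x, y, hx, hy, h⟩; exact ⟨x, y, hx, hy, h⟩
  · rintro ⟨x, y, hx, hy, h⟩; exact ⟨x, y, hx, hy, h⟩

theorem cl_coprime {ι : Type} [Fintype ι] [Nonempty ι] (𝔓 : ι → Ideal R) (hp : ∀ i, (𝔓 i).IsPrime)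
    (h0 : ∀ i, 𝔓 i ≠ ⊥) (a : ClassGroup R) : ∃ I : Ideal R, I ≠ ⊥ ∧ cl I = a ∧ ∀ i, ¬ I ≤ 𝔓 i := by
  obtain ⟨J, hJ, ha⟩ := cl_surj a⁻¹
  have hN : (∏ i, 𝔓 i) ≠ ⊥ := Finset.prod_ne_zero_iff.2 (fun i _ => h0 i)
  obtain ⟨y, hy⟩ := IsDedekindDomain.exists_sup_span_eq (Ideal.mul_le_left : J * (∏ i, 𝔓 i) ≤ J) (mul_ne_zero hJ hN)
  have hyJ : Ideal.span {y} ≤ J := by rw [← hy]; exact le_sup_right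
  obtain ⟨I, hI⟩ := Ideal.dvd_iff_le.2 hyJ
  have h1 : (∏ i, 𝔓 i) ⊔ I = ⊤ := by
    rw [hI, ← Ideal.mul_sup] at hy
    exact mul_left_cancel₀ hJ (hy.trans (Ideal.mul_top J).symm)
  have h2 : ∀ i, ¬ I ≤ 𝔓 i := by
    intro i hi
    apply (hp i).ne_top
    rw [eq_top_iff, ← h1]
    exact sup_le (Ideal.le_of_dvd (Finset.dvd_prod_of_mem _ (Finset.mem_univ i))) hi
  have hI0 : I ≠ ⊥ := by
    rintro rfl
    obtain ⟨i⟩ := ‹Nonempty ι›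
    exact h2 i bot_le
  refine ⟨I, hI0, ?_, h2⟩
  have := cl_mul hJ hI0
  rw [← hI, cl_span, ha] at this
  exact (inv_mul_eq_one.1 this.symm).symm

theorem cl_hom_aux (R' : Type) [CommRing R'] [IsDedekindDomain R'] (e : R ≃+* R') :
    ∃ s : ClassGroup R →* ClassGroup R', ∀ I : Ideal R, I ≠ ⊥ → s (cl I) = cl (I.map e) := by
  let _ : Algebra R R' := e.toRingHom.toAlgebra
  have hinj : Function.Injective (algebraMap R R') := e.injective
  have : FaithfulSMul R R' := (faithfulSMul_iff_algebraMap_injective R R').2 hinj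
  have : Module.IsTorsionFree R R' := inferInstance
  refine ⟨ClassGroup.extendedHom R R', fun I hI => ?_⟩
  have hI' : I.map e ≠ ⊥ := by
    intro h
    exact hI ((Ideal.map_eq_bot_iff_of_injective (f := e) e.injective).1 h)
  rw [cl_def hI, cl_def hI', ClassGroup.extendedHom_mk0]
  rfl

theorem cl_hom (e : R ≃+* R) :
    ∃ s : ClassGroup R →* ClassGroup R, ∀ I : Ideal R, I ≠ ⊥ → s (cl I) = cl (I.map e) := cl_hom_aux R e

end ClassLemmas


section PsiSec
variable {K : Type} [Field K] [NumberField K] {ζ μ : 𝓞 K} {σ τ : 𝓞 K ≃+* 𝓞 K} {m : ℕ} {ι : Type}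

theorem mem_map_iff {R : Type*} [CommRing R] (e : R ≃+* R) (I : Ideal R) (x : R) : x ∈ I.map e ↔ e.symm x ∈ I := by
  rw [← mem_map_equiv e I (e.symm x), RingEquiv.apply_symm_apply]

theorem map_le_map_equiv {R : Type*} [CommRing R] (e : R ≃+* R) {I J : Ideal R} : I.map e ≤ J.map e ↔ I ≤ J := by
  constructor
  · intro h x hx
    exact (mem_map_equiv e J x).1 (h ((mem_map_equiv e I x).2 hx))
  · exact Ideal.map_mono

theorem map_s3 (B : Base ζ μ σ τ m) (I : Ideal (𝓞 K)) : ((I.map σ).map σ).map σ = I := by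
  ext x
  rw [mem_map_iff, mem_map_iff, mem_map_iff]
  have : σ.symm (σ.symm (σ.symm x)) = x := by
    apply σ.injective; apply σ.injective; apply σ.injective
    simp [B.s3]
  rw [this]

theorem map_ts (B : Base ζ μ σ τ m) (I : Ideal (𝓞 K)) : (I.map σ).map τ = ((I.map τ).map σ).map σ := by
  ext x
  rw [mem_map_iff, mem_map_iff, mem_map_iff, mem_map_iff, mem_map_iff]
  have : σ.symm (τ.symm x) = τ.symm (σ.symm (σ.symm x)) := by
    apply σ.injective; apply τ.injective
    rw [σ.apply_symm_apply, τ.apply_symm_apply, B.ts]; simp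
  rw [this]

theorem map_st (B : Base ζ μ σ τ m) (I : Ideal (𝓞 K)) : ((I.map σ).map σ).map τ = (I.map τ).map σ := by
  rw [map_ts B, map_ts B, map_s3 B]

structure PsiData (σ τ : 𝓞 K ≃+* 𝓞 K) (𝔓 : ι → Ideal (𝓞 K)) (ψ : 𝓞 K →* 𝓞 K) : Prop where
  prime : ∀ i, (𝔓 i).IsPrime
  ne_bot : ∀ i, 𝔓 i ≠ ⊥
  hs : ∀ i, (𝔓 i).map σ = 𝔓 i
  ht : ∀ i, (𝔓 i).map τ = 𝔓 i
  c3 : ∀ x, (∀ i, x ∉ 𝔓 i) → ψ x ^ 3 = 1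
  ps : ∀ x, ψ (σ x) = ψ x
  pt : ∀ x, ψ (τ x) = ψ x ^ 2
  pu : ∀ u, IsUnit u → σ u = u → ψ u = 1

def PRel (σ : 𝓞 K ≃+* 𝓞 K) (𝔓 : ι → Ideal (𝓞 K)) (a : ClassGroup (𝓞 K)) (x : 𝓞 K) : Prop :=
  ∃ I : Ideal (𝓞 K), I ≠ ⊥ ∧ cl I = a ∧ (∀ i, ¬ I ≤ 𝔓 i) ∧ σ x = x ∧
    I * I.map σ * (I.map σ).map σ = Ideal.span {x}

theorem PRel.mul {𝔓 : ι → Ideal (𝓞 K)} {a b : ClassGroup (𝓞 K)} {x y : 𝓞 K} (hp : ∀ i, (𝔓 i).IsPrime)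
    (h : PRel σ 𝔓 a x) (h' : PRel σ 𝔓 b y) : PRel σ 𝔓 (a * b) (x * y) := by
  obtain ⟨I, hI, rfl, h1, h2, h3⟩ := h
  obtain ⟨I', hI', rfl, h1', h2', h3'⟩ := h'
  refine ⟨I * I', mul_ne_zero hI hI', cl_mul hI hI', ?_, ?_, ?_⟩
  · intro i hle
    rcases (hp i).mul_le.1 hle with h | h
    · exact h1 i h
    · exact h1' i h
  · rw [map_mul, h2, h2']
  · rw [← Ideal.span_singleton_mul_span_singleton, ← h3, ← h3']
    simp only [Ideal.map_mul]
    ring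

theorem rel_total [Fintype ι] [Nonempty ι] (B : Base ζ μ σ τ m) {𝔓 : ι → Ideal (𝓞 K)} (hp : ∀ i, (𝔓 i).IsPrime)
    (h0 : ∀ i, 𝔓 i ≠ ⊥) (a : ClassGroup (𝓞 K)) : ∃ x, PRel σ 𝔓 a x := by
  obtain ⟨I, hI, ha, h⟩ := cl_coprime 𝔓 hp h0 a
  obtain ⟨x, hx, hIx⟩ := B.F1 I
  exact ⟨x, I, hI, ha, h, hx, hIx⟩

theorem PRel.cop {𝔓 : ι → Ideal (𝓞 K)} {ψ} (D : PsiData σ τ 𝔓 ψ) {a : ClassGroup (𝓞 K)} {x : 𝓞 K}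
    (h : PRel σ 𝔓 a x) : ∀ i, x ∉ 𝔓 i := by
  obtain ⟨I, hI, rfl, h1, h2, h3⟩ := h
  intro i hi
  rw [← Ideal.span_singleton_le_iff_mem, ← h3] at hi
  rcases (D.prime i).mul_le.1 hi with h | h
  · rcases (D.prime i).mul_le.1 h with h | h
    · exact h1 i h
    · rw [← D.hs i, map_le_map_equiv] at h; exact h1 i h
  · rw [← D.hs i, map_le_map_equiv, ← D.hs i, map_le_map_equiv] at h; exact h1 i h

theorem PRel.one {𝔓 : ι → Ideal (𝓞 K)} {ψ} (D : PsiData σ τ 𝔓 ψ) (B : Base ζ μ σ τ m) {x : 𝓞 K}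
    (h : PRel σ 𝔓 1 x) : ψ x = 1 := by
  obtain ⟨I, hI, hI1, h1, h2, h3⟩ := h
  obtain ⟨y, hy, rfl⟩ := cl_one hI hI1
  rw [Ideal.map_span, Set.image_singleton, Ideal.map_span, Set.image_singleton,
    Ideal.span_singleton_mul_span_singleton, Ideal.span_singleton_mul_span_singleton,
    Ideal.span_singleton_eq_span_singleton] at h3
  obtain ⟨u, hu⟩ := h3
  have hsy : σ y ≠ 0 := by rwa [Ne, map_eq_zero_iff σ σ.injective]
  have hssy : σ (σ y) ≠ 0 := by rwa [Ne, map_eq_zero_iff σ σ.injective]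
  have hsu : σ (u : 𝓞 K) = u := by
    have h4 := congrArg σ hu
    rw [h2, ← hu] at h4
    simp only [map_mul, B.s3] at h4
    apply mul_left_cancel₀ (mul_ne_zero (mul_ne_zero hy hsy) hssy)
    rw [← h4]; ring
  rw [← hu, map_mul, map_mul, map_mul, D.pu _ u.isUnit hsu, D.ps, D.ps, D.ps, mul_one]
  rw [← D.c3 y (fun i hi => h1 i ((Ideal.span_singleton_le_iff_mem _).2 hi))]
  ring

theorem psi_hom [Fintype ι] [Nonempty ι] {𝔓 : ι → Ideal (𝓞 K)} {ψ} (D : PsiData σ τ 𝔓 ψ) (B : Base ζ μ σ τ m) :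
    ∃ Ψ : ClassGroup (𝓞 K) →* 𝓞 K, ∀ a x, PRel σ 𝔓 a x → Ψ a = ψ x := by
  choose f hf using fun a => rel_total B D.prime D.ne_bot a
  have huniq : ∀ a x, PRel σ 𝔓 a x → ψ (f a) = ψ x := by
    intro a x hx
    have h1 := ((hf a).mul D.prime (hf a⁻¹))
    have h2 := (hx.mul D.prime (hf a⁻¹))
    rw [mul_inv_cancel] at h1 h2
    have h1 := h1.one D B
    have h2 := h2.one D B
    rw [map_mul] at h1 h2
    exact mul_right_cancel₀ (right_ne_zero_of_mul_eq_one h1) (h1.trans h2.symm)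
  refine ⟨{ toFun := fun a => ψ (f a), map_one' := (hf 1).one D B, map_mul' := ?_ }, huniq⟩
  intro a b
  change ψ (f (a * b)) = ψ (f a) * ψ (f b)
  rw [← map_mul]
  exact huniq _ _ ((hf a).mul D.prime (hf b))

theorem psi_facts [Fintype ι] [Nonempty ι] {𝔓 : ι → Ideal (𝓞 K)} {ψ} (D : PsiData σ τ 𝔓 ψ) (B : Base ζ μ σ τ m)
    {Ψ : ClassGroup (𝓞 K) →* 𝓞 K} (hΨ : ∀ a x, PRel σ 𝔓 a x → Ψ a = ψ x)
    {s : ClassGroup (𝓞 K) →* ClassGroup (𝓞 K)} (hs : ∀ I : Ideal (𝓞 K), I ≠ ⊥ → s (cl I) = cl (I.map σ))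
    {t : ClassGroup (𝓞 K) →* ClassGroup (𝓞 K)} (ht : ∀ I : Ideal (𝓞 K), I ≠ ⊥ → t (cl I) = cl (I.map τ))
    (a : ClassGroup (𝓞 K)) : Ψ a ^ 3 = 1 ∧ Ψ (s a) = Ψ a ∧ Ψ (t a) = Ψ a ^ 2 := by
  obtain ⟨x, hx⟩ := rel_total B D.prime D.ne_bot a
  have hxx := hx
  obtain ⟨I, hI, rfl, h1, h2, h3⟩ := hxx
  rw [hΨ _ _ hx]
  refine ⟨D.c3 _ (hx.cop D), ?_, ?_⟩
  · apply hΨ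
    refine ⟨I.map σ, map_equiv_ne_bot σ I hI, (hs I hI).symm, ?_, h2, ?_⟩
    · intro i h
      rw [← D.hs i, map_le_map_equiv] at h; exact h1 i h
    · rw [map_s3 B, ← h3]; ring
  · rw [← D.pt]
    apply hΨ
    refine ⟨I.map τ, map_equiv_ne_bot τ I hI, (ht I hI).symm, ?_, ?_, ?_⟩
    · intro i h
      rw [← D.ht i, map_le_map_equiv] at h; exact h1 i h
    · have := B.ts x
      rw [h2] at this
      have h5 := congrArg σ this
      rw [B.s3] at h5; exact h5
    · have := congrArg (Ideal.map τ) h3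
      rw [Ideal.map_span, Set.image_singleton] at this
      rw [← this, Ideal.map_mul, Ideal.map_mul, map_st B, map_ts B]
      ring

theorem psi_inv [Fintype ι] [Nonempty ι] {𝔓 : ι → Ideal (𝓞 K)} {ψ} (D : PsiData σ τ 𝔓 ψ) (B : Base ζ μ σ τ m)
    (hμ : ∀ P : Ideal (𝓞 K), P.IsPrime → μ ∈ P → 3 ∈ P ∨ ∃ i, P = 𝔓 i)
    {Ψ : ClassGroup (𝓞 K) →* 𝓞 K}
    {t : ClassGroup (𝓞 K) →* ClassGroup (𝓞 K)} (ht : ∀ I : Ideal (𝓞 K), I ≠ ⊥ → t (cl I) = cl (I.map τ))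
    (h3 : ∀ a, Ψ a ^ 3 = 1) (hΨt : ∀ a, Ψ (t a) = Ψ a ^ 2)
    (d : Ideal (𝓞 K)) (hd : d ≠ ⊥) (hds : d.map σ = d) : Ψ (cl d) = 1 := by
  have key : ∀ n (d : Ideal (𝓞 K)), Ideal.absNorm d = n → d ≠ ⊥ → d.map σ = d → Ψ (cl d) = 1 := by
    intro n
    induction n using Nat.strong_induction_on with
    | _ n ih =>
    intro d hn hd hds
    by_cases htop : d = ⊤
    · rw [htop, ← Ideal.span_singleton_one, cl_span, map_one]
    obtain ⟨P, hPm, hdP⟩ := Ideal.exists_le_maximal d htop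
    have hP := hPm.isPrime
    have hP0 : P ≠ ⊥ := by rintro rfl; exact hd (le_bot_iff.1 hdP)
    have step : ∀ A d' : Ideal (𝓞 K), d = A * d' → A ≤ P → A.map σ = A → Ψ (cl A) = 1 → Ψ (cl d) = 1 := by
      intro A d' hA hAP hAs hΨA
      have hA0 : A ≠ ⊥ := by rintro rfl; rw [Ideal.bot_mul] at hA; exact hd hA
      have hd0 : d' ≠ ⊥ := by rintro rfl; rw [Ideal.mul_bot] at hA; exact hd hA
      have hN : Ideal.absNorm d' < n := by
        rw [← hn, hA, map_mul]
        have h1 : Ideal.absNorm d' ≠ 0 := by rwa [Ne, Ideal.absNorm_eq_zero_iff]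
        have h2 : Ideal.absNorm A ≠ 0 := by rwa [Ne, Ideal.absNorm_eq_zero_iff]
        have h3 : Ideal.absNorm A ≠ 1 := by
          rw [Ne, Ideal.absNorm_eq_one_iff]
          rintro rfl
          exact hP.ne_top (top_le_iff.1 hAP)
        have : 2 ≤ Ideal.absNorm A := by omega
        nlinarith [Nat.pos_of_ne_zero h1]
      have hd's : d'.map σ = d' := by
        rw [hA, Ideal.map_mul, hAs] at hds
        exact mul_left_cancel₀ hA0 hds
      rw [hA, cl_mul hA0 hd0, map_mul, hΨA, ih _ hN d' rfl hd0 hd's, one_mul]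
    by_cases hPs : P.map σ = P
    · obtain ⟨d', hd'⟩ := Ideal.dvd_iff_le.2 hdP
      apply step P d' hd' le_rfl hPs
      have htP : P.map τ = P → Ψ (cl P) = 1 := by
        intro h
        have h4 := hΨt (cl P)
        rw [ht P hP0, h] at h4
        have h5 := h3 (cl P)
        have h6 : Ψ (cl P) ≠ 0 := by intro h; rw [h] at h5; norm_num at h5
        rw [pow_two] at h4
        exact (mul_left_cancel₀ h6 ((mul_one _).trans h4)).symm
      rcases B.F3 P hP hP0 hPs with ⟨a, -, ha, -⟩ | h | h
      · rw [ha, cl_span, map_one]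
      · exact htP (B.F3' P hP hP0 hPs h)
      · rcases hμ P hP h with h | ⟨i, rfl⟩
        · exact htP (B.F3' P hP hP0 hPs h)
        · exact htP (D.ht i)
    · have e1 : P ≠ P.map σ := fun h => hPs h.symm
      have e2 : P.map σ ≠ (P.map σ).map σ := by
        intro h
        apply hPs
        have := congrArg (Ideal.map σ) (congrArg (Ideal.map σ) h)
        rw [map_s3 B] at this
        exact this.symm
      have e3 : P ≠ (P.map σ).map σ := by
        intro h
        apply hPs
        have := congrArg (Ideal.map σ) h
        rw [map_s3 B] at this
        exact this
      have l1 : d ≤ P.map σ := by rw [← hds]; exact Ideal.map_mono hdP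
      have l2 : d ≤ (P.map σ).map σ := by rw [← hds]; exact Ideal.map_mono l1
      obtain ⟨d', hd'⟩ := prime_of_three_dvd P (P.map σ) ((P.map σ).map σ) d hP (map_equiv_isPrime σ _ hP)
        (map_equiv_isPrime σ _ (map_equiv_isPrime σ _ hP)) hP0 (map_equiv_ne_bot σ _ hP0)
        (map_equiv_ne_bot σ _ (map_equiv_ne_bot σ _ hP0)) e1 e3 e2 hdP l1 l2
      apply step _ d' hd'
      · rw [mul_assoc]; exact Ideal.mul_le_left
      · rw [Ideal.map_mul, Ideal.map_mul, map_s3 B]; ring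
      · obtain ⟨a, -, ha⟩ := B.F1 P
        rw [ha, cl_span, map_one]
  exact key _ d rfl hd hds

end PsiSec


section KerSec
variable {K : Type} [Field K] [NumberField K] {ζ μ : 𝓞 K} {σ τ : 𝓞 K ≃+* 𝓞 K} {m : ℕ} {ι : Type}

theorem hilb90 (B : Base ζ μ σ τ m) (hm : m ≠ 0) {U V : 𝓞 K} (hU : U ≠ 0)
    (h : U * σ U * σ (σ U) = V * σ V * σ (σ V)) : ∃ Y : 𝓞 K, Y ≠ 0 ∧ V * σ Y = σ (σ U) * Y := by
  let Y : 𝓞 K → 𝓞 K := fun c => c * (U * σ U) + V * σ U * σ c + V * σ V * σ (σ c)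
  have hY : ∀ c, V * σ (Y c) = σ (σ U) * Y c := by
    intro c
    simp only [Y, map_add, map_mul, B.s3]
    linear_combination (-c) * h
  by_contra hno
  push Not at hno
  have h0 : ∀ c, Y c = 0 := fun c => by
    by_contra hc
    exact hno _ hc (hY c)
  have hz := B.hz
  have hz3 := zeta_cube B.hz
  have hμ : μ ≠ 0 := by
    rintro rfl
    have := B.hmu
    rw [zero_pow (by norm_num)] at this
    exact hm (by exact_mod_cast this.symm)
  have e0 := h0 1
  have e1 := h0 μ
  have e2 := h0 (μ ^ 2)
  simp only [Y, map_pow, map_mul, map_one, B.smu, B.sz] at e0 e1 e2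
  have f1 : U * σ U + ζ * (V * σ U) + ζ ^ 2 * (V * σ V) = 0 := by
    apply mul_left_cancel₀ hμ
    linear_combination e1
  have f2 : U * σ U + ζ ^ 2 * (V * σ U) + ζ ^ 4 * (V * σ V) = 0 := by
    apply mul_left_cancel₀ (pow_ne_zero 2 hμ)
    linear_combination e2
  have hsU : σ U ≠ 0 := by rwa [Ne, map_eq_zero_iff σ σ.injective]
  have h3 : (3 : 𝓞 K) ≠ 0 := by norm_num
  apply mul_ne_zero h3 (mul_ne_zero hU hsU)
  linear_combination e0 + f1 + f2 - (V * σ U) * hz - (V * σ V) * (hz + ζ * hz3)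

theorem inv_ideal (B : Base ζ μ σ τ m) (hm : m ≠ 0)
    (b : Ideal (𝓞 K)) (hb : b ≠ ⊥) (hcl : cl (b.map σ) = cl b) :
    ∃ d : Ideal (𝓞 K), d ≠ ⊥ ∧ d.map σ = d ∧ cl d * cl (b.map τ) = cl b := by
  have ne0 : ∀ (g : 𝓞 K ≃+* 𝓞 K) {x : 𝓞 K}, x ≠ 0 → g x ≠ 0 := by
    intro g x hx; rwa [Ne, map_eq_zero_iff g g.injective]
  obtain ⟨u, v, hu, hv, huv⟩ := (cl_eq_iff (map_equiv_ne_bot σ b hb) hb).1 hcl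
  set b1 := b.map τ with hb1
  have hb10 : b1 ≠ ⊥ := map_equiv_ne_bot τ b hb
  set n := Ideal.absNorm b1 with hn
  have hn0 : (n : 𝓞 K) ≠ 0 := by
    have : n ≠ 0 := by rwa [hn, Ne, Ideal.absNorm_eq_zero_iff]
    exact_mod_cast this
  have hnb : Ideal.span {(n : 𝓞 K)} ≤ b1 := by
    rw [Ideal.span_singleton_le_iff_mem]; exact Ideal.absNorm_mem b1
  obtain ⟨b2, hb2⟩ := Ideal.dvd_iff_le.2 hnb
  have hnn : Ideal.span {(n : 𝓞 K)} ≠ ⊥ := by rwa [Ne, Ideal.span_singleton_eq_bot]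
  have hb20 : b2 ≠ ⊥ := by rintro rfl; rw [Ideal.mul_bot] at hb2; exact hnn hb2
  have map_sp : ∀ (g : 𝓞 K ≃+* 𝓞 K) (x : 𝓞 K), (Ideal.span {x}).map g = Ideal.span {g x} := by
    intro g x; rw [Ideal.map_span, Set.image_singleton]
  have E1 : Ideal.span {σ (τ u)} * b1 = Ideal.span {σ (τ v)} * b1.map σ := by
    have h1 := congrArg (Ideal.map σ) (congrArg (Ideal.map τ) huv)
    simp only [Ideal.map_mul, map_sp, map_ts B, map_s3 B] at h1
    exact h1
  have E2 : b1.map σ * b2.map σ = Ideal.span {(n : 𝓞 K)} := by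
    rw [← Ideal.map_mul, ← hb2, map_sp, map_natCast]
  have E3 : Ideal.span {σ (τ u)} * b2.map σ = Ideal.span {σ (τ v)} * b2 := by
    apply mul_left_cancel₀ hnn
    calc Ideal.span {(n : 𝓞 K)} * (Ideal.span {σ (τ u)} * b2.map σ)
        = (Ideal.span {σ (τ u)} * b1) * (b2 * b2.map σ) := by rw [hb2]; ring
      _ = Ideal.span {σ (τ v)} * (b1.map σ * b2.map σ) * b2 := by rw [E1]; ring
      _ = _ := by rw [E2]; ring
  set c := b * b2 with hc
  have hc0 : c ≠ ⊥ := mul_ne_zero hb hb20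
  set U := u * σ (τ u) with hU
  set V := v * σ (τ v) with hV
  have hU0 : U ≠ 0 := mul_ne_zero hu (ne0 _ (ne0 _ hu))
  have hV0 : V ≠ 0 := mul_ne_zero hv (ne0 _ (ne0 _ hv))
  have E4 : Ideal.span {U} * c.map σ = Ideal.span {V} * c := by
    rw [hU, hV, hc, Ideal.map_mul, ← Ideal.span_singleton_mul_span_singleton, ← Ideal.span_singleton_mul_span_singleton]
    calc _ = (Ideal.span {u} * b.map σ) * (Ideal.span {σ (τ u)} * b2.map σ) := by ring
      _ = _ := by rw [huv, E3]; ring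
  have hNs : ∀ x, σ (x * σ x * σ (σ x)) = x * σ x * σ (σ x) := by
    intro x; simp only [map_mul, B.s3]; ring
  have hNst : ∀ u, τ (u * σ (τ u) * σ (u * σ (τ u)) * σ (σ (u * σ (τ u)))) =
      u * σ (τ u) * σ (u * σ (τ u)) * σ (σ (u * σ (τ u))) := by
    intro u
    have h1 : u * σ (τ u) * σ (u * σ (τ u)) * σ (σ (u * σ (τ u))) =
      (u * σ u * σ (σ u)) * τ (u * σ u * σ (σ u)) := by
      simp only [map_mul, B.s3, B.ts]; ring
    rw [h1, map_mul, B.tt _ (hNs u), mul_comm]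
  have hcc0 : c.map σ ≠ ⊥ := map_equiv_ne_bot σ _ hc0
  have hccc0 : (c.map σ).map σ ≠ ⊥ := map_equiv_ne_bot σ _ hcc0
  have E5 : Ideal.span {U * σ U * σ (σ U)} = Ideal.span {V * σ V * σ (σ V)} := by
    have h1 := congrArg (Ideal.map σ) E4
    have h2 := congrArg (Ideal.map σ) h1
    simp only [Ideal.map_mul, map_sp, map_s3 B] at h1 h2
    apply mul_left_cancel₀ (mul_ne_zero (mul_ne_zero hc0 hcc0) hccc0)
    have hsp3 : ∀ x y z : 𝓞 K, Ideal.span {x * y * z} = Ideal.span {x} * Ideal.span {y} * Ideal.span {z} := by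
      intro x y z
      rw [Ideal.span_singleton_mul_span_singleton, Ideal.span_singleton_mul_span_singleton]
    rw [hsp3, hsp3]
    calc _ = (Ideal.span {U} * c.map σ) * (Ideal.span {σ U} * (c.map σ).map σ) * (Ideal.span {σ (σ U)} * c) := by ring
      _ = _ := by rw [E4, h1, h2]; ring
  obtain ⟨ε, hε⟩ := Ideal.span_singleton_eq_span_singleton.1 E5
  have hNU0 : U * σ U * σ (σ U) ≠ 0 := mul_ne_zero (mul_ne_zero hU0 (ne0 _ hU0)) (ne0 _ (ne0 _ hU0))
  have hεs : σ (ε : 𝓞 K) = ε := by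
    have h1 := congrArg σ hε
    rw [map_mul, hNs, hNs, ← hε] at h1
    exact mul_left_cancel₀ hNU0 h1
  have hετ : τ (ε : 𝓞 K) = ε := by
    have h1 := congrArg τ hε
    rw [map_mul, hNst, hNst, ← hV, ← hU, ← hε] at h1
    exact mul_left_cancel₀ hNU0 h1
  have hε2 : (ε : 𝓞 K) * ε = 1 := by
    have hz3 := zeta_cube B.hz
    obtain ⟨j, hj⟩ := B.F2 ε ε.isUnit hεs
    have h1 : ζ ^ j = 1 := by
      have h2 : (ζ ^ j) ^ 3 = 1 := by rw [← pow_mul, mul_comm, pow_mul, hz3, one_pow]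
      have h3 : ζ ^ j ≠ 0 := by intro h; rw [h] at h2; norm_num at h2
      have h4 : ζ ^ j * ζ ^ j = ζ ^ j * 1 := by
        rw [mul_one]
        rcases hj with hj | hj
        · rw [hj, map_pow, B.tz] at hετ
          calc ζ ^ j * ζ ^ j = (ζ ^ 2) ^ j := by ring
            _ = _ := hετ
        · rw [hj, map_neg, map_pow, B.tz, neg_inj] at hετ
          calc ζ ^ j * ζ ^ j = (ζ ^ 2) ^ j := by ring
            _ = _ := hετ
      exact mul_left_cancel₀ h3 h4
    rcases hj with hj | hj <;> rw [hj, h1] <;> ring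
  have hN : U * σ U * σ (σ U) = (ε * V) * σ (ε * V) * σ (σ (ε * V)) := by
    simp only [map_mul, hεs]
    linear_combination (-U * σ U * σ (σ U) * (1 + (ε : 𝓞 K) * ε)) * hε2 + (ε : 𝓞 K) ^ 3 * hε
  obtain ⟨Y, hY0, hY⟩ := hilb90 B hm hU0 hN
  have E6 : Ideal.span {U} * c.map σ = Ideal.span {ε * V} * c := by
    rw [E4]; congr 1
    rw [Ideal.span_singleton_eq_span_singleton]
    exact ⟨ε, mul_comm _ _⟩
  have hspn : Ideal.span {Y * σ (σ U)} ≠ ⊥ := by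
    rw [Ne, Ideal.span_singleton_eq_bot]; exact mul_ne_zero hY0 (ne0 _ (ne0 _ hU0))
  refine ⟨c * Ideal.span {Y * σ (σ U)}, mul_ne_zero hc0 hspn, ?_, ?_⟩
  · rw [Ideal.map_mul, map_sp, map_mul, B.s3]
    calc c.map σ * Ideal.span {σ Y * U} = (Ideal.span {U} * c.map σ) * Ideal.span {σ Y} := by
          rw [← Ideal.span_singleton_mul_span_singleton]; ring
      _ = c * Ideal.span {ε * V * σ Y} := by
          rw [E6, ← Ideal.span_singleton_mul_span_singleton (ε * V : 𝓞 K)]; ring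
      _ = _ := by rw [hY, mul_comm Y]
  · rw [cl_mul hc0 hspn, cl_span, mul_one, hc, cl_mul hb hb20, mul_assoc, mul_comm (cl b2), ← cl_mul hb10 hb20, ← hb2,
      cl_span, mul_one]

theorem psi_ker [Fintype ι] [Nonempty ι] {𝔓 : ι → Ideal (𝓞 K)} {ψ} (D : PsiData σ τ 𝔓 ψ) (B : Base ζ μ σ τ m) (hm : m ≠ 0)
    (hμ : ∀ P : Ideal (𝓞 K), P.IsPrime → μ ∈ P → 3 ∈ P ∨ ∃ i, P = 𝔓 i)
    {Ψ : ClassGroup (𝓞 K) →* 𝓞 K} (hΨ : ∀ a x, PRel σ 𝔓 a x → Ψ a = ψ x)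
    {s : ClassGroup (𝓞 K) →* ClassGroup (𝓞 K)} (hs : ∀ I : Ideal (𝓞 K), I ≠ ⊥ → s (cl I) = cl (I.map σ))
    (a : ClassGroup (𝓞 K)) (ha : s a = a) : Ψ a = 1 := by
  obtain ⟨t, ht⟩ := cl_hom τ
  have hf := psi_facts D B hΨ hs ht
  obtain ⟨b, hb, rfl⟩ := cl_surj a
  rw [hs b hb] at ha
  obtain ⟨d, hd0, hds, hd⟩ := inv_ideal B hm b hb ha
  have h1 := psi_inv D B hμ ht (fun a => (hf a).1) (fun a => (hf a).2.2) d hd0 hds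
  have h2 := congrArg Ψ hd
  rw [map_mul, h1, one_mul, ← ht b hb, (hf _).2.2] at h2
  have h5 := (hf (cl b)).1
  have h6 : Ψ (cl b) ≠ 0 := by intro h; rw [h] at h5; norm_num at h5
  rw [pow_two] at h2
  exact mul_left_cancel₀ h6 (h2.trans (mul_one _).symm)
end KerSec


section PsiC
variable {K : Type} [Field K] [NumberField K] {ζ μ : 𝓞 K} {σ τ : 𝓞 K ≃+* 𝓞 K} {m : ℕ} {ι : Type} [Fintype ι]

noncomputable def psiC (X : ι → (𝓞 K →* 𝓞 K)) (c : ι → ZMod 3) : 𝓞 K →* 𝓞 K := ∏ i, X i ^ (c i).val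

theorem psiC_apply (X : ι → (𝓞 K →* 𝓞 K)) (c : ι → ZMod 3) (x : 𝓞 K) :
    psiC X c x = ∏ i, X i x ^ (c i).val := by
  simp [psiC, MonoidHom.finset_prod_apply]

theorem QChar.mem {q : ℕ} {P X} (h : QChar ζ σ τ q P X) : (q : 𝓞 K) ∈ P := by
  have : P ^ 3 ≤ P := Ideal.pow_le_self (by norm_num)
  apply this; rw [h.cube]; exact Ideal.mem_span_singleton_self _

theorem psiC_data (B : Base ζ μ σ τ m) {q : ι → ℕ} {𝔓 : ι → Ideal (𝓞 K)} {X : ι → (𝓞 K →* 𝓞 K)}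
    (hQ : ∀ i, QChar ζ σ τ (q i) (𝔓 i) (X i)) (c : ι → ZMod 3) (hc : psiC X c ζ = 1) :
    PsiData σ τ 𝔓 (psiC X c) where
  prime i := (hQ i).prime
  ne_bot i := (hQ i).ne_bot
  hs i := (hQ i).hs
  ht i := (hQ i).ht
  c3 x hx := by
    rw [psiC_apply, ← Finset.prod_pow]
    apply Finset.prod_eq_one
    intro i _
    rw [← pow_mul, mul_comm, pow_mul, (hQ i).c3 x (hx i), one_pow]
  ps x := by
    rw [psiC_apply, psiC_apply]
    simp only [(hQ _).Xs]
  pt x := by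
    rw [psiC_apply, psiC_apply, ← Finset.prod_pow]
    apply Finset.prod_congr rfl
    intro i _
    rw [(hQ _).Xt, ← pow_mul, ← pow_mul, mul_comm]
  pu u hu hs := by
    have h1 : psiC X c (-1) = 1 := by
      rw [psiC_apply]
      apply Finset.prod_eq_one
      intro i _
      rw [(hQ i).Xn, one_pow]
    obtain ⟨j, rfl | rfl⟩ := B.F2 u hu hs
    · rw [map_pow, hc, one_pow]
    · rw [neg_eq_neg_one_mul, map_mul, map_pow, hc, one_pow, h1, one_mul]

theorem psiC_ker [Nonempty ι] (B : Base ζ μ σ τ m) (hm : m ≠ 0) {q : ι → ℕ} {𝔓 : ι → Ideal (𝓞 K)} {X : ι → (𝓞 K →* 𝓞 K)}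
    (hqm : ∀ i, q i ∣ m)
    (hQ : ∀ i, QChar ζ σ τ (q i) (𝔓 i) (X i)) (c : ι → ZMod 3) 
    (hΨ : ∀ a x, PRel σ 𝔓 a x → psiC X c x = 1) : ∃ β : K, β ^ 3 = ((∏ i, q i ^ (c i).val : ℕ) : K) := by
  have hq0 : ∀ i, q i ≠ 0 := fun i h => hm (by have := hqm i; rw [h] at this; exact zero_dvd_iff.1 this)
  apply cube_of_local K ζ B.hz _ (3 * m) (Finset.prod_ne_zero_iff.2 fun i _ => pow_ne_zero _ (hq0 i)) (by omega)
  intro P hP hP0 hNP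
  have hPm : P.IsMaximal := hP.isMaximal hP0
  have h3P : ((3 : ℕ) : 𝓞 K) ∉ P := by
    intro h; apply hNP; push_cast; exact P.mul_mem_right _ (by exact_mod_cast h)
  have hmP : (m : 𝓞 K) ∉ P := by
    intro h; apply hNP; push_cast; exact P.mul_mem_left _ h
  have hμP : μ ∉ P := by
    intro h; apply hmP; rw [← B.hmu]; exact Ideal.pow_mem_of_mem _ h _ (by norm_num)
  have hqP : ∀ i, (q i : 𝓞 K) ∉ P := by
    intro i h; apply hmP
    obtain ⟨k, hk⟩ := hqm i
    rw [hk]; push_cast; exact P.mul_mem_right _ h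
  let _ : Field (𝓞 K ⧸ P) := Ideal.Quotient.field P
  have hfin : Finite (𝓞 K ⧸ P) := Ideal.finiteQuotientOfFreeOfNeBot P hP0
  let _ : Fintype (𝓞 K ⧸ P) := Fintype.ofFinite _
  have h3 := three_ne_zero_quot h3P
  obtain ⟨χ, hχ⟩ := cub_exists B.hz (Ideal.Quotient.mk P) h3
  have hcard : Nat.card (𝓞 K ⧸ P) = Ideal.absNorm P := (Ideal.absNorm_apply P).symm
  have hd3 := three_dvd_card B.hz (Ideal.Quotient.mk P) h3
  have hqκ : ∀ i, (q i : 𝓞 K ⧸ P) ≠ 0 := by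
    intro i h
    apply hqP i
    rw [← Ideal.Quotient.eq_zero_iff_mem, map_natCast]; exact h
  set M : ℕ := ∏ i, q i ^ (c i).val with hM
  have hMκ : (M : 𝓞 K ⧸ P) ≠ 0 := by
    rw [hM]; push_cast
    exact Finset.prod_ne_zero_iff.2 fun i _ => pow_ne_zero _ (hqκ i)
  have hone : χ (M : 𝓞 K ⧸ P) = 1 := by
    by_cases hPs : P.map σ = P
    · rcases B.F3 P hP hP0 hPs with ⟨a, -, -, Q, hQ3⟩ | h | h
      · rw [hχ.eq_one_iff B.hz h3]
        rw [hcard, hQ3] at hd3 ⊢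
        obtain ⟨p, hp⟩ := CharP.exists (𝓞 K ⧸ P)
        obtain ⟨n, hpp, hn⟩ := FiniteField.card (𝓞 K ⧸ P) p
        rw [← Nat.card_eq_fintype_card, hcard, hQ3] at hn
        have hQp : ∃ k, Q = p ^ k := by
          have : Q ∣ p ^ (n : ℕ) := by rw [← hn]; exact dvd_pow_self _ (by norm_num)
          obtain ⟨k, -, hk⟩ := (Nat.dvd_prime_pow hpp).1 this
          exact ⟨k, hk⟩
        obtain ⟨k, hk⟩ := hQp
        have : Fact p.Prime := ⟨hpp⟩
        have hMQ : (M : 𝓞 K ⧸ P) ^ Q = M := by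
          rw [hk]
          have : ∀ k, (M : 𝓞 K ⧸ P) ^ (p ^ k) = M := by
            intro k
            induction k with
            | zero => simp
            | succ k ih =>
              rw [pow_succ, pow_mul, ih]
              exact map_natCast (frobenius (𝓞 K ⧸ P) p) M
          exact this k
        have hQ1 : 1 ≤ Q := by
          rw [hk]; exact Nat.one_le_pow _ _ hpp.pos
        have hM1 : (M : 𝓞 K ⧸ P) ^ (Q - 1) = 1 := by
          apply mul_right_cancel₀ hMκ
          rw [← pow_succ, Nat.sub_add_cancel hQ1, hMQ, one_mul]
        obtain ⟨R, rfl⟩ : ∃ R, Q = R + 1 := ⟨Q - 1, by omega⟩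
        rw [Nat.add_sub_cancel] at hM1
        have hR : R % 3 = 0 := by
          rw [show (R + 1) ^ 3 - 1 = R ^ 3 + 3 * (R ^ 2 + R) by
            rw [Nat.sub_eq_iff_eq_add (Nat.one_le_pow _ _ (by omega))]; ring] at hd3
          have h5 : 3 ∣ R ^ 3 := (Nat.dvd_add_left (dvd_mul_right _ _)).1 hd3
          exact Nat.mod_eq_zero_of_dvd (Nat.prime_three.dvd_of_dvd_pow h5)
        obtain ⟨T, rfl⟩ : ∃ T, R = 3 * T := ⟨R / 3, by omega⟩
        rw [show ((3 * T + 1) ^ 3 - 1) / 3 = (3 * T) * (3 * T ^ 2 + 3 * T + 1) by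
          apply Nat.div_eq_of_eq_mul_left (by norm_num)
          rw [Nat.sub_eq_iff_eq_add (Nat.one_le_pow _ _ (by omega))]; ring]
        rw [pow_mul, hM1, one_pow]
      · exact absurd (by exact_mod_cast h) h3P
      · exact absurd h hμP
    · set j := jacobiSum χ χ with hj
      have hjs : σ j = j := hχ.jacobi_fix (σ : 𝓞 K →+* 𝓞 K) B.sz
      have hjP : j ∈ P := by
        rw [← Ideal.Quotient.eq_zero_iff_mem]; exact hχ.jacobi_mem B.hz h3
      have hjt : j * τ j = (Ideal.absNorm P : ℕ) := by
        rw [← hcard, Nat.card_eq_fintype_card]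
        exact hχ.jacobi_norm B.hz h3 (algebraMap (𝓞 K) K) RingOfIntegers.coe_injective (τ : 𝓞 K →+* 𝓞 K) B.tz
      have hjN : Ideal.absNorm (Ideal.span {j}) = Ideal.absNorm P ^ 3 := by
        have h1 := B.nrm (Ideal.absNorm P)
        rw [← hjt, ← Ideal.span_singleton_mul_span_singleton, map_mul] at h1
        have h2 := absNorm_map_equiv τ (Ideal.span {j})
        rw [Ideal.map_span, Set.image_singleton] at h2
        rw [h2] at h1
        apply Nat.pow_left_injective (n := 2) (by norm_num)
        change Ideal.absNorm (Ideal.span {j}) ^ 2 = (Ideal.absNorm P ^ 3) ^ 2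
        rw [pow_two, h1]; ring
      have e1 : P ≠ P.map σ := fun h => hPs h.symm
      have e2 : P.map σ ≠ (P.map σ).map σ := by
        intro h
        apply hPs
        have := congrArg (Ideal.map σ) (congrArg (Ideal.map σ) h)
        rw [map_s3 B] at this
        exact this.symm
      have e3 : P ≠ (P.map σ).map σ := by
        intro h
        apply hPs
        have := congrArg (Ideal.map σ) h
        rw [map_s3 B] at this
        exact this
      have l1 : j ∈ P.map σ := by rw [← hjs]; exact (mem_map_equiv σ P j).2 hjP
      have l2 : j ∈ (P.map σ).map σ := by rw [← hjs]; exact (mem_map_equiv σ _ j).2 l1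
      have hdv := prime_of_three_dvd P (P.map σ) ((P.map σ).map σ) (Ideal.span {j}) hP (map_equiv_isPrime σ _ hP)
        (map_equiv_isPrime σ _ (map_equiv_isPrime σ _ hP)) hP0 (map_equiv_ne_bot σ _ hP0)
        (map_equiv_ne_bot σ _ (map_equiv_ne_bot σ _ hP0)) e1 e3 e2 ((Ideal.span_singleton_le_iff_mem _).2 hjP)
        ((Ideal.span_singleton_le_iff_mem _).2 l1) ((Ideal.span_singleton_le_iff_mem _).2 l2)
      have hNP0 : Ideal.absNorm P ≠ 0 := by rwa [Ne, Ideal.absNorm_eq_zero_iff]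
      have heq := ideal_eq_of_le_absNorm (Ideal.dvd_iff_le.1 hdv) (by
        intro h
        rw [h, Ideal.absNorm_bot] at hjN
        exact pow_ne_zero 3 hNP0 hjN.symm) (by
        rw [hjN, map_mul, map_mul, absNorm_map_equiv, absNorm_map_equiv, absNorm_map_equiv]; ring)
      have hrel : PRel σ 𝔓 (cl P) j := by
        refine ⟨P, hP0, rfl, ?_, hjs, heq.symm⟩
        intro i hi
        have := hPm.eq_of_le (hQ i).prime.ne_top hi
        apply hqP i
        rw [this]; exact (hQ i).mem
      have h5 := hΨ _ _ hrel
      rw [psiC_apply] at h5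
      rw [← h5, hM]
      push_cast
      rw [map_prod]
      apply Finset.prod_congr rfl
      intro i _
      rw [map_pow, (hQ i).recip (𝓞 K ⧸ P) (Ideal.Quotient.mk P) χ h3 hχ (hqκ i)]
  obtain ⟨y, hy⟩ := hχ.exists_cube B.hz h3 hMκ hone
  obtain ⟨Y, rfl⟩ := Ideal.Quotient.mk_surjective y
  refine ⟨Y, ?_⟩
  rw [← Ideal.Quotient.eq_zero_iff_mem, map_sub, map_pow, hy, map_natCast, sub_self]
end PsiC


section Index
variable {K : Type} [Field K] [NumberField K] {ζ μ : 𝓞 K} {σ τ : 𝓞 K ≃+* 𝓞 K} {m : ℕ} {ι : Type} [Fintype ι]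

theorem psiC_sub {X : ι → (𝓞 K →* 𝓞 K)} (c c' : ι → ZMod 3) (x : 𝓞 K) (hx : ∀ i, X i x ^ 3 = 1) :
    psiC X (c - c') x * psiC X c' x = psiC X c x := by
  rw [psiC_apply, psiC_apply, psiC_apply, ← Finset.prod_mul_distrib]
  apply Finset.prod_congr rfl
  intro i _
  rw [← pow_add, pow_eq_pow_mod _ (hx i)]
  congr 1
  rw [Pi.sub_apply, ← ZMod.val_add, sub_add_cancel]

theorem card_hom_le {G O : Type} [CommGroup G] [Finite G] [CommRing O] [IsDomain O] :
    Finite (G →* O) ∧ Nat.card (G →* O) ≤ Nat.card G := by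
  have hli := linearIndependent_monoidHom G O
  have := Fintype.ofFinite G
  have hf : Finite (G →* O) := hli.finite
  have := Fintype.ofFinite (G →* O)
  refine ⟨hf, ?_⟩
  rw [Nat.card_eq_fintype_card, Nat.card_eq_fintype_card]
  have := hli.fintype_card_le_finrank
  rwa [Module.finrank_fintype_fun_eq_card] at this

theorem zeta_not_mem (hz : ζ ^ 2 + ζ + 1 = 0) {P : Ideal (𝓞 K)} (hP : P.IsPrime) : ζ ∉ P := by
  intro h
  apply hP.ne_top
  rw [Ideal.eq_top_iff_one, ← zeta_cube hz]
  exact Ideal.pow_mem_of_mem _ h _ (by norm_num)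

theorem main_class [Nonempty ι] (B : Base ζ μ σ τ m) (hm : m ≠ 0) {q : ι → ℕ} {𝔓 : ι → Ideal (𝓞 K)} {X : ι → (𝓞 K →* 𝓞 K)}
    (hQ : ∀ i, QChar ζ σ τ (q i) (𝔓 i) (X i))
    (hμ : ∀ P : Ideal (𝓞 K), P.IsPrime → μ ∈ P → 3 ∈ P ∨ ∃ i, P = 𝔓 i)
    (X0 T : Finset (ι → ZMod 3)) (hX0 : ∀ c ∈ X0, psiC X c ζ = 1)
    (hT : ∀ c, psiC X c ζ = 1 → (∀ a x, PRel σ 𝔓 a x → psiC X c x = 1) → c ∈ T) :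
    X0.card ^ 2 ≤ T.card ^ 2 * Nat.card {a : ClassGroup (𝓞 K) // a ^ 3 = 1} := by
  classical
  have hΨ : ∀ c, ∃ Ψ : ClassGroup (𝓞 K) →* 𝓞 K, c ∈ X0 → ∀ a x, PRel σ 𝔓 a x → Ψ a = psiC X c x := by
    intro c
    by_cases hc : c ∈ X0
    · obtain ⟨Ψ, h⟩ := psi_hom (psiC_data B hQ c (hX0 c hc)) B
      exact ⟨Ψ, fun _ => h⟩
    · exact ⟨1, fun h => absurd h hc⟩
  choose Ψ hΨ using hΨ
  obtain ⟨s, hs⟩ := cl_hom σ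
  obtain ⟨t, ht⟩ := cl_hom τ
  let C : Subgroup (ClassGroup (𝓞 K)) := ⨅ c ∈ X0, (Ψ c).ker
  have hC : ∀ a, a ∈ C ↔ ∀ c ∈ X0, Ψ c a = 1 := by
    intro a
    simp only [C, Subgroup.mem_iInf, MonoidHom.mem_ker]
  have hgrp := grp_lemma s (by
      intro a
      obtain ⟨I, hI, rfl⟩ := cl_surj a
      have hI1 := map_equiv_ne_bot σ _ hI
      have hI2 := map_equiv_ne_bot σ _ hI1
      obtain ⟨x, -, hx⟩ := B.F1 I
      rw [hs _ hI, hs _ hI1, ← cl_mul hI hI1, ← cl_mul (mul_ne_zero hI hI1) hI2, hx, cl_span]) C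
    (by
      intro a ha
      rw [hC]
      intro c hc
      exact psi_ker (psiC_data B hQ c (hX0 c hc)) B hm hμ (hΨ c hc) hs a ha)
    (by
      intro a
      rw [hC]
      intro c hc
      have h1 := (psi_facts (psiC_data B hQ c (hX0 c hc)) B (hΨ c hc) hs ht a).2.1
      have h2 : Ψ c (s a / a) * Ψ c a = 1 * Ψ c a := by rw [← map_mul, div_mul_cancel, h1, one_mul]
      have h5 := (psi_facts (psiC_data B hQ c (hX0 c hc)) B (hΨ c hc) hs ht a).1
      have h6 : Ψ c a ≠ 0 := by intro h; rw [h] at h5; norm_num at h5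
      exact mul_right_cancel₀ h6 h2)
  have hcardA : Nat.card (ClassGroup (𝓞 K)) = Nat.card (ClassGroup (𝓞 K) ⧸ C) * Nat.card C :=
    Subgroup.card_eq_card_quotient_mul_card_subgroup C
  rw [hcardA, mul_pow] at hgrp
  have hCpos : 0 < Nat.card C ^ 2 := pow_pos Nat.card_pos 2
  have hgrp2 := Nat.le_of_mul_le_mul_right hgrp hCpos
  obtain ⟨hfin, hle⟩ := card_hom_le (G := ClassGroup (𝓞 K) ⧸ C) (O := 𝓞 K)
  have := Fintype.ofFinite (ClassGroup (𝓞 K) ⧸ C →* 𝓞 K)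
  let Φ : (ι → ZMod 3) → (ClassGroup (𝓞 K) ⧸ C →* 𝓞 K) := fun c =>
    if hc : c ∈ X0 then QuotientGroup.lift C (Ψ c) (fun a ha => (hC a).1 ha c hc) else 1
  have hΦ : ∀ c ∈ X0, ∀ a, Φ c (QuotientGroup.mk a) = Ψ c a := by
    intro c hc a
    simp only [Φ, dif_pos hc]
    rfl
  have hcount : X0.card ≤ T.card * (X0.image Φ).card := by
    apply Finset.card_le_mul_card_image
    intro f hf
    obtain ⟨c', hc', rfl⟩ := Finset.mem_image.1 hf
    apply Finset.card_le_card_of_injOn (fun c => c - c')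
    · intro c hc
      obtain ⟨hc, hcc⟩ := Finset.mem_filter.1 hc
      apply hT
      · have h1 := psiC_sub (X := X) c c' ζ (fun i => (hQ i).c3 ζ (zeta_not_mem B.hz (hQ i).prime))
        rwa [hX0 c hc, hX0 c' hc', mul_one] at h1
      · intro a x hx
        have hcop := hx.cop (psiC_data B hQ c (hX0 c hc))
        have h1 := psiC_sub (X := X) c c' x (fun i => (hQ i).c3 x (hcop i))
        rw [← hΨ c hc a x hx, ← hΨ c' hc' a x hx, ← hΦ c hc, ← hΦ c' hc', hcc] at h1
        have h2 : Φ c' (QuotientGroup.mk a) ≠ 0 := by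
          rw [hΦ c' hc']
          have h5 := (psi_facts (psiC_data B hQ c' (hX0 c' hc')) B (hΨ c' hc') hs ht a).1
          intro h; rw [h] at h5; norm_num at h5
        exact mul_right_cancel₀ h2 (h1.trans (one_mul _).symm)
    · intro a _ b _ h
      exact sub_left_injective h
  have hle2 : (X0.image Φ).card ≤ Nat.card (ClassGroup (𝓞 K) ⧸ C) := by
    refine le_trans ?_ hle
    rw [Nat.card_eq_fintype_card]
    exact Finset.card_le_univ _
  calc X0.card ^ 2 ≤ (T.card * Nat.card (ClassGroup (𝓞 K) ⧸ C)) ^ 2 :=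
        Nat.pow_le_pow_left (hcount.trans (Nat.mul_le_mul_left _ hle2)) 2
    _ = T.card ^ 2 * Nat.card (ClassGroup (𝓞 K) ⧸ C) ^ 2 := by ring
    _ ≤ _ := Nat.mul_le_mul_left _ hgrp2
end Index


section Arith

theorem val_lemma {J : ℕ} {q : Fin J → ℕ} (hq : ∀ i, (q i).Prime) (hi : Function.Injective q)
    (hq3 : ∀ i, q i % 3 = 2) (a : ℕ) (e : Fin J → ℕ) (y : ℚ)
    (hy : y ^ 3 = ((3 ^ a * ∏ i, q i ^ e i : ℕ) : ℚ) ^ 2) : 3 ∣ a ∧ ∀ i, 3 ∣ e i := by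
  have hprod0 : ∏ i, q i ^ e i ≠ 0 := Finset.prod_ne_zero_iff.2 fun i _ => pow_ne_zero _ (hq i).ne_zero
  have hN0 : 3 ^ a * ∏ i, q i ^ e i ≠ 0 := mul_ne_zero (by positivity) hprod0
  have hy0 : y ≠ 0 := by
    rintro rfl
    have : ((3 ^ a * ∏ i, q i ^ e i : ℕ) : ℚ) ^ 2 ≠ 0 := pow_ne_zero _ (by exact_mod_cast hN0)
    apply this; rw [← hy]; norm_num
  have key : ∀ p : ℕ, p.Prime → 3 ∣ (3 ^ a * ∏ i, q i ^ e i).factorization p := by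
    intro p hp
    have := Fact.mk hp
    have h1 := congrArg (padicValRat p) hy
    rw [padicValRat.pow, padicValRat.pow, padicValRat.of_nat] at h1
    rw [Nat.factorization_def _ hp]
    generalize padicValNat p (3 ^ a * ∏ i, q i ^ e i) = w at h1 ⊢
    norm_num at h1
    omega
  have hf : ∀ p, (3 ^ a * ∏ i, q i ^ e i).factorization p =
      a * (Nat.factorization 3 p) + ∑ i, e i * (Nat.factorization (q i) p) := by
    intro p
    rw [Nat.factorization_mul (by positivity) hprod0, Nat.factorization_prod (fun i _ => pow_ne_zero _ (hq i).ne_zero)]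
    simp [Nat.factorization_pow]
  constructor
  · have h := key 3 Nat.prime_three
    rw [hf, Nat.Prime.factorization_self Nat.prime_three, Finset.sum_eq_zero] at h
    · simpa using h
    · intro i _
      rw [(hq i).factorization, Finsupp.single_eq_of_ne, mul_zero]
      intro h
      have := hq3 i
      omega
  · intro j
    have h := key (q j) (hq j)
    rw [hf, Finset.sum_eq_single j] at h
    · rw [Nat.Prime.factorization_self (hq j), Nat.prime_three.factorization, Finsupp.single_eq_of_ne] at h
      · simpa using h
      · intro h
        have := hq3 j
        omega
    · intro i _ hij
      rw [(hq i).factorization, Finsupp.single_eq_of_ne, mul_zero]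
      exact fun h => hij (hi h.symm)
    · simp

theorem prod9 {J : ℕ} (q t : Fin J → ℕ) (hq3 : ∀ i, q i % 3 = 2)
    (h : 3 ∣ ∑ i, ((q i ^ 2 - 1) / 3) * t i) : (∏ i, q i ^ t i) % 9 = 1 ∨ (∏ i, q i ^ t i) % 9 = 8 := by
  have h9 : (9 : ZMod 9) = 0 := by decide
  have h1 : ∀ (a n : ℕ), (1 + 3 * (a : ZMod 9)) ^ n = 1 + 3 * ((a * n : ℕ) : ZMod 9) := by
    intro a n
    induction n with
    | zero => simp
    | succ n ih => rw [pow_succ, ih]; push_cast; linear_combination ((a : ZMod 9) * n * a) * h9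
  have h2 : ∀ (s : Finset (Fin J)) (x : Fin J → ℕ), ∏ i ∈ s, (1 + 3 * (x i : ZMod 9)) = 1 + 3 * ((∑ i ∈ s, x i : ℕ) : ZMod 9) := by
    intro s x
    classical
    induction s using Finset.induction_on with
    | empty => simp
    | insert i s hi ih =>
      rw [Finset.prod_insert hi, Finset.sum_insert hi, ih]
      generalize (∑ i ∈ s, x i) = w
      push_cast
      linear_combination ((x i : ZMod 9) * w) * h9
  have h3 : ((∏ i, q i ^ t i : ℕ) : ZMod 9) ^ 2 = 1 := by
    have h4 : ∀ i, ((q i : ZMod 9) ^ t i) ^ 2 = 1 + 3 * ((((q i ^ 2 - 1) / 3) * t i : ℕ) : ZMod 9) := by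
      intro i
      rw [← h1, ← pow_mul, mul_comm, pow_mul]
      congr 1
      have h5 : q i ^ 2 = 1 + 3 * ((q i ^ 2 - 1) / 3) := by
        have h6 : q i ^ 2 % 3 = 1 := by rw [Nat.pow_mod, hq3 i]
        omega
      have := congrArg (Nat.cast : ℕ → ZMod 9) h5
      push_cast at this ⊢
      exact this
    push_cast
    rw [← Finset.prod_pow, Finset.prod_congr rfl (fun i _ => h4 i), h2]
    obtain ⟨k, hk⟩ := h
    rw [hk]; push_cast
    linear_combination (k : ZMod 9) * h9
  generalize (∏ i, q i ^ t i) = M at h3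
  have h5 : ∀ x : ZMod 9, x ^ 2 = 1 → x.val = 1 ∨ x.val = 8 := by decide
  have := h5 _ h3
  rwa [ZMod.val_natCast] at this

theorem card_X0 {J : ℕ} (e : Fin J → ZMod 3) :
    3 ^ J ≤ (Finset.univ.filter (fun c : Fin J → ZMod 3 => ∑ i, e i * c i = 0)).card * 3 := by
  classical
  have h := Finset.card_le_mul_card_image (s := (Finset.univ : Finset (Fin J → ZMod 3)))
    (f := fun c => ∑ i, e i * c i) (n := (Finset.univ.filter (fun c : Fin J → ZMod 3 => ∑ i, e i * c i = 0)).card) ?_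
  · rw [Finset.card_univ, Fintype.card_fun, ZMod.card, Fintype.card_fin] at h
    exact h.trans (Nat.mul_le_mul_left _ ((Finset.card_le_univ _).trans (by rw [ZMod.card])))
  · intro a ha
    obtain ⟨c0, -, rfl⟩ := Finset.mem_image.1 ha
    apply Finset.card_le_card_of_injOn (fun c => c - c0)
    · intro c hc
      have hc := (Finset.mem_filter.1 hc).2
      refine Finset.mem_filter.2 ⟨Finset.mem_univ _, ?_⟩
      simp only [Pi.sub_apply, mul_sub, Finset.sum_sub_distrib]
      rw [hc, sub_self]
    · intro a _ b _ h
      exact sub_left_injective h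

end Arith

section Bd
variable {K : Type} [Field K] [NumberField K] {ζ μ : 𝓞 K} {σ τ : 𝓞 K ≃+* 𝓞 K}

theorem zeta_pow_one (hz : ζ ^ 2 + ζ + 1 = 0) (n : ℕ) (h : ζ ^ n = 1) : 3 ∣ n := by
  have h3 := zeta_cube hz
  rw [pow_eq_pow_mod n h3] at h
  have h4 : n % 3 < 3 := Nat.mod_lt _ (by norm_num)
  have h30 : (3 : 𝓞 K) ≠ 0 := by norm_num
  interval_cases hn : n % 3
  · omega
  · exfalso; rw [pow_one] at h; apply h30; rw [h] at hz; linear_combination hz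
  · exfalso
    have h5 : ζ = -2 := by linear_combination hz - h
    rw [h5] at h; apply h30; linear_combination h

theorem psiC_zeta {J : ℕ} (B : Base ζ μ σ τ m) {q : Fin J → ℕ} {𝔓 : Fin J → Ideal (𝓞 K)} {X : Fin J → (𝓞 K →* 𝓞 K)}
    (hQ : ∀ i, QChar ζ σ τ (q i) (𝔓 i) (X i)) (c : Fin J → ZMod 3) :
    psiC X c ζ = 1 ↔ ∑ i, (((q i ^ 2 - 1) / 3 : ℕ) : ZMod 3) * c i = 0 := by
  have h1 : psiC X c ζ = ζ ^ (∑ i, (q i ^ 2 - 1) / 3 * (c i).val) := by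
    rw [psiC_apply, ← Finset.prod_pow_eq_pow_sum]
    apply Finset.prod_congr rfl
    intro i _
    rw [(hQ i).Xz, ← pow_mul]
  have h2 : ∑ i, (((q i ^ 2 - 1) / 3 : ℕ) : ZMod 3) * c i = ((∑ i, (q i ^ 2 - 1) / 3 * (c i).val : ℕ) : ZMod 3) := by
    push_cast
    apply Finset.sum_congr rfl
    intro i _
    rw [ZMod.natCast_zmod_val]
  rw [h1, h2, ZMod.natCast_eq_zero_iff]
  constructor
  · exact zeta_pow_one B.hz _
  · rintro ⟨k, hk⟩
    rw [hk, pow_mul, zeta_cube B.hz, one_pow]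

theorem ker_k {J m s : ℕ} (B : Base ζ μ σ τ m) {q t : Fin J → ℕ} (hq : ∀ i, (q i).Prime) (hi : Function.Injective q)
    (hq3 : ∀ i, q i % 3 = 2) (hm : m = 3 ^ s * ∏ i, q i ^ t i)
    (c : Fin J → ZMod 3) (β : K) (hβ : β ^ 3 = ((∏ i, q i ^ (c i).val : ℕ) : K)) :
    ∃ k : ℕ, k < 3 ∧ 3 ∣ s * k ∧ ∀ i, 3 ∣ (c i).val + t i * k := by
  have hint : IsIntegral ℤ β := by
    refine IsIntegral.of_pow (n := 3) (by norm_num) ?_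
    rw [hβ]
    have := isIntegral_algebraMap (R := ℤ) (A := K) (x := ((∏ i, q i ^ (c i).val : ℕ) : ℤ))
    simpa using this
  let b : 𝓞 K := ⟨β, hint⟩
  have hb : b ^ 3 = ((∏ i, q i ^ (c i).val : ℕ) : 𝓞 K) := by
    apply RingOfIntegers.ext
    rw [RingOfIntegers.coe_eq_algebraMap, RingOfIntegers.coe_eq_algebraMap, map_pow, map_natCast]
    exact hβ
  set M := ∏ i, q i ^ (c i).val with hM
  have hsb : (σ b) ^ 3 = b ^ 3 := by rw [← map_pow, hb, map_natCast]
  have hfac : (σ b - b) * (σ b - ζ * b) * (σ b - ζ ^ 2 * b) = 0 := by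
    linear_combination hsb - (σ b ^ 2 * b - σ b * b ^ 2 * ζ) * B.hz + (b ^ 3) * (1 - ζ) * B.hz
  have hj : ∃ k : ℕ, k < 3 ∧ σ (b * μ ^ k) = b * μ ^ k := by
    have h3 := zeta_cube B.hz
    rcases mul_eq_zero.1 hfac with h | h
    · rcases mul_eq_zero.1 h with h | h
      · exact ⟨0, by norm_num, by simpa [sub_eq_zero] using h⟩
      · refine ⟨2, by norm_num, ?_⟩
        rw [map_mul, map_pow, B.smu]
        linear_combination (ζ * μ) ^ 2 * h + b * μ ^ 2 * h3
    · refine ⟨1, by norm_num, ?_⟩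
      rw [map_mul, map_pow, B.smu]
      linear_combination (ζ * μ) * h + b * μ * h3
  obtain ⟨k, hk, hfix⟩ := hj
  have hcub : (b * μ ^ k) ^ 3 = ((M * m ^ k : ℕ) : 𝓞 K) := by
    rw [mul_pow, hb, ← pow_mul, mul_comm k 3, pow_mul, B.hmu]; push_cast; ring
  obtain ⟨y, hy⟩ := B.F4 _ hfix _ hcub
  have hN : M * m ^ k = 3 ^ (s * k) * ∏ i, q i ^ ((c i).val + t i * k) := by
    rw [hM, hm, mul_pow, ← pow_mul, ← Finset.prod_pow]
    simp only [pow_add, pow_mul, Finset.prod_mul_distrib]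
    ring
  rw [hN] at hy
  obtain ⟨h1, h2⟩ := val_lemma hq hi hq3 _ _ y hy
  exact ⟨k, hk, h1, h2⟩

theorem final_bound {J : ℕ} (hJ : 1 ≤ J) {q : Fin J → ℕ}
    (hq : ∀ i, (q i).Prime) (hi : Function.Injective q) (hq3 : ∀ i, q i % 3 = 2)
    {t : Fin J → ℕ} (ht : ∀ i, t i = 1 ∨ t i = 2) {s : ℕ} (hs : s ≤ 2)
    {m : ℕ} (hm : m = 3 ^ s * ∏ i, q i ^ t i)
    {z α : K} (hζ : IsPrimitiveRoot z 3) (hα : α ^ 3 = (m : K))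
    (hgen : Algebra.adjoin ℚ ({z, α} : Set K) = ⊤) :
    ∃ x y : ℕ, x ^ 2 ≤ y ^ 2 * Nat.card {a : ClassGroup (𝓞 K) // a ^ 3 = 1} ∧
      3 ^ J ≤ x * 3 ∧ ((∀ i, q i % 9 = 8) → x = 3 ^ J) ∧ y ≤ 3 ∧
      (¬(m % 9 = 1 ∨ m % 9 = 8) → y = 1) := by
  classical
  have hprod0 : ∏ i, q i ^ t i ≠ 0 := Finset.prod_ne_zero_iff.2 fun i _ => pow_ne_zero _ (hq i).ne_zero
  have hm0 : m ≠ 0 := by rw [hm]; exact mul_ne_zero (by positivity) hprod0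
  have hJ0 : Nonempty (Fin J) := ⟨⟨0, hJ⟩⟩
  obtain ⟨i0⟩ := hJ0
  have hJ0 : Nonempty (Fin J) := ⟨i0⟩
  obtain ⟨ζ, μ, σ, τ, B⟩ := base_exists hm0 hζ hα hgen (by
    intro y hy
    rw [hm] at hy
    have := (val_lemma hq hi hq3 _ _ y hy).2 i0
    have := ht i0
    omega)
  have hQ : ∀ i, ∃ P X, QChar ζ σ τ (q i) P X := by
    intro i
    refine qchar_exists B (q i) (hq i) (hq3 i) (t i) (3 ^ s * ∏ j ∈ Finset.univ.erase i, q j ^ t j) (ht i) ?_ ?_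
    · rw [hm, ← Finset.mul_prod_erase Finset.univ _ (Finset.mem_univ i)]; ring
    · intro h
      rcases (hq i).dvd_mul.1 h with h | h
      · have h1 := (Nat.prime_dvd_prime_iff_eq (hq i) Nat.prime_three).1 ((hq i).dvd_of_dvd_pow h)
        have := hq3 i
        omega
      · rw [(hq i).prime.dvd_finsetProd_iff] at h
        obtain ⟨j, hj, h⟩ := h
        have h1 := (Nat.prime_dvd_prime_iff_eq (hq i) (hq j)).1 ((hq i).dvd_of_dvd_pow h)
        exact (Finset.mem_erase.1 hj).1 (hi h1).symm
  choose 𝔓 X hQ using hQ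
  have hqm : ∀ i, q i ∣ m := by
    intro i
    rw [hm]
    apply Dvd.dvd.mul_left
    refine dvd_trans (dvd_pow_self _ ?_) (Finset.dvd_prod_of_mem (fun i => q i ^ t i) (Finset.mem_univ i))
    have := ht i; omega
  have hμ : ∀ P : Ideal (𝓞 K), P.IsPrime → μ ∈ P → 3 ∈ P ∨ ∃ i, P = 𝔓 i := by
    intro P hP hμP
    have h1 : ((m : ℕ) : 𝓞 K) ∈ P := by rw [← B.hmu]; exact Ideal.pow_mem_of_mem _ hμP _ (by norm_num)
    rw [hm] at h1
    push_cast at h1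
    rcases hP.mem_or_mem h1 with h | h
    · left; exact hP.mem_of_pow_mem _ h
    · right
      obtain ⟨i, -, h⟩ := hP.prod_mem_iff.1 h
      exact ⟨i, (hQ i).uniq P hP (hP.mem_of_pow_mem _ h)⟩
  let e : Fin J → ZMod 3 := fun i => (((q i ^ 2 - 1) / 3 : ℕ) : ZMod 3)
  let X0 := Finset.univ.filter (fun c : Fin J → ZMod 3 => ∑ i, e i * c i = 0)
  let T0 : Finset (Fin J → ZMod 3) := Finset.univ.image (fun k : ZMod 3 => fun i => -(t i : ZMod 3) * k)
  let T : Finset (Fin J → ZMod 3) := if (m % 9 = 1 ∨ m % 9 = 8) then T0 else {0}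
  refine ⟨X0.card, T.card, main_class B hm0 hQ hμ X0 T ?_ ?_, card_X0 e, ?_, ?_, ?_⟩
  · intro c hc
    exact (psiC_zeta B hQ c).2 (Finset.mem_filter.1 hc).2
  · intro c hcz hc
    obtain ⟨β, hβ⟩ := psiC_ker B hm0 hqm hQ c hc
    obtain ⟨k, hk, h1, h2⟩ := ker_k B hq hi hq3 hm c β hβ
    have hck : ∀ i, c i = -(t i : ZMod 3) * (k : ZMod 3) := by
      intro i
      have h3 := (ZMod.natCast_eq_zero_iff _ 3).2 (h2 i)
      push_cast at h3
      rw [ZMod.natCast_zmod_val] at h3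
      linear_combination h3
    by_cases h9 : m % 9 = 1 ∨ m % 9 = 8
    · simp only [T, if_pos h9]
      exact Finset.mem_image.2 ⟨(k : ZMod 3), Finset.mem_univ _, funext fun i => (hck i).symm⟩
    · simp only [T, if_neg h9]
      rw [Finset.mem_singleton]
      by_cases hk0 : k = 0
      · funext i; rw [hck i, hk0]; simp
      · exfalso
        apply h9
        have hs0 : s = 0 := by
          rcases Nat.prime_three.dvd_mul.1 h1 with h | h
          · omega
          · omega
        rw [hm, hs0, pow_zero, one_mul]
        apply prod9 q t hq3
        have h4 := (psiC_zeta B hQ c).1 hcz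
        rw [← ZMod.natCast_eq_zero_iff]
        have h5 : ∑ i, (((q i ^ 2 - 1) / 3 : ℕ) : ZMod 3) * c i =
            -(k : ZMod 3) * ((∑ i, ((q i ^ 2 - 1) / 3) * t i : ℕ) : ZMod 3) := by
          push_cast
          rw [Finset.mul_sum]
          apply Finset.sum_congr rfl
          intro i _
          rw [hck i]; ring
        rw [h5] at h4
        have : Fact (Nat.Prime 3) := ⟨Nat.prime_three⟩
        rcases mul_eq_zero.1 h4 with h | h
        · exfalso
          rw [neg_eq_zero, ZMod.natCast_eq_zero_iff] at h
          omega
        · exact h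
  · intro h8
    have he : ∀ i, e i = 0 := by
      intro i
      simp only [e]
      rw [ZMod.natCast_eq_zero_iff]
      have : q i ^ 2 % 9 = 1 := by rw [Nat.pow_mod, h8 i]
      omega
    have : X0 = Finset.univ := by
      apply Finset.filter_true_of_mem
      intro c _
      apply Finset.sum_eq_zero
      intro i _; rw [he i, zero_mul]
    rw [this, Finset.card_univ, Fintype.card_fun, ZMod.card, Fintype.card_fin]
  · by_cases h9 : m % 9 = 1 ∨ m % 9 = 8
    · simp only [T, if_pos h9]
      exact Finset.card_image_le.trans (by rw [Finset.card_univ, ZMod.card])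
    · simp only [T, if_neg h9]; simp
  · intro h9
    simp only [T, if_neg h9]; simp
end Bd


section SInt
variable {R : Type} [CommRing R] [IsDedekindDomain R] {K : Type} [Field K] [Algebra R K] [IsFractionRing R K]
  (S : Finset (HeightOneSpectrum R))

theorem sint_mul (b : K) (hb : b ∈ (S : Set (HeightOneSpectrum R)).integer K) :
    ∃ N : ℕ, ∀ d ∈ (∏ v ∈ S, v.asIdeal) ^ N, ∃ a : R, algebraMap R K a = algebraMap R K d * b := by
  obtain ⟨y, z, hz, rfl⟩ := IsFractionRing.div_surjective (A := R) b
  have hz0 : z ≠ 0 := nonZeroDivisors.ne_zero hz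
  let k : HeightOneSpectrum R → ℕ := fun v =>
    (Associates.mk v.asIdeal).count (Associates.mk (Ideal.span {z})).factors
  refine ⟨∑ v ∈ S, k v, fun d hd => ?_⟩
  have := HeightOneSpectrum.mem_integers_of_valuation_le_one (R := R) K
    (algebraMap R K d * (algebraMap R K y / algebraMap R K z)) ?_
  · exact this
  intro v
  rw [map_mul]
  by_cases hv : v ∈ S
  · have h1 : d ∈ v.asIdeal ^ k v := by
      have h2 : (∏ v ∈ S, v.asIdeal) ^ (∑ v ∈ S, k v) ≤ v.asIdeal ^ (k v) :=
        (Ideal.pow_right_mono (Ideal.le_of_dvd (Finset.dvd_prod_of_mem _ hv)) _).trans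
          (Ideal.pow_le_pow_right (Finset.single_le_sum (fun _ _ => Nat.zero_le _) hv))
      exact h2 hd
    have h2 := (v.intValuation_le_pow_iff_mem d (k v)).2 h1
    have h3 : v.intValuation z = WithZero.exp (-(k v : ℤ)) := v.intValuation_if_neg hz0
    rw [← h3] at h2
    have h4 : v.intValuation z ≠ 0 := by rw [h3]; exact WithZero.exp_ne_zero
    rw [map_div₀, HeightOneSpectrum.valuation_of_algebraMap, HeightOneSpectrum.valuation_of_algebraMap,
      HeightOneSpectrum.valuation_of_algebraMap, ← mul_div_assoc, mul_comm, mul_div_assoc]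
    refine mul_le_one' (v.intValuation_le_one y) ?_
    exact (div_le_one₀ (zero_lt_iff.2 h4)).2 h2
  · refine mul_le_one' ?_ (hb v hv)
    exact v.valuation_le_one d

theorem sint_map (I : Ideal R) (x : (S : Set (HeightOneSpectrum R)).integer K)
    (hx : x ∈ I.map (algebraMap R ((S : Set (HeightOneSpectrum R)).integer K))) :
    ∃ N : ℕ, ∀ d ∈ (∏ v ∈ S, v.asIdeal) ^ N, ∃ a ∈ I, algebraMap R K a = algebraMap R K d * (x : K) := by
  unfold Ideal.map at hx
  refine Submodule.span_induction (p := fun (x : (S : Set (HeightOneSpectrum R)).integer K) _ => ∃ N : ℕ, ∀ d ∈ (∏ v ∈ S, v.asIdeal) ^ N, ∃ a ∈ I,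
    algebraMap R K a = algebraMap R K d * (x : K)) ?_ ?_ ?_ ?_ hx
  · rintro _ ⟨i, hi, rfl⟩
    exact ⟨0, fun d _ => ⟨d * i, I.mul_mem_left _ hi, by rw [map_mul]; rfl⟩⟩
  · exact ⟨0, fun d _ => ⟨0, I.zero_mem, by simp⟩⟩
  · rintro x y - - ⟨N, hN⟩ ⟨M, hM⟩
    refine ⟨N + M, fun d hd => ?_⟩
    obtain ⟨a, ha, h1⟩ := hN d (Ideal.pow_le_pow_right (Nat.le_add_right _ _) hd)
    obtain ⟨b, hb, h2⟩ := hM d (Ideal.pow_le_pow_right (Nat.le_add_left _ _) hd)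
    exact ⟨a + b, I.add_mem ha hb, by rw [map_add, h1, h2]; push_cast; ring⟩
  · rintro b x - ⟨N, hN⟩
    obtain ⟨M, hM⟩ := sint_mul S (b : K) b.2
    refine ⟨M + N, fun d hd => ?_⟩
    rw [pow_add] at hd
    refine Submodule.mul_induction_on hd ?_ ?_
    · intro d1 hd1 d2 hd2
      obtain ⟨a, ha⟩ := hM d1 hd1
      obtain ⟨c, hc, h2⟩ := hN d2 hd2
      refine ⟨a * c, I.mul_mem_left _ hc, ?_⟩
      rw [map_mul, map_mul, ha, h2, smul_eq_mul]; push_cast; ring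
    · rintro d1 d2 ⟨a, ha, h1⟩ ⟨b, hb, h2⟩
      exact ⟨a + b, I.add_mem ha hb, by rw [map_add, h1, h2, map_add]; ring⟩

theorem cl_closure (D : Ideal R) (hD : D = ∏ v ∈ S, v.asIdeal) (N : ℕ) (J : Ideal R) (hJ : J ∣ D ^ N) :
    cl J ∈ Subgroup.closure (Set.range (fun v : S => cl v.1.asIdeal)) := by
  revert hJ
  refine UniqueFactorizationMonoid.induction_on_prime J ?_ ?_ ?_
  · intro _
    have : cl (0 : Ideal R) = 1 := by rw [cl, dif_neg]; simp
    rw [this]; exact Subgroup.one_mem _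
  · intro x hx _
    rw [Ideal.isUnit_iff.1 hx, ← Ideal.span_singleton_one, cl_span]; exact Subgroup.one_mem _
  · intro a p ha hp ih h
    rw [cl_mul hp.ne_zero ha]
    refine Subgroup.mul_mem _ ?_ (ih ((dvd_mul_left _ _).trans h))
    have h1 : p ∣ D := hp.dvd_of_dvd_pow ((dvd_mul_right _ _).trans h)
    rw [hD, hp.dvd_finsetProd_iff] at h1
    obtain ⟨v, hv, h2⟩ := h1
    have h3 : p = v.asIdeal := by
      have h4 : Associated p v.asIdeal := hp.associated_of_dvd v.prime h2
      exact associated_iff_eq.1 h4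
    apply Subgroup.subset_closure
    exact ⟨⟨v, hv⟩, by rw [h3]⟩

theorem sint_ker (a : ClassGroup R)
    (ha : ClassGroup.extendedHom R ((S : Set (HeightOneSpectrum R)).integer K) a = 1) :
    a ∈ Subgroup.closure (Set.range (fun v : S => cl v.1.asIdeal)) := by
  classical
  obtain ⟨I, hI, rfl⟩ := cl_surj a
  rw [cl_def hI, ClassGroup.extendedHom_mk0', ClassGroup.mk_eq_one_iff] at ha
  have hp : Submodule.IsPrincipal (I.map (algebraMap R ((S : Set (HeightOneSpectrum R)).integer K))) := by
    rw [← IsLocalization.coeSubmodule_isPrincipal (FractionRing ((S : Set (HeightOneSpectrum R)).integer K)) le_rfl]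
    rw [← FractionalIdeal.coe_coeIdeal, ← FractionalIdeal.extendedHom_coeIdeal_eq_map (K := FractionRing R)]
    exact ha
  obtain ⟨x, hx⟩ := hp.principal
  have hx' : I.map (algebraMap R ((S : Set (HeightOneSpectrum R)).integer K)) = Ideal.span {x} := hx
  obtain ⟨N, hN⟩ := sint_map S I x (by rw [hx']; exact Ideal.mem_span_singleton_self x)
  have hg : ∀ i ∈ I, ∃ M : ℕ, ∀ d ∈ (∏ v ∈ S, v.asIdeal) ^ M, ∃ c : R,
      algebraMap R K d * algebraMap R K i = algebraMap R K c * x := by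
    intro i hi
    have h1 := Ideal.mem_map_of_mem (algebraMap R ((S : Set (HeightOneSpectrum R)).integer K)) hi
    rw [hx', Ideal.mem_span_singleton'] at h1
    obtain ⟨b, hb⟩ := h1
    obtain ⟨M, hM⟩ := sint_mul S (b : K) b.2
    refine ⟨M, fun d hd => ?_⟩
    obtain ⟨c, hc⟩ := hM d hd
    refine ⟨c, ?_⟩
    have h2 : (algebraMap R K i) = (b : K) * x := by
      have := congrArg Subtype.val hb
      exact this.symm
    rw [hc, h2]; ring
  set D : Ideal R := ∏ v ∈ S, v.asIdeal with hD
  have hD0 : D ≠ ⊥ := Finset.prod_ne_zero_iff.2 (fun v _ => v.ne_bot)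
  have hDN : D ^ N ≠ ⊥ := pow_ne_zero _ hD0
  obtain ⟨y, z, hz, hyz⟩ := IsFractionRing.div_surjective (A := R) (x : K)
  have hz0 : z ≠ 0 := nonZeroDivisors.ne_zero hz
  have hzK : algebraMap R K z ≠ 0 := fun h => hz0 ((map_eq_zero_iff _ (IsFractionRing.injective R K)).1 h)
  have hzx : algebraMap R K y = algebraMap R K z * x := by rw [← hyz]; field_simp
  -- y D^N ≤ z I
  have h1 : Ideal.span {z} * I ∣ Ideal.span {y} * D ^ N := by
    rw [Ideal.dvd_iff_le]
    intro w hw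
    obtain ⟨d, hd, rfl⟩ := Ideal.mem_span_singleton_mul.1 hw
    obtain ⟨i, hi, h⟩ := hN d hd
    refine Ideal.mem_span_singleton_mul.2 ⟨i, hi, ?_⟩
    apply IsFractionRing.injective R K
    rw [map_mul, map_mul, h, hzx]; ring
  obtain ⟨J, hJ⟩ := h1
  obtain ⟨G, hG⟩ := (IsNoetherian.noetherian I : I.FG)
  have hGI : ∀ i ∈ G, i ∈ I := fun i hi => by rw [← hG]; exact Submodule.subset_span hi
  have hch : ∀ i : R, ∃ M : ℕ, i ∈ G → ∀ d ∈ D ^ M, ∃ c : R,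
      algebraMap R K d * algebraMap R K i = algebraMap R K c * x := by
    intro i
    by_cases hi : i ∈ G
    · obtain ⟨M, hM⟩ := hg i (hGI i hi); exact ⟨M, fun _ => hM⟩
    · exact ⟨0, fun h => absurd h hi⟩
  choose M hM using hch
  have h2 : Ideal.span {y} * D ^ N ∣ D ^ (N + ∑ i ∈ G, M i) * (Ideal.span {z} * I) := by
    rw [Ideal.dvd_iff_le, pow_add, mul_assoc, mul_comm (Ideal.span {y})]
    refine Ideal.mul_mono_right ?_
    rw [mul_comm, mul_assoc, Ideal.span_singleton_mul_le_iff]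
    intro w hw
    rw [← hG] at hw
    have h3 : Submodule.span R (G : Set R) * D ^ (∑ i ∈ G, M i) ≤
        Submodule.comap (LinearMap.mulLeft R z) (Ideal.span {y}) := by
      rw [Ideal.mul_le]
      intro r hr d hd
      refine Submodule.span_induction (p := fun r _ => r * d ∈ Submodule.comap (LinearMap.mulLeft R z) (Ideal.span {y})) ?_ ?_ ?_ ?_ hr
      · intro i hi
        obtain ⟨c, hc⟩ := hM i hi d (Ideal.pow_le_pow_right (Finset.single_le_sum (fun _ _ => Nat.zero_le _) hi) hd)
        rw [Submodule.mem_comap, LinearMap.mulLeft_apply]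
        refine Ideal.mem_span_singleton'.2 ⟨c, ?_⟩
        apply IsFractionRing.injective R K
        rw [map_mul, map_mul, map_mul, hzx]
        linear_combination (-(algebraMap R K z)) * hc
      · rw [zero_mul]; exact Submodule.zero_mem _
      · intro a b _ _ h1 h2; rw [add_mul]; exact Submodule.add_mem _ h1 h2
      · intro a b _ h1; rw [smul_mul_assoc]; exact Submodule.smul_mem _ _ h1
    exact h3 hw
  have hzI : Ideal.span {z} * I ≠ 0 := mul_ne_zero (by simpa using hz0) hI
  have hJd : J ∣ D ^ (N + ∑ i ∈ G, M i) := by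
    rw [hJ, mul_comm (D ^ _)] at h2
    exact (mul_dvd_mul_iff_left hzI).1 h2
  have hJ0 : J ≠ ⊥ := by
    rintro rfl
    exact pow_ne_zero (N + ∑ i ∈ G, M i) hD0 (zero_dvd_iff.1 hJd)
  have hy0 : Ideal.span {y} ≠ ⊥ := by
    intro h
    rw [h] at hJ
    have : Ideal.span {z} * I * J = 0 := by rw [← hJ]; exact zero_mul _
    exact mul_ne_zero hzI hJ0 this
  have hcl := congrArg cl hJ
  rw [cl_mul hy0 hDN, cl_mul hzI hJ0, cl_mul (by simpa using hz0) hI, cl_span, cl_span, one_mul, one_mul] at hcl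
  rw [eq_mul_inv_of_mul_eq hcl.symm]
  exact Subgroup.mul_mem _ (cl_closure S D hD N _ dvd_rfl) (Subgroup.inv_mem _ (cl_closure S D hD _ _ hJd))

end SInt

theorem sint_final {K : Type} [Field K] [NumberField K] (S : Finset (HeightOneSpectrum (RingOfIntegers K)))
    (d : ℕ) (hd : Nat.card {c : ClassGroup ((S : Set (HeightOneSpectrum (RingOfIntegers K))).integer K) // c ^ 3 = 1} = 3 ^ d) :
    Nat.card {a : ClassGroup (𝓞 K) // a ^ 3 = 1} ≤ 3 ^ d * 3 ^ S.card := by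
  have hf : Finite {c : ClassGroup ((S : Set (HeightOneSpectrum (RingOfIntegers K))).integer K) // c ^ 3 = 1} := by
    apply Nat.finite_of_card_ne_zero; rw [hd]; positivity
  have := quot_lemma (ClassGroup.extendedHom (𝓞 K) ((S : Set (HeightOneSpectrum (𝓞 K))).integer K))
    (fun v : S => cl v.1.asIdeal) (sint_ker S) hf
  rw [hd, Fintype.card_coe] at this
  exact this


theorem pow_bound {x y N J d S a b : ℕ} (h : x ^ 2 ≤ y ^ 2 * N) (hN : N ≤ 3 ^ d * 3 ^ S) (hx : 3 ^ J ≤ x * 3 ^ a)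
    (hy : y ≤ 3 ^ b) : 2 * J ≤ 2 * a + 2 * b + d + S := by
  have h1 : 3 ^ (2 * J) ≤ 3 ^ (2 * a + 2 * b + d + S) := by
    calc 3 ^ (2 * J) = (3 ^ J) ^ 2 := by rw [← pow_mul, mul_comm]
      _ ≤ (x * 3 ^ a) ^ 2 := Nat.pow_le_pow_left hx 2
      _ = x ^ 2 * 3 ^ (2 * a) := by rw [mul_pow, ← pow_mul, mul_comm a]
      _ ≤ (y ^ 2 * N) * 3 ^ (2 * a) := Nat.mul_le_mul_right _ h
      _ ≤ ((3 ^ b) ^ 2 * (3 ^ d * 3 ^ S)) * 3 ^ (2 * a) :=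
        Nat.mul_le_mul_right _ (Nat.mul_le_mul (Nat.pow_le_pow_left hy 2) hN)
      _ = 3 ^ (2 * a + 2 * b + d + S) := by ring
  exact (Nat.pow_le_pow_iff_right (by norm_num)).1 h1

/-- With `m = 3^s · ∏ q_i^{t_i}` and `K = ℚ(ζ₃, m^{1/3})` as in Gerth's
theorem and `r` determined by the congruence classes of the `q_i` and of `m` modulo 9,
for any finite set `S` of nonzero prime ideals of `O_K` one has
`dim_{𝔽₃} Cl_S(K)[3] ≥ 2r − 3|S|` (the dimension `d` being encoded by
`|Cl_S(K)[3]| = 3^d`). -/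
theorem stmt_15 (J : ℕ) (hJ : 1 ≤ J) (q : Fin J → ℕ)
    (hq_prime : ∀ i, (q i).Prime) (hq_distinct : Function.Injective q)
    (hq_mod3 : ∀ i, q i % 3 = 2)
    (t : Fin J → ℕ) (ht : ∀ i, t i = 1 ∨ t i = 2)
    (s : ℕ) (hs : s ≤ 2)
    (m : ℕ) (hm : m = 3 ^ s * ∏ i, q i ^ t i)
    (K : Type) [Field K] [NumberField K] (ζ α : K)
    (hζ : IsPrimitiveRoot ζ 3) (hα : α ^ 3 = (m : K))
    (hgen : Algebra.adjoin ℚ ({ζ, α} : Set K) = ⊤)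
    (r : ℕ)
    (hr₁ : (∀ i, q i % 9 = 8) → ¬(m % 9 = 1 ∨ m % 9 = 8) → r = J)
    (hr₂ : (∀ i, q i % 9 = 8) → (m % 9 = 1 ∨ m % 9 = 8) → r = J - 1)
    (hr₃ : (∃ i, q i % 9 = 2 ∨ q i % 9 = 5) → ¬(m % 9 = 1 ∨ m % 9 = 8) → r = J - 1)
    (hr₄ : (∃ i, q i % 9 = 2 ∨ q i % 9 = 5) → (m % 9 = 1 ∨ m % 9 = 8) → r = J - 2)
    (S : Finset (HeightOneSpectrum (RingOfIntegers K))) (d : ℕ)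
    (hd : Nat.card
        {c : ClassGroup ((S : Set (HeightOneSpectrum (RingOfIntegers K))).integer K) //
          c ^ 3 = 1} = 3 ^ d) :
    2 * (r : ℤ) - 3 * S.card ≤ (d : ℤ) := by
  obtain ⟨x, y, h1, h2, h3, h4, h5⟩ := final_bound hJ hq_prime hq_distinct hq_mod3 ht hs hm hζ hα hgen
  have hN := sint_final S d hd
  by_cases h8 : ∀ i, q i % 9 = 8
  · have hx := h3 h8
    by_cases h9 : m % 9 = 1 ∨ m % 9 = 8
    · have hr := hr₂ h8 h9
      have := pow_bound (J := J) (a := 0) (b := 1) h1 hN (by rw [hx]; simp) (by simpa using h4)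
      omega
    · have hr := hr₁ h8 h9
      have := pow_bound (J := J) (a := 0) (b := 0) h1 hN (by rw [hx]; simp) (by rw [h5 h9]; simp)
      omega
  · have h25 : ∃ i, q i % 9 = 2 ∨ q i % 9 = 5 := by
      by_contra hcon
      apply h8
      intro i
      have h6 := hq_mod3 i
      have h7 : ¬ (q i % 9 = 2 ∨ q i % 9 = 5) := fun h => hcon ⟨i, h⟩
      omega
    by_cases h9 : m % 9 = 1 ∨ m % 9 = 8
    · have hr := hr₄ h25 h9
      have := pow_bound (J := J) (a := 1) (b := 1) h1 hN (by simpa using h2) (by simpa using h4)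
      omega
    · have hr := hr₃ h25 h9
      have := pow_bound (J := J) (a := 1) (b := 0) h1 hN (by simpa using h2) (by rw [h5 h9]; simp)
      omega
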